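/- arXiv:2101.09950 — 5 statements merged into one kernel-verified Lean document; each statement's English description precedes it below -/
import Mathlib

section
/- For every infinite cardinal λ there exists a unital complex C*-algebra A that is simple in the sense that its only closed two-sided ideals are {0} and A, has a dense subset of cardinality at most 2^λ, and such that for every complex Banach space E having a dense subset of cardinality at most λ, there is no continuous algebra isomorphism between A and the Calkin algebra B(E)/K(E). -/
open Cardinal

/-- The two-sided ideal of compact operators in `B(E)`, the algebra of bounded linear
operators on `E`. -/
def compactIdeal (𝕜 : Type*) [NontriviallyNormedField 𝕜]
    (E : Type*) [NormedAddCommGroup E] [NormedSpace 𝕜 E] : TwoSidedIdeal (E →L[𝕜] E) :=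
  TwoSidedIdeal.mk' {f : E →L[𝕜] E | IsCompactOperator f}
    isCompactOperator_zero
    (fun hf hg => hf.add hg)
    (fun hf => hf.neg)
    (fun {f _} hg => hg.clm_comp f)
    (fun {_ g} hf => hf.comp_clm g)

/-- The Calkin algebra `B(E)/K(E)`, as a quotient ring. -/
def Calkin (𝕜 : Type*) [NontriviallyNormedField 𝕜]
    (E : Type*) [NormedAddCommGroup E] [NormedSpace 𝕜 E] : Type _ :=
  (compactIdeal 𝕜 E).ringCon.Quotient

noncomputable instance (𝕜 : Type*) [NontriviallyNormedField 𝕜]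
    (E : Type*) [NormedAddCommGroup E] [NormedSpace 𝕜 E] : Ring (Calkin 𝕜 E) :=
  inferInstanceAs (Ring (compactIdeal 𝕜 E).ringCon.Quotient)

/-- The Calkin algebra carries the quotient topology induced by the quotient map from `B(E)`;
since the compact operators form a closed subspace of `B(E)`, this is exactly the topology of
the quotient norm. -/
instance (𝕜 : Type*) [NontriviallyNormedField 𝕜]
    (E : Type*) [NormedAddCommGroup E] [NormedSpace 𝕜 E] : TopologicalSpace (Calkin 𝕜 E) :=
  inferInstanceAs (TopologicalSpace (Quotient (compactIdeal 𝕜 E).ringCon.toSetoid))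

/-- The Calkin algebra of a complex Banach space is a complex algebra. -/
noncomputable instance (E : Type*) [NormedAddCommGroup E] [NormedSpace ℂ E] :
    Algebra ℂ (Calkin ℂ E) :=
  RingHom.toAlgebra' (((compactIdeal ℂ E).ringCon.mk').comp (algebraMap ℂ (E →L[ℂ] E)))
    (fun z => Quotient.ind' fun x => by
      show (compactIdeal ℂ E).ringCon.mk' _ * (compactIdeal ℂ E).ringCon.mk' x
          = (compactIdeal ℂ E).ringCon.mk' x * (compactIdeal ℂ E).ringCon.mk' _
      rw [← map_mul, ← map_mul, Algebra.commutes])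

/-- A bundled unital (complex) C⋆-algebra. -/
structure BundledCStarAlgebra : Type (u + 1) where
  carrier : Type u
  [cstar : CStarAlgebra carrier]

attribute [instance] BundledCStarAlgebra.cstar

namespace Calk

open scoped InnerProductSpace

/-- The sign character of `ZMod 2`. -/
noncomputable def sg (a : ZMod 2) : ℂ := if a = 0 then 1 else -1

lemma z2 (a : ZMod 2) : a = 0 ∨ a = 1 := by
  revert a; decide

@[simp] lemma sg_zero : sg 0 = 1 := by simp [sg]
@[simp] lemma sg_one : sg 1 = -1 := by simp [sg]

lemma sg_add (a b : ZMod 2) : sg (a + b) = sg a * sg b := by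
  rcases z2 a with rfl | rfl <;> rcases z2 b with rfl | rfl <;> simp
  rw [show (1 : ZMod 2) + 1 = 0 by decide]; simp

@[simp] lemma sg_mul_self (a : ZMod 2) : sg a * sg a = 1 := by
  rcases z2 a with rfl | rfl <;> simp

lemma sg_inj {a b : ZMod 2} (h : sg a = sg b) : a = b := by
  rcases z2 a with rfl | rfl <;> rcases z2 b with rfl | rfl <;> simp at h ⊢ <;> norm_num at h

@[simp] lemma norm_sg (a : ZMod 2) : ‖sg a‖ = 1 := by
  rcases z2 a with rfl | rfl <;> simp

@[simp] lemma conj_sg (a : ZMod 2) : (starRingEnd ℂ) (sg a) = sg a := by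
  rcases z2 a with rfl | rfl <;> simp

lemma sg_ne (a : ZMod 2) : sg a ≠ 0 := by
  rcases z2 a with rfl | rfl <;> simp

universe u

section
variable {G : Type u} [AddCommGroup G] [Module (ZMod 2) G]

/-- phase space -/
abbrev V (G : Type u) [AddCommGroup G] [Module (ZMod 2) G] : Type u :=
  G × Module.Dual (ZMod 2) G

/-- cocycle -/
def bf (v w : V G) : ZMod 2 := v.2 w.1

/-- commutation form -/
def om (v w : V G) : ZMod 2 := bf v w + bf w v

lemma bf_add_left (v w x : V G) : bf (v + w) x = bf v x + bf w x := by simp [bf]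
lemma bf_add_right (v w x : V G) : bf v (w + x) = bf v w + bf v x := by simp [bf]
@[simp] lemma bf_zero_left (v : V G) : bf 0 v = 0 := by simp [bf]
@[simp] lemma bf_zero_right (v : V G) : bf v 0 = 0 := by simp [bf]

lemma add_self (v : V G) : v + v = 0 := by
  have : (2 : ZMod 2) • v = 0 := by
    rw [show (2 : ZMod 2) = 0 by decide, zero_smul]
  rwa [two_smul] at this

lemma add_add_self (u v : V G) : u + v + v = u := by
  rw [add_assoc, add_self, add_zero]

/-- The Hilbert space. -/
abbrev H (G : Type u) [AddCommGroup G] [Module (ZMod 2) G] : Type u :=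
  lp (fun _ : V G => ℂ) 2

/-- The standard basis. -/
noncomputable def b (G : Type u) [AddCommGroup G] [Module (ZMod 2) G] :
    HilbertBasis (V G) ℂ (H G) := ⟨LinearIsometryEquiv.refl ℂ _⟩

noncomputable def fam (v u : V G) : H G := sg (bf v u) • b G (u + v)

open Classical in
lemma inner_b (v w : V G) : ⟪b G v, b G w⟫_ℂ = if v = w then 1 else 0 :=
  orthonormal_iff_ite.1 (b G).orthonormal v w

lemma fam_orth (v : V G) : Orthonormal ℂ (fam v) := by
  classical
  rw [orthonormal_iff_ite]
  intro u w
  simp only [fam, inner_smul_left, inner_smul_right, inner_b, conj_sg, add_left_inj]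
  split_ifs with h
  · subst h; simp
  · simp

lemma fam_span (v : V G) : ⊤ ≤ (Submodule.span ℂ (Set.range (fam v))).topologicalClosure := by
  rw [← (b G).dense_span]
  apply Submodule.topologicalClosure_mono
  rw [Submodule.span_le]
  rintro _ ⟨u, rfl⟩
  have : b G u = sg (bf v (u + v)) • fam v (u + v) := by
    simp [fam, smul_smul, add_add_self]
  rw [this]
  exact Submodule.smul_mem _ _ (Submodule.subset_span ⟨_, rfl⟩)

/-- Twisted translation, as an isometry. -/
noncomputable def We (v : V G) : H G ≃ₗᵢ[ℂ] H G :=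
  (b G).repr.trans (HilbertBasis.mk (fam_orth v) (fam_span v)).repr.symm

/-- Twisted translation. -/
noncomputable def W (v : V G) : H G →L[ℂ] H G := (We v).toContinuousLinearEquiv

lemma W_b (v u : V G) : W v (b G u) = sg (bf v u) • b G (u + v) := by
  classical
  have : W v (b G u) = (HilbertBasis.mk (fam_orth v) (fam_span v)).repr.symm
      ((b G).repr (b G u)) := rfl
  rw [this, HilbertBasis.repr_self, HilbertBasis.repr_symm_single, HilbertBasis.coe_mk]
  rfl

lemma W_b0 (v : V G) : W v (b G 0) = b G v := by simp [W_b]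

lemma ext_b {S T : H G →L[ℂ] H G} (h : ∀ u, S (b G u) = T (b G u)) : S = T := by
  refine ContinuousLinearMap.ext_on (s := Set.range (b G)) ?_ ?_
  · rw [dense_iff_closure_eq, ← Submodule.topologicalClosure_coe, (b G).dense_span]; rfl
  · rintro _ ⟨u, rfl⟩; exact h u

lemma W_mul (v w : V G) : W v * W w = sg (bf v w) • W (v + w) := by
  apply ext_b
  intro u
  simp only [mul_apply_eq_comp, W_b, map_smul, _root_.smul_apply,
    smul_smul, bf_add_left, bf_add_right, sg_add]
  rw [show u + w + v = u + (v + w) by abel]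
  congr 1; ring

@[simp] lemma W_zero : W (0 : V G) = 1 := by
  apply ext_b; intro u; simp [W_b]

lemma star_W (v : V G) : star (W v) = sg (bf v v) • W v := by
  have h1 : star (W v) * W v = 1 := by
    rw [ContinuousLinearMap.star_eq_adjoint]
    exact (ContinuousLinearMap.norm_map_iff_adjoint_comp_self _).1 (fun x => (We v).norm_map x)
  have h2 : W v * (sg (bf v v) • W v) = 1 := by
    rw [mul_smul_comm, W_mul, add_self, W_zero, smul_smul, sg_mul_self, one_smul]
  exact left_inv_eq_right_inv h1 h2

lemma star_W_mul (v : V G) : star (W v) * W v = 1 := by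
  rw [star_W, smul_mul_assoc, W_mul, add_self, W_zero, smul_smul, sg_mul_self, one_smul]

lemma W_mul_star (v : V G) : W v * star (W v) = 1 := by
  rw [star_W, mul_smul_comm, W_mul, add_self, W_zero, smul_smul, sg_mul_self, one_smul]

lemma W_conj (v w : V G) : star (W v) * W w * W v = sg (om v w) • W w := by
  rw [star_W, smul_mul_assoc, smul_mul_assoc, W_mul, smul_mul_assoc, W_mul, smul_smul, smul_smul,
    show v + w + v = w by rw [add_comm v w, add_add_self]]
  congr 1
  simp only [om, bf_add_left, sg_add]
  calc _ = (sg (bf v v) * sg (bf v v)) * (sg (bf v w) * sg (bf w v)) := by ring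
    _ = _ := by simp

/-- The algebraic twisted group algebra of a subgroup. -/
noncomputable def A0 (N : AddSubgroup (V G)) : StarSubalgebra ℂ (H G →L[ℂ] H G) where
  carrier := Submodule.span ℂ (W '' (N : Set (V G)))
  mul_mem' := by
    intro x y hx hy
    have hx' : x ∈ Submodule.span ℂ (W '' (N : Set (V G))) := hx
    have hy' : y ∈ Submodule.span ℂ (W '' (N : Set (V G))) := hy
    have := Submodule.mul_mem_mul hx' hy'
    rw [Submodule.span_mul_span] at this
    refine Submodule.span_le.2 ?_ this
    rintro _ ⟨_, ⟨v, hv, rfl⟩, _, ⟨w, hw, rfl⟩, rfl⟩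
    simp only [W_mul]
    exact Submodule.smul_mem _ _ (Submodule.subset_span ⟨_, N.add_mem hv hw, rfl⟩)
  add_mem' := fun hx hy => Submodule.add_mem _ hx hy
  algebraMap_mem' := by
    intro r
    rw [Algebra.algebraMap_eq_smul_one, ← W_zero]
    exact Submodule.smul_mem _ _ (Submodule.subset_span ⟨_, N.zero_mem, rfl⟩)
  star_mem' := by
    intro x hx
    have hx' : x ∈ Submodule.span ℂ (W '' (N : Set (V G))) := hx
    change star x ∈ Submodule.span ℂ (W '' (N : Set (V G)))
    clear hx
    induction hx' using Submodule.span_induction with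
    | mem x h =>
      obtain ⟨v, hv, rfl⟩ := h
      rw [star_W]
      exact Submodule.smul_mem _ _ (Submodule.subset_span ⟨_, hv, rfl⟩)
    | zero => simp
    | add x y hx hy ihx ihy => rw [star_add]; exact Submodule.add_mem _ ihx ihy
    | smul a x hx ih => rw [star_smul]; exact Submodule.smul_mem _ _ ih

/-- The twisted group C⋆-algebra of a subgroup. -/
noncomputable def AN (N : AddSubgroup (V G)) : StarSubalgebra ℂ (H G →L[ℂ] H G) :=
  (A0 N).topologicalClosure

instance (N : AddSubgroup (V G)) : IsClosed (AN N : Set (H G →L[ℂ] H G)) :=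
  StarSubalgebra.isClosed_topologicalClosure _

lemma coe_AN (N : AddSubgroup (V G)) : (AN N : Set (H G →L[ℂ] H G)) =
    closure (Submodule.span ℂ (W '' (N : Set (V G))) : Set (H G →L[ℂ] H G)) :=
  StarSubalgebra.topologicalClosure_coe _

lemma W_mem {N : AddSubgroup (V G)} {v : V G} (hv : v ∈ N) : W v ∈ AN N :=
  StarSubalgebra.le_topologicalClosure _
    (show W v ∈ Submodule.span ℂ (W '' (N : Set (V G))) from Submodule.subset_span ⟨v, hv, rfl⟩)

/-- Induction: continuous linear identities extend from the `W v`. -/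
lemma AN_eq {N : AddSubgroup (V G)} {F : Type*} [AddCommMonoid F] [Module ℂ F]
    [TopologicalSpace F] [T2Space F] (f g : (H G →L[ℂ] H G) →L[ℂ] F)
    (h : ∀ v ∈ N, f (W v) = g (W v)) {T : H G →L[ℂ] H G} (hT : T ∈ AN N) : f T = g T := by
  have hT' : T ∈ closure (Submodule.span ℂ (W '' (N : Set (V G))) : Set (H G →L[ℂ] H G)) := by
    rw [← coe_AN]; exact hT
  have : Set.EqOn f g (W '' (N : Set (V G))) := by
    rintro _ ⟨v, hv, rfl⟩; exact h v hv
  exact (ContinuousLinearMap.eqOn_closure_span this) hT'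

/-- Fourier coefficient. -/
noncomputable def co (w : V G) : (H G →L[ℂ] H G) →L[ℂ] ℂ :=
  (innerSL ℂ (b G w)).comp (ContinuousLinearMap.apply ℂ (H G) (b G 0))

lemma co_apply (w : V G) (T : H G →L[ℂ] H G) : co w T = ⟪b G w, T (b G 0)⟫_ℂ := rfl

open Classical in
lemma co_W (w v : V G) : co w (W v) = if w = v then 1 else 0 := by
  rw [co_apply, W_b0, inner_b]

lemma co_conj {N : AddSubgroup (V G)} (v w : V G) {T : H G →L[ℂ] H G} (hT : T ∈ AN N) :
    co w (star (W v) * T * W v) = sg (om v w) * co w T := by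
  classical
  let cj : (H G →L[ℂ] H G) →L[ℂ] (H G →L[ℂ] H G) :=
    ((ContinuousLinearMap.mul ℂ (H G →L[ℂ] H G)).flip (W v)).comp
      (ContinuousLinearMap.mul ℂ (H G →L[ℂ] H G) (star (W v)))
  refine AN_eq ((co w).comp cj) (sg (om v w) • co w) ?_ hT
  intro u _
  change co w (star (W v) * W u * W v) = sg (om v w) * co w (W u)
  rw [W_conj, map_smul, co_W, smul_eq_mul]
  split_ifs with h
  · rw [h]
  · simp

lemma co_not_mem {N : AddSubgroup (V G)} {w : V G} (hw : w ∉ N) {T : H G →L[ℂ] H G}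
    (hT : T ∈ AN N) : co w T = 0 := by
  classical
  refine AN_eq (co w) 0 ?_ hT
  intro u hu
  rw [co_W, if_neg (by rintro rfl; exact hw hu)]; rfl

lemma eq_zero_of_b0 {N : AddSubgroup (V G)} {T : H G →L[ℂ] H G}
    (hT : T ∈ AN N) (h : T (b G 0) = 0) : T = 0 := by
  apply ext_b
  intro v
  have h1 := co_conj v 0 (mul_mem (star_mem hT) hT)
  have h0 : co 0 (star T * T) = 0 := by
    rw [co_apply, mul_apply_eq_comp, h]; simp
  rw [h0, mul_zero, co_apply] at h1
  have h2 : star (W v) * (star T * T) * W v = star (T * W v) * (T * W v) := by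
    rw [star_mul]; noncomm_ring
  rw [h2, mul_apply_eq_comp, ContinuousLinearMap.star_eq_adjoint,
    ContinuousLinearMap.adjoint_inner_right, inner_self_eq_zero,
    mul_apply_eq_comp, W_b0] at h1
  simpa using h1

lemma exists_co_ne {N : AddSubgroup (V G)} {T : H G →L[ℂ] H G}
    (hT : T ∈ AN N) (h : T ≠ 0) : ∃ w ∈ N, co w T ≠ 0 := by
  by_contra! hc
  apply h
  refine eq_zero_of_b0 hT ?_
  apply (b G).repr.injective
  ext w
  rw [HilbertBasis.repr_apply_apply, LinearIsometryEquiv.map_zero]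
  change co w T = 0
  by_cases hw : w ∈ N
  · exact hc w hw
  · exact co_not_mem hw hT

lemma co_star_mul_ne {N : AddSubgroup (V G)} {T : H G →L[ℂ] H G}
    (hT : T ∈ AN N) (h : T ≠ 0) : co 0 (star T * T) ≠ 0 := by
  intro hc
  rw [co_apply, mul_apply_eq_comp, ContinuousLinearMap.star_eq_adjoint,
    ContinuousLinearMap.adjoint_inner_right, inner_self_eq_zero] at hc
  exact h (eq_zero_of_b0 hT hc)

end
end Calk
namespace Calk
open scoped InnerProductSpace
universe u
section
variable {G : Type u} [AddCommGroup G] [Module (ZMod 2) G]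

lemma norm_W (v : V G) : ‖W v‖ ≤ 1 :=
  ContinuousLinearMap.opNorm_le_bound _ zero_le_one fun x => by
    rw [one_mul]; exact ((We v).norm_map x).le

lemma norm_co (T : H G →L[ℂ] H G) : ‖co 0 T‖ ≤ ‖T‖ := by
  rw [co_apply]
  have h1 : ‖b G (0 : V G)‖ = 1 := (b G).orthonormal.1 0
  refine (norm_inner_le_norm _ _).trans ?_
  have := T.le_opNorm (b G 0)
  rw [h1] at this ⊢
  linarith

/-- The generator as an element of the C⋆-algebra. -/
noncomputable def wN (N : AddSubgroup (V G)) (v : N) : AN N := ⟨W (v : V G), W_mem v.2⟩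

lemma smul_mem_I {A : Type*} [Ring A] [Algebra ℂ A] (I : TwoSidedIdeal A) (c : ℂ) {x : A}
    (hx : x ∈ I) : c • x ∈ I := by
  rw [← one_mul x, ← smul_mul_assoc]
  exact I.mul_mem_left _ _ hx

lemma wN_conj (N : AddSubgroup (V G)) (w v : N) :
    star (wN N w) * wN N v * wN N w = sg (om (w : V G) (v : V G)) • wN N v :=
  Subtype.ext (W_conj _ _)

lemma norm_wN (N : AddSubgroup (V G)) (v : N) : ‖wN N v‖ ≤ 1 := norm_W _

lemma averaging (N : AddSubgroup (V G)) (hN : ∀ v ∈ N, v ≠ 0 → ∃ w ∈ N, om w v ≠ 0)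
    (I : TwoSidedIdeal (AN N)) (F : Finset N) (hF : 0 ∉ F) :
    ∃ Φ : AN N →ₗ[ℂ] AN N, ∃ c : N → ℂ, (∀ a, ‖Φ a‖ ≤ ‖a‖) ∧ (∀ a ∈ I, Φ a ∈ I) ∧
      (∀ v, Φ (wN N v) = c v • wN N v) ∧ c 0 = 1 ∧ ∀ v ∈ F, c v = 0 := by
  classical
  induction F using Finset.induction_on with
  | empty =>
    exact ⟨LinearMap.id, fun _ => 1, fun _ => le_rfl, fun _ h => h, fun v => by simp, rfl,
      by simp⟩
  | insert v F hv ih =>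
    obtain ⟨Φ, c, h1, h2, h3, h4, h5⟩ := ih (fun h => hF (Finset.mem_insert_of_mem h))
    have hv0 : (v : V G) ≠ 0 := fun h =>
      hF (by rw [show (0 : N) = v from Subtype.ext h.symm]; exact Finset.mem_insert_self _ _)
    obtain ⟨w, hw, hwv⟩ := hN v v.2 hv0
    let w' : N := ⟨w, hw⟩
    let cj : AN N →ₗ[ℂ] AN N :=
      (LinearMap.mulRight ℂ (wN N w')).comp (LinearMap.mulLeft ℂ (star (wN N w')))
    have hcj : ∀ a, cj a = star (wN N w') * a * wN N w' := fun a => rfl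
    refine ⟨(1 / 2 : ℂ) • (Φ + cj.comp Φ),
      fun u => (1 / 2 : ℂ) * (c u + sg (om w (u : V G)) * c u), ?_, ?_, ?_, ?_, ?_⟩
    · intro a
      have e1 : ‖cj (Φ a)‖ ≤ ‖Φ a‖ := by
        rw [hcj]
        calc _ ≤ ‖star (wN N w')‖ * ‖Φ a‖ * ‖wN N w'‖ :=
              (norm_mul_le _ _).trans (by gcongr; exact norm_mul_le _ _)
          _ ≤ 1 * ‖Φ a‖ * 1 := by
              gcongr
              · change ‖star (W w)‖ ≤ 1
                rw [star_W, norm_smul, norm_sg, one_mul]; exact norm_W _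
              · exact norm_wN _ _
          _ = _ := by ring
      have e2 := h1 a
      have e3 : ‖Φ a + cj (Φ a)‖ ≤ ‖Φ a‖ + ‖cj (Φ a)‖ := norm_add_le _ _
      change ‖(1 / 2 : ℂ) • (Φ a + cj (Φ a))‖ ≤ _
      rw [norm_smul, show ‖(1 / 2 : ℂ)‖ = 1 / 2 by norm_num]
      linarith
    · intro a ha
      change (1 / 2 : ℂ) • (Φ a + cj (Φ a)) ∈ I
      refine smul_mem_I I _ (I.add_mem (h2 a ha) ?_)
      rw [hcj]
      exact I.mul_mem_right _ _ (I.mul_mem_left _ _ (h2 a ha))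
    · intro u
      change (1 / 2 : ℂ) • (Φ (wN N u) + cj (Φ (wN N u))) = _
      rw [h3, map_smul, hcj, wN_conj, smul_smul, ← add_smul, smul_smul]
      congr 1
      change _ = (1 / 2 : ℂ) * (c u + sg (om w (u : V G)) * c u)
      ring
    · change (1 / 2 : ℂ) * (c 0 + sg (om w (0 : V G)) * c 0) = 1
      simp [om, h4]; norm_num
    · intro u hu
      rcases Finset.mem_insert.1 hu with rfl | hu
      · have : om w (u : V G) = 1 := (z2 _).resolve_left hwv
        simp [this]
      · simp [h5 u hu]

lemma mem_of_mem (N : AddSubgroup (V G)) (hN : ∀ v ∈ N, v ≠ 0 → ∃ w ∈ N, om w v ≠ 0)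
    (I : TwoSidedIdeal (AN N)) (hI : IsClosed (I : Set (AN N))) (y : AN N) (hy : y ∈ I) :
    co 0 (y : H G →L[ℂ] H G) • (1 : AN N) ∈ I := by
  classical
  have hmem : co 0 (y : H G →L[ℂ] H G) • (1 : AN N) ∈ closure (I : Set (AN N)) := by
    rw [Metric.mem_closure_iff]
    intro ε hε
    have hy' : (y : H G →L[ℂ] H G) ∈
        closure (Submodule.span ℂ (W '' (N : Set (V G))) : Set (H G →L[ℂ] H G)) := by
      rw [← coe_AN]; exact y.2
    obtain ⟨z, hz, hyz⟩ := Metric.mem_closure_iff.1 hy' (ε / 2) (by positivity)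
    have hz2 : z ∈ Submodule.span ℂ (Set.range fun v : N => W (v : V G)) := by
      have : (Set.range fun v : N => W (v : V G)) = W '' (N : Set (V G)) := by ext; simp
      rw [this]; exact hz
    obtain ⟨l, rfl⟩ := Finsupp.mem_span_range_iff_exists_finsupp.1 hz2
    obtain ⟨Φ, c, h1, h2, h3, h4, h5⟩ := averaging N hN I (l.support.erase 0) (by simp)
    let z' : AN N := l.sum fun v a => a • wN N v
    have hz' : (z' : H G →L[ℂ] H G) = l.sum fun v a => a • W (v : V G) := by
      simp only [z', Finsupp.sum]
      rw [AddSubmonoidClass.coe_finsetSum]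
      rfl
    have hΦ : Φ z' = co 0 (z' : H G →L[ℂ] H G) • (1 : AN N) := by
      rw [hz']
      simp only [z', Finsupp.sum, map_sum, map_smul, Finset.sum_smul]
      refine Finset.sum_congr rfl fun v hv => ?_
      rw [h3, co_W, smul_assoc]
      congr 1
      split_ifs with h
      · have hv0 : v = 0 := Subtype.ext h.symm
        rw [hv0, h4, one_smul, one_smul]
        exact Subtype.ext W_zero
      · rw [h5 v (Finset.mem_erase.2 ⟨fun h' => h (by rw [h']; rfl), hv⟩), zero_smul, zero_smul]
    rw [← hz'] at hyz
    have hd : ‖y - z'‖ < ε / 2 := by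
      rw [dist_eq_norm] at hyz; exact hyz
    refine ⟨Φ y, h2 y hy, ?_⟩
    have e1 : co 0 (y : H G →L[ℂ] H G) • (1 : AN N) - Φ y
        = co 0 ((y - z' : AN N) : H G →L[ℂ] H G) • (1 : AN N) - Φ (y - z') := by
      rw [map_sub, hΦ]
      have : co 0 ((y - z' : AN N) : H G →L[ℂ] H G)
        = co 0 (y : H G →L[ℂ] H G) - co 0 (z' : H G →L[ℂ] H G) := map_sub _ _ _
      rw [this, sub_smul]
      abel
    rw [dist_eq_norm, e1]
    have e2 := h1 (y - z')
    have e3 : ‖co 0 ((y - z' : AN N) : H G →L[ℂ] H G)‖ ≤ ‖y - z'‖ := norm_co _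
    have e4 : ‖(1 : AN N)‖ ≤ 1 := by
      have := norm_wN N 0
      rwa [show wN N 0 = 1 from Subtype.ext W_zero] at this
    calc _ ≤ ‖co 0 ((y - z' : AN N) : H G →L[ℂ] H G) • (1 : AN N)‖ + ‖Φ (y - z')‖ := norm_sub_le _ _
      _ ≤ ‖y - z'‖ * 1 + ‖y - z'‖ := by rw [norm_smul]; gcongr
      _ < ε := by linarith
  rwa [hI.closure_eq] at hmem

theorem simple (N : AddSubgroup (V G)) (hN : ∀ v ∈ N, v ≠ 0 → ∃ w ∈ N, om w v ≠ 0)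
    (I : TwoSidedIdeal (AN N)) (hI : IsClosed (I : Set (AN N))) : I = ⊥ ∨ I = ⊤ := by
  by_cases h : ∃ x ∈ I, x ≠ 0
  · right
    obtain ⟨x, hx, hx0⟩ := h
    have h1 := mem_of_mem N hN I hI (star x * x) (I.mul_mem_left _ _ hx)
    have h2 : co 0 ((star x * x : AN N) : H G →L[ℂ] H G) ≠ 0 :=
      co_star_mul_ne x.2 (fun h => hx0 (Subtype.ext h))
    have h3 := smul_mem_I I (co 0 ((star x * x : AN N) : H G →L[ℂ] H G))⁻¹ h1
    rw [smul_smul, inv_mul_cancel₀ h2, one_smul] at h3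
    rw [eq_top_iff]
    intro y _
    simpa using I.mul_mem_left y 1 h3
  · left
    push Not at h
    rw [eq_bot_iff]
    intro y hy
    rw [h y hy]
    exact (⊥ : TwoSidedIdeal (AN N)).zero_mem

lemma density (N : AddSubgroup (V G)) (κ : Cardinal.{u}) (hκ : ℵ₀ ≤ κ) (hc : 𝔠 ≤ κ)
    (hN : #N ≤ κ) : ∃ D : Set (AN N), Dense D ∧ #D ≤ κ := by
  let f : (N →₀ ℂ) → AN N := fun l => l.sum fun v a => a • wN N v
  refine ⟨Set.range f, ?_, ?_⟩
  · intro y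
    rw [Metric.mem_closure_iff]
    intro ε hε
    have hy' : (y : H G →L[ℂ] H G) ∈
        closure (Submodule.span ℂ (W '' (N : Set (V G))) : Set (H G →L[ℂ] H G)) := by
      rw [← coe_AN]; exact y.2
    obtain ⟨z, hz, hyz⟩ := Metric.mem_closure_iff.1 hy' ε hε
    have hz2 : z ∈ Submodule.span ℂ (Set.range fun v : N => W (v : V G)) := by
      have : (Set.range fun v : N => W (v : V G)) = W '' (N : Set (V G)) := by ext; simp
      rw [this]; exact hz
    obtain ⟨l, rfl⟩ := Finsupp.mem_span_range_iff_exists_finsupp.1 hz2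
    have hz' : ((f l : AN N) : H G →L[ℂ] H G) = l.sum fun v a => a • W (v : V G) := by
      simp only [f, Finsupp.sum]
      rw [AddSubmonoidClass.coe_finsetSum]
      rfl
    refine ⟨f l, ⟨l, rfl⟩, ?_⟩
    rw [← hz'] at hyz
    exact hyz
  · refine mk_range_le.trans ?_
    rw [mk_finsupp_lift_of_infinite']
    simp [hN, hc]

/-- The eigen-characters of the marked elements `W (g, 0)` are exactly those in `Γ`. -/
lemma marked (N : AddSubgroup (V G)) (hG : ∀ g : G, ((g, 0) : V G) ∈ N)
    (χ : Module.Dual (ZMod 2) G) :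
    ((0, χ) : V G) ∈ N ↔ ∃ T : AN N, T ≠ 0 ∧
      ∀ g, T * wN N ⟨(g, 0), hG g⟩ = sg (χ g) • (wN N ⟨(g, 0), hG g⟩ * T) := by
  constructor
  · intro h
    refine ⟨wN N ⟨(0, χ), h⟩, ?_, ?_⟩
    · intro h0
      have h1 : W ((0, χ) : V G) = 0 := congrArg Subtype.val h0
      have h2 := star_W_mul ((0, χ) : V G)
      rw [h1, mul_zero] at h2
      have h3 := congrArg (co 0) h2
      rw [← W_zero, co_W] at h3
      simp at h3
    · intro g
      apply Subtype.ext
      change W _ * W _ = sg (χ g) • (W _ * W _)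
      rw [W_mul, W_mul, smul_smul, add_comm]
      congr 1
      simp [bf]
  · rintro ⟨T, hT, h⟩
    obtain ⟨w, hw, hco⟩ := exists_co_ne T.2 (fun h => hT (Subtype.ext h))
    have hχ : χ = w.2 := by
      ext g
      have h1 : (T : H G →L[ℂ] H G) * W (g, 0) = sg (χ g) • (W (g, 0) * (T : H G →L[ℂ] H G)) :=
        congrArg Subtype.val (h g)
      have h2 := co_conj (g, 0) w T.2
      rw [mul_assoc, h1, mul_smul_comm, ← mul_assoc, star_W_mul, one_mul, map_smul,
        smul_eq_mul] at h2
      have h3 := sg_inj (mul_right_cancel₀ hco h2)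
      simpa [om, bf] using h3
    have : ((0, χ) : V G) = w - (w.1, 0) := by
      rw [hχ]; ext <;> simp
    rw [this]
    exact N.sub_mem hw (hG _)
end
end Calk
namespace Calk
universe u
section
variable {G : Type u} [AddCommGroup G] [Module (ZMod 2) G]

/-- `χ` is an eigen-character of the family `U` modulo compact operators. -/
def Inv {E : Type u} [NormedAddCommGroup E] [NormedSpace ℂ E] (U : G → E →L[ℂ] E)
    (χ : Module.Dual (ZMod 2) G) : Prop :=
  ∃ T : E →L[ℂ] E, ¬ IsCompactOperator T ∧
    ∀ g, IsCompactOperator (T * U g - sg (χ g) • (U g * T) : E →L[ℂ] E)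

/-- The quotient map onto the Calkin algebra. -/
noncomputable def q (E : Type u) [NormedAddCommGroup E] [NormedSpace ℂ E] :
    (E →L[ℂ] E) →+* Calkin ℂ E := (compactIdeal ℂ E).ringCon.mk'

lemma q_surj (E : Type u) [NormedAddCommGroup E] [NormedSpace ℂ E] :
    Function.Surjective (q E) := (compactIdeal ℂ E).ringCon.mk'_surjective

lemma q_eq {E : Type u} [NormedAddCommGroup E] [NormedSpace ℂ E] (S T : E →L[ℂ] E) :
    q E S = q E T ↔ IsCompactOperator (S - T : E →L[ℂ] E) := by
  have h1 : q E S = q E T ↔ (compactIdeal ℂ E).ringCon S T := RingCon.eq _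
  rw [h1, TwoSidedIdeal.rel_iff]
  exact TwoSidedIdeal.mem_mk' _ _ _ _ _ _ (S - T)

lemma q_smul {E : Type u} [NormedAddCommGroup E] [NormedSpace ℂ E] (c : ℂ) (T : E →L[ℂ] E) :
    q E (c • T) = c • q E T := by
  rw [Algebra.smul_def, Algebra.smul_def, map_mul]
  rfl

lemma calk {E : Type u} [NormedAddCommGroup E] [NormedSpace ℂ E] {A : Type u} [Ring A]
    [Algebra ℂ A] (e : A ≃ₐ[ℂ] Calkin ℂ E) (a : G → A) :
    ∃ U : G → E →L[ℂ] E, ∀ χ, Inv U χ ↔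
      ∃ T : A, T ≠ 0 ∧ ∀ g, T * a g = sg (χ g) • (a g * T) := by
  choose U hU using fun g => q_surj E (e (a g))
  refine ⟨U, fun χ => ?_⟩
  have key : ∀ (T : E →L[ℂ] E) (t : A), q E T = e t →
      ((¬ IsCompactOperator T ∧
        ∀ g, IsCompactOperator (T * U g - sg (χ g) • (U g * T) : E →L[ℂ] E)) ↔
      (t ≠ 0 ∧ ∀ g, t * a g = sg (χ g) • (a g * t))) := by
    intro T t h
    have h0 : IsCompactOperator T ↔ t = 0 := by
      have := q_eq T 0
      rw [sub_zero, map_zero, h] at this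
      rw [← this, map_eq_zero_iff e e.injective]
    refine and_congr (not_congr h0) (forall_congr' fun g => ?_)
    rw [← q_eq, q_smul, map_mul, map_mul, h, hU, ← map_mul, ← map_mul, ← map_smul]
    exact e.injective.eq_iff
  constructor
  · rintro ⟨T, hT⟩
    exact ⟨e.symm (q E T), (key T _ (by simp)).1 hT⟩
  · rintro ⟨t, ht⟩
    obtain ⟨T, hT⟩ := q_surj E (e t)
    exact ⟨T, (key T t hT).2 ht⟩

lemma inv_equiv {E F : Type u} [NormedAddCommGroup E] [NormedSpace ℂ E] [NormedAddCommGroup F]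
    [NormedSpace ℂ F] (f : E ≃L[ℂ] F) (U : G → E →L[ℂ] E) (χ : Module.Dual (ZMod 2) G)
    (h : Inv U χ) :
    Inv (fun g => (f : E →L[ℂ] F).comp ((U g).comp (f.symm : F →L[ℂ] E))) χ := by
  obtain ⟨T, hT, h⟩ := h
  refine ⟨(f : E →L[ℂ] F).comp (T.comp (f.symm : F →L[ℂ] E)), ?_, ?_⟩
  · intro hc
    apply hT
    have := (hc.comp_clm (f : E →L[ℂ] F)).clm_comp (f.symm : F →L[ℂ] E)
    refine cast (congrArg IsCompactOperator ?_) this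
    funext x; simp
  · intro g
    have := ((h g).comp_clm (f.symm : F →L[ℂ] E)).clm_comp (f : E →L[ℂ] F)
    refine cast (congrArg IsCompactOperator ?_) this
    funext x; simp

/-- bounded families -/
abbrev L (ι : Type u) : Type u := lp (fun _ : ι => ℂ) ⊤

/-- A concrete Banach space with marked operators. -/
structure Dat (ι G : Type u) where
  M : Submodule ℂ (L ι)
  closed : IsClosed (M : Set (L ι))
  d : ι → M
  dense : DenseRange d
  U : G → M →L[ℂ] M

/-- The code of such a space. -/
noncomputable def Dat.code {ι G : Type u} (x : Dat ι G) : (ι → L ι) × (G → ι → L ι) :=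
  (fun i => (x.d i : L ι), fun g i => (x.U g (x.d i) : L ι))

lemma Dat.carrier_eq {ι G : Type u} (x : Dat ι G) :
    (x.M : Set (L ι)) = closure (Set.range fun i => (x.d i : L ι)) := by
  apply Set.Subset.antisymm
  · intro y hy
    have h1 : (⟨y, hy⟩ : x.M) ∈ closure (Set.range x.d) := x.dense _
    have h2 := image_closure_subset_closure_image (continuous_subtype_val (p := (· ∈ x.M)))
      (Set.mem_image_of_mem _ h1)
    rw [← Set.range_comp] at h2
    exact h2
  · refine closure_minimal ?_ x.closed
    rintro _ ⟨i, rfl⟩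
    exact (x.d i).2

lemma Dat.code_inj {ι G : Type u} : Function.Injective (Dat.code : Dat ι G → _) := by
  intro x y h
  have h1 := congrArg Prod.fst h
  have h2 := congrArg Prod.snd h
  have hM : x.M = y.M := by
    apply SetLike.coe_injective
    rw [x.carrier_eq, y.carrier_eq]
    change closure (Set.range x.code.1) = closure (Set.range y.code.1)
    rw [h1]
  obtain ⟨M, cl, d, de, U⟩ := x
  obtain ⟨M', cl', d', de', U'⟩ := y
  dsimp only at hM
  subst hM
  have hd : d = d' := by
    funext i; exact Subtype.ext (congrFun h1 i)
  subst hd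
  have hU : U = U' := by
    funext g
    apply ContinuousLinearMap.coeFn_injective
    refine de.equalizer (U g).continuous (U' g).continuous ?_
    funext i
    exact Subtype.ext (congrFun (congrFun h2 g) i)
  subst hU
  rfl

lemma exists_embed {ι E : Type u} [NormedAddCommGroup E] [NormedSpace ℂ E] (d : ι → E)
    (hd : DenseRange d) : Nonempty (E →ₗᵢ[ℂ] L ι) := by
  choose f hf1 hf2 using fun i => exists_dual_vector'' ℂ (d i)
  have hb : ∀ x i, ‖f i x‖ ≤ ‖x‖ := fun x i => by
    have := (f i).le_opNorm x
    have h2 := mul_le_mul_of_nonneg_right (hf1 i) (norm_nonneg x)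
    linarith
  let J0 : E →ₗ[ℂ] L ι :=
    { toFun := fun x => ⟨fun i => f i x, memℓp_infty ⟨‖x‖, by rintro _ ⟨i, rfl⟩; exact hb x i⟩⟩
      map_add' := fun x y => by ext i; exact (f i).map_add x y
      map_smul' := fun c x => by ext i; simp }
  have hJ : ∀ x, ‖J0 x‖ ≤ ‖x‖ := fun x =>
    lp.norm_le_of_forall_le (norm_nonneg _) (fun i => hb x i)
  let J1 : E →L[ℂ] L ι := J0.mkContinuous 1 (fun x => by rw [one_mul]; exact hJ x)
  refine ⟨⟨J0, fun x => le_antisymm (hJ x) ?_⟩⟩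
  change ‖x‖ ≤ ‖J1 x‖
  refine hd.induction_on (p := fun x => ‖x‖ ≤ ‖J1 x‖) x
    (isClosed_le continuous_norm J1.continuous.norm) ?_
  intro i
  have h1 : ‖(J1 (d i)) i‖ ≤ ‖J1 (d i)‖ := lp.norm_apply_le_norm (by simp) _ i
  have h2 : (J1 (d i)) i = (‖d i‖ : ℂ) := hf2 i
  rw [h2] at h1
  simpa using h1

lemma exists_dat {ι E : Type u} [NormedAddCommGroup E] [NormedSpace ℂ E] [CompleteSpace E]
    (d : ι → E) (hd : DenseRange d) (U : G → E →L[ℂ] E) :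
    ∃ x : Dat ι G, ∀ χ, Inv x.U χ ↔ Inv U χ := by
  obtain ⟨J⟩ := exists_embed d hd
  let f : E ≃L[ℂ] LinearMap.range J.toLinearMap := J.equivRange.toContinuousLinearEquiv
  refine ⟨⟨LinearMap.range J.toLinearMap, ?_, fun i => f (d i), ?_,
    fun g => (f : E →L[ℂ] _).comp ((U g).comp (f.symm : _ →L[ℂ] E))⟩, fun χ => ⟨fun h => ?_, ?_⟩⟩
  · exact J.isometry.isClosedEmbedding.isClosed_range
  · exact f.surjective.denseRange.comp hd f.continuous
  · have := inv_equiv f.symm _ χ h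
    convert this using 1
    funext g
    ext x; simp
  · intro h
    exact inv_equiv f _ χ h

lemma card_code {ι G : Type u} (hι : ℵ₀ ≤ #ι) (hG : #G ≤ #ι) :
    #((ι → L ι) × (G → ι → L ι)) ≤ 2 ^ #ι := by
  have hself : #ι * #ι = #ι := mul_eq_self hι
  have h2 : ∀ c : Cardinal.{u}, c ≤ #ι → ((2 : Cardinal.{u}) ^ #ι) ^ c ≤ 2 ^ #ι := fun c hc => by
    rw [← power_mul]
    refine power_le_power_left two_ne_zero ?_
    exact (mul_le_mul_right hc _).trans hself.le
  have hL : #(L ι) ≤ 2 ^ #ι := by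
    have : #(L ι) ≤ #(ι → ℂ) :=
      mk_le_of_injective (f := fun x : L ι => (x : ι → ℂ)) (fun x y h => lp.ext h)
    refine this.trans ?_
    rw [mk_pi, prod_const, mk_complex, lift_continuum, ← two_power_aleph0, lift_id'.{0, u},
      ← power_mul]
    exact power_le_power_left two_ne_zero ((mul_le_mul_left hι _).trans hself.le)
  have h3 : #(ι → L ι) ≤ 2 ^ #ι := by
    rw [← power_def]
    exact (power_le_power_right hL).trans (h2 _ le_rfl)
  have h4 : #(G → ι → L ι) ≤ 2 ^ #ι := by
    rw [← power_def]
    exact (power_le_power_right h3).trans (h2 _ hG)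
  rw [mk_prod, lift_id, lift_id]
  refine (mul_le_mul' h3 h4).trans (mul_eq_self ?_).le
  exact hι.trans (cantor _).le

end

/-- The subgroup attached to a space of characters. -/
def NS {G : Type u} [AddCommGroup G] [Module (ZMod 2) G]
    (Γ : Submodule (ZMod 2) (Module.Dual (ZMod 2) G)) : AddSubgroup (V G) :=
  (⊤ : AddSubgroup G).prod Γ.toAddSubgroup

lemma mem_NS {G : Type u} [AddCommGroup G] [Module (ZMod 2) G]
    (Γ : Submodule (ZMod 2) (Module.Dual (ZMod 2) G)) (v : V G) : v ∈ NS Γ ↔ v.2 ∈ Γ := by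
  simp [NS, AddSubgroup.mem_prod]

lemma nondeg {ι : Type u} (Γ : Submodule (ZMod 2) (Module.Dual (ZMod 2) (ι →₀ ZMod 2)))
    (hΓ : ∀ i, (Finsupp.lapply i : (ι →₀ ZMod 2) →ₗ[ZMod 2] ZMod 2) ∈ Γ) :
    ∀ v ∈ NS Γ, v ≠ 0 → ∃ w ∈ NS Γ, om w v ≠ 0 := by
  rintro ⟨g, χ⟩ hv h0
  by_cases hχ : χ = 0
  · subst hχ
    have hg : g ≠ 0 := by rintro rfl; exact h0 rfl
    obtain ⟨i, hi⟩ := Finsupp.ne_iff.1 hg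
    exact ⟨(0, Finsupp.lapply i), (mem_NS _ _).2 (hΓ i), by simpa [om, bf] using hi⟩
  · have : ∃ g', χ g' ≠ 0 := by
      by_contra! hc
      exact hχ (LinearMap.ext hc)
    obtain ⟨g', hg'⟩ := this
    exact ⟨(g', 0), (mem_NS _ _).2 Γ.zero_mem, by simpa [om, bf] using hg'⟩

lemma card_dual (ι : Type u) : #(Module.Dual (ZMod 2) (ι →₀ ZMod 2)) = 2 ^ #ι := by
  have e : (ι → ZMod 2) ≃ Module.Dual (ZMod 2) (ι →₀ ZMod 2) :=
    ((Finsupp.basisSingleOne (R := ZMod 2) (ι := ι)).constr ℕ (M' := ZMod 2)).toEquiv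
  rw [← e.cardinal_eq, mk_pi, prod_const]
  have : #(ZMod 2) = 2 := by rw [mk_fintype, ZMod.card]; rfl
  rw [this]; simp

/-- There are many separating spaces of characters. -/
lemma many (ι : Type u) (hι : ℵ₀ ≤ #ι) :
    ∃ (K : Type u) (Γ : Set K → Submodule (ZMod 2) (Module.Dual (ZMod 2) (ι →₀ ZMod 2))),
      #K = 2 ^ #ι ∧ Function.Injective Γ ∧
      ∀ S i, (Finsupp.lapply i : (ι →₀ ZMod 2) →ₗ[ZMod 2] ZMod 2) ∈ Γ S := by
  classical
  let X := Module.Dual (ZMod 2) (ι →₀ ZMod 2)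
  let B := Module.Basis.ofVectorSpace (ZMod 2) X
  let J := Module.Basis.ofVectorSpaceIndex (ZMod 2) X
  have hJ : #J = 2 ^ #ι := by
    rw [B.mk_eq_rank'', rank_dual_eq_card_dual_of_aleph0_le_rank, card_dual]
    rw [rank_finsupp_self]
    simpa using hι
  let F : Set J := ⋃ i : ι, ((B.repr (Finsupp.lapply i : X)).support : Set J)
  have hF : #F ≤ #ι := by
    refine (mk_iUnion_le _).trans ?_
    have : (⨆ i : ι, #((B.repr (Finsupp.lapply i : X)).support : Set J)) ≤ ℵ₀ :=
      ciSup_le' fun i => (Finset.countable_toSet _).le_aleph0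
    refine (mul_le_mul_right (this.trans hι) _).trans (mul_eq_self hι).le
  have hFJ : #F < #J := by rw [hJ]; exact hF.trans_lt (cantor _)
  have : Infinite J := by
    rw [infinite_iff, hJ]; exact hι.trans (cantor _).le
  refine ⟨(Fᶜ : Set J), fun S => Submodule.span (ZMod 2) (B '' (F ∪ Subtype.val '' S)), ?_, ?_, ?_⟩
  · rw [mk_compl_of_infinite F hFJ, hJ]
  · have key : ∀ (S : Set (Fᶜ : Set J)) (j : (Fᶜ : Set J)),
        B j ∈ Submodule.span (ZMod 2) (B '' (F ∪ Subtype.val '' S)) ↔ j ∈ S := by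
      intro S j
      rw [B.mem_span_image, B.repr_self, Finsupp.support_single _ one_ne_zero]
      have := j.2
      simp only [Finset.coe_singleton, Set.singleton_subset_iff, Set.mem_union]
      constructor
      · rintro (h | ⟨k, hk, h⟩)
        · exact absurd h this
        · rwa [← Subtype.ext h]
      · intro h; exact Or.inr ⟨j, h, rfl⟩
    intro S S' h
    ext j
    rw [← key S, ← key S']
    dsimp only at h
    rw [h]
  · intro S i
    rw [B.mem_span_image]
    exact (Set.subset_iUnion (fun i : ι => ((B.repr (Finsupp.lapply i : X)).support : Set J)) i).trans
      Set.subset_union_left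

end Calk

/-- For every infinite cardinal `λ` there exists a unital complex C⋆-algebra `A` that is simple
(its only closed two-sided ideals are `{0}` and `A`), has a dense subset of cardinality at most
`2 ^ λ`, and such that for every complex Banach space `E` having a dense subset of cardinality
at most `λ`, there is no continuous algebra isomorphism between `A` and the Calkin algebra
`B(E)/K(E)`. -/
theorem statement6 (lam : Cardinal.{u}) (hlam : Cardinal.aleph0 ≤ lam) :
    ∃ A : BundledCStarAlgebra.{u},
      (∀ I : TwoSidedIdeal A.carrier, IsClosed (I : Set A.carrier) → I = ⊥ ∨ I = ⊤) ∧
      (∃ D : Set A.carrier, Dense D ∧ #D ≤ 2 ^ lam) ∧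
      ∀ (E : Type u) [NormedAddCommGroup E] [NormedSpace ℂ E] [CompleteSpace E],
        (∃ D : Set E, Dense D ∧ #D ≤ lam) →
        ¬∃ e : A.carrier ≃ₐ[ℂ] Calkin ℂ E, Continuous e := by
  classical
  obtain ⟨ι, rfl⟩ : ∃ ι : Type u, #ι = lam := ⟨lam.out, lam.mk_out⟩
  have : Infinite ι := infinite_iff.2 hlam
  have hκ : ℵ₀ ≤ (2 : Cardinal.{u}) ^ #ι := hlam.trans (cantor _).le
  have hG : #(ι →₀ ZMod 2) = #ι := by
    have h2 : #(ZMod 2) = 2 := by rw [mk_fintype, ZMod.card]; rfl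
    rw [mk_finsupp_lift_of_infinite, h2]
    simpa using (ofNat_le_aleph0 (n := 2)).trans hlam
  have hcont : 𝔠 ≤ (2 : Cardinal.{u}) ^ #ι := by
    rw [← two_power_aleph0]
    exact power_le_power_left two_ne_zero hlam
  obtain ⟨K, Γ, hK, hinj, hΓ⟩ := Calk.many ι hlam
  by_contra! hcon
  have main : ∀ S : Set K, ∃ x : Calk.Dat ι (ι →₀ ZMod 2),
      ∀ χ, χ ∈ Γ S ↔ Calk.Inv x.U χ := by
    intro S
    obtain ⟨E, i1, i2, i3, ⟨D, hD, hDc⟩, e, -⟩ := hcon ⟨Calk.AN (Calk.NS (Γ S))⟩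
      (fun I hI => Calk.simple _ (Calk.nondeg _ (hΓ S)) I hI)
      (Calk.density _ _ hκ hcont (by
        refine (mk_subtype_le _).trans ?_
        rw [mk_prod, lift_id, lift_id, Calk.card_dual, hG]
        exact (mul_le_mul' (cantor _).le le_rfl).trans (mul_eq_self hκ).le))
    have hgm : ∀ g : ι →₀ ZMod 2, ((g, 0) : Calk.V (ι →₀ ZMod 2)) ∈ Calk.NS (Γ S) := fun g =>
      (Calk.mem_NS _ _).2 (Γ S).zero_mem
    obtain ⟨U, hU⟩ := Calk.calk e (fun g => Calk.wN (Calk.NS (Γ S)) ⟨(g, 0), hgm g⟩)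
    have hDne : Nonempty D := hD.nonempty.to_subtype
    obtain ⟨φ⟩ := (Cardinal.le_def _ _).1 hDc
    have hs : Function.Surjective (Function.invFun φ) := Function.invFun_surjective φ.injective
    obtain ⟨x, hx⟩ := Calk.exists_dat (fun i => (Function.invFun φ i).1)
      (hD.denseRange_val.comp hs.denseRange continuous_subtype_val) U
    refine ⟨x, fun χ => ?_⟩
    rw [hx, hU]
    have := Calk.marked (Calk.NS (Γ S)) hgm χ
    rw [Calk.mem_NS] at this
    exact this
  choose x hx using main
  have hinj2 : Function.Injective (fun S => (x S).code) := by
    intro S S' h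
    have h' := Calk.Dat.code_inj h
    apply hinj
    ext χ
    rw [hx, hx, h']
  have h1 := (mk_le_of_injective hinj2).trans (Calk.card_code hlam hG.le)
  rw [mk_set, hK] at h1
  exact absurd h1 (not_le.2 (cantor _))
end

section
/- For every infinite cardinal λ, the set of ordinals α < λ, considered up to the equivalence relation identifying α and β whenever the Banach spaces C([0,α],ℝ) and C([0,β],ℝ) are isomorphic (i.e. there is a continuous linear bijection with continuous inverse between them), has exactly λ equivalence classes. -/
open Cardinal

/-- The ordinal interval `[0, α]`, i.e. the set of ordinals `≤ α`, with its (order) topology,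
is a compact space. -/
instance (α : Ordinal.{u}) : CompactSpace (Set.Iic α) := by
  rw [← isCompact_iff_compactSpace, ← Set.Icc_bot]
  exact isCompact_Icc

/-- The equivalence relation on ordinals `< λ` identifying `α` and `β` whenever the Banach
spaces `C([0,α], ℝ)` and `C([0,β], ℝ)` are isomorphic, i.e. there is a continuous linear
bijection with continuous inverse between them. -/
def banachIsoSetoid (lam : Cardinal.{u}) : Setoid {α : Ordinal.{u} // α < lam.ord} where
  r a b := Nonempty (C(Set.Iic a.1, ℝ) ≃L[ℝ] C(Set.Iic b.1, ℝ))
  iseqv :=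
    ⟨fun _ => ⟨ContinuousLinearEquiv.refl ℝ _⟩,
     fun ⟨e⟩ => ⟨e.symm⟩,
     fun ⟨e⟩ ⟨f⟩ => ⟨e.trans f⟩⟩


namespace OrdIso

variable {X Y : Type*} [NormedAddCommGroup X] [NormedSpace ℝ X]
  [NormedAddCommGroup Y] [NormedSpace ℝ Y]

/-- finite linear combination -/
def comb : List ℝ → List X → X
  | c :: cs, x :: xs => c • x + comb cs xs
  | _, _ => 0

/-- the `ℓ₁` norm of a list of coefficients -/
def pn : List ℝ → ℝ
  | [] => 0
  | c :: cs => |c| + pn cs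

/-- list spans `ℓ₁` with constant `δ` -/
def Good (δ : ℝ) (l : List X) : Prop :=
  (∀ x ∈ l, ‖x‖ ≤ 1) ∧ ∀ c : List ℝ, c.length = l.length → δ * pn c ≤ ‖comb c l‖

/-- rank of `l` in the tree of `δ`-good lists is at least `ξ` -/
inductive Rk (δ : ℝ) : Ordinal.{u} → List X → Prop
  | mk (ξ : Ordinal.{u}) (l : List X) (hg : Good δ l) (F : Ordinal.{u} → X)
      (h : ∀ η, η < ξ → Rk δ η (l ++ [F η])) : Rk δ ξ l

theorem Rk.good {δ : ℝ} {ξ : Ordinal.{u}} {l : List X} (h : Rk δ ξ l) : Good δ l := by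
  cases h; assumption

theorem Rk.mono {δ : ℝ} {ξ ξ' : Ordinal.{u}} {l : List X} (h : Rk δ ξ l) (h' : ξ' ≤ ξ) :
    Rk δ ξ' l := by
  obtain ⟨_, _, hg, F, h⟩ := h
  exact ⟨_, _, hg, F, fun η hη => h η (hη.trans_le h')⟩

theorem Rk.ext {δ : ℝ} {ξ : Ordinal.{u}} {l : List X} (h : Rk δ (Order.succ ξ) l) :
    ∃ x, Rk δ ξ (l ++ [x]) := by
  obtain ⟨_, _, hg, F, h⟩ := h
  exact ⟨_, h ξ (Order.lt_succ ξ)⟩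

theorem Rk.transfer {δ δ' : ℝ} (w : List Y) (φ : X → Y)
    (H : ∀ l, Good δ l → Good δ' (w ++ l.map φ)) {ξ : Ordinal.{u}} {l : List X}
    (h : Rk δ ξ l) : Rk δ' ξ (w ++ l.map φ) := by
  induction h with
  | mk ξ l hg F h ih =>
    refine ⟨_, _, H _ hg, fun η => φ (F η), fun η hη => ?_⟩
    have := ih η hη
    simpa using this

theorem comb_map (φ : X →ₗ[ℝ] Y) : ∀ (c : List ℝ) (l : List X),
    comb c (l.map φ) = φ (comb c l)
  | [], _ => by simp [comb]
  | _ :: _, [] => by simp [comb]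
  | c :: cs, x :: xs => by simp [comb, comb_map φ cs xs]

theorem pn_nonneg : ∀ c, 0 ≤ pn c
  | [] => le_rfl
  | c :: cs => add_nonneg (abs_nonneg c) (pn_nonneg cs)

theorem pn_append : ∀ c d, pn (c ++ d) = pn c + pn d
  | [], d => by simp [pn]
  | c :: cs, d => by simp [pn, pn_append cs d, add_assoc]

theorem pn_smul (t : ℝ) : ∀ c, pn (c.map (t * ·)) = |t| * pn c
  | [] => by simp [pn]
  | c :: cs => by simp only [List.map_cons, pn, pn_smul t cs, abs_mul]; ring

theorem Rk.iso (e : X ≃L[ℝ] Y) {ξ : Ordinal.{u}} (h : Rk 1 ξ ([] : List X)) :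
    ∃ n : ℕ, Rk (1 / ((n : ℝ) + 1)) ξ ([] : List Y) := by
  set A : ℝ := ‖(e : X →L[ℝ] Y)‖ + 1 with hA
  set B : ℝ := ‖(e.symm : Y →L[ℝ] X)‖ + 1 with hB
  have hA0 : 0 < A := by positivity
  have hB0 : 0 < B := by positivity
  have h1 : ∀ x, ‖e x‖ ≤ A * ‖x‖ := fun x =>
    ((e : X →L[ℝ] Y).le_opNorm x).trans (by gcongr; simp [hA])
  have h2 : ∀ x, ‖x‖ ≤ B * ‖e x‖ := fun x => by
    have := (e.symm : Y →L[ℝ] X).le_opNorm (e x)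
    simp only [ContinuousLinearEquiv.coe_coe, ContinuousLinearEquiv.symm_apply_apply] at this
    exact this.trans (by gcongr; simp [hB])
  obtain ⟨n, hn⟩ := exists_nat_ge (A * B)
  refine ⟨n, ?_⟩
  set φ : X →ₗ[ℝ] Y := A⁻¹ • (e : X →ₗ[ℝ] Y) with hφ
  have hφn : ∀ x, ‖φ x‖ = A⁻¹ * ‖e x‖ := fun x => by
    simp [hφ, norm_smul, abs_of_pos hA0]
  have := Rk.transfer (δ' := 1 / ((n : ℝ) + 1)) [] φ ?_ h
  · simpa using this
  · intro l hl
    refine ⟨?_, ?_⟩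
    · intro y hy
      simp only [List.nil_append, List.mem_map] at hy
      obtain ⟨x, hx, rfl⟩ := hy
      rw [hφn, inv_mul_le_iff₀ hA0]
      have := hl.1 x hx
      nlinarith [h1 x]
    · intro c hc
      simp only [List.nil_append, List.length_map] at hc ⊢
      rw [comb_map, hφn]
      have h3 := hl.2 c hc
      have h4 := h2 (comb c l)
      have h5 : pn c ≤ B * ‖e (comb c l)‖ := by linarith
      rw [div_mul_eq_mul_div, one_mul, inv_mul_eq_div, div_le_div_iff₀ (by positivity) hA0]
      calc pn c * A ≤ B * ‖e (comb c l)‖ * A := by gcongr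
        _ = ‖e (comb c l)‖ * (A * B) := by ring
        _ ≤ _ := by gcongr; linarith

/-- linear combination of a tail of a sequence -/
def Ts (f : ℕ → X) : ℕ → List ℝ → X
  | _, [] => 0
  | N, c :: cs => c • f N + Ts f (N + 1) cs

theorem Ts_append (f : ℕ → X) : ∀ (c d : List ℝ) (N : ℕ),
    Ts f N (c ++ d) = Ts f N c + Ts f (N + c.length) d
  | [], d, N => by simp [Ts]
  | c :: cs, d, N => by
    simp only [List.cons_append, Ts, Ts_append f cs d, List.length_cons]
    rw [add_assoc (c • f N), show N + 1 + cs.length = N + (cs.length + 1) by ring]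

theorem Ts_smul (f : ℕ → X) (t : ℝ) : ∀ (c : List ℝ) (N : ℕ),
    Ts f N (c.map (t * ·)) = t • Ts f N c
  | [], N => by simp [Ts]
  | c :: cs, N => by simp [Ts, Ts_smul f t cs, smul_smul]

theorem Ts_norm (f : ℕ → X) (hf : ∀ n, ‖f n‖ ≤ 1) : ∀ (c : List ℝ) (N : ℕ),
    ‖Ts f N c‖ ≤ pn c
  | [], N => by simp [Ts, pn]
  | c :: cs, N => by
    refine (norm_add_le _ _).trans (add_le_add ?_ (Ts_norm f hf cs _))
    rw [norm_smul, Real.norm_eq_abs]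
    nlinarith [hf N, abs_nonneg c]

theorem Ts_eq (f : ℕ → X) : ∀ (c : List ℝ) (N : ℕ),
    Ts f N c = comb c ((List.range' N c.length).map f)
  | [], N => by simp [Ts, comb]
  | c :: cs, N => by simp [Ts, comb, List.range'_succ, Ts_eq f cs]

/-- perturbation of combinations -/
theorem comb_sub {ε : ℝ} : ∀ (c : List ℝ) (l l' : List X),
    List.Forall₂ (fun x y => ‖x - y‖ ≤ ε) l l' → c.length = l.length →
    ‖comb c l - comb c l'‖ ≤ ε * pn c
  | [], _, _, _, _ => by simp [comb, pn]
  | _ :: _, [], _, _, h => by simp at h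
  | _ :: _, _ :: _, [], h, _ => by simp at h
  | c :: cs, x :: xs, y :: ys, h, hl => by
    simp only [List.forall₂_cons] at h
    have := comb_sub cs xs ys h.2 (by simpa using hl)
    simp only [comb, pn]
    calc ‖c • x + comb cs xs - (c • y + comb cs ys)‖
        = ‖c • (x - y) + (comb cs xs - comb cs ys)‖ := by congr 1; rw [smul_sub]; abel
      _ ≤ |c| * ‖x - y‖ + ‖comb cs xs - comb cs ys‖ := by
        refine (norm_add_le _ _).trans ?_
        rw [norm_smul, Real.norm_eq_abs]
      _ ≤ |c| * ε + ε * pn cs := by gcongr; exact h.1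
      _ = _ := by ring

theorem noL1_zero {α : Ordinal.{u}} (f : ℕ → C(Set.Iic α, ℝ)) (s : Set (Set.Iic α))
    (γ : Set.Iic α)
    (H : ∀ ε > 0, ∀ N, ∃ c, pn c = 1 ∧ ∀ y ∈ s, |Ts f N c y| ≤ ε) :
    ∀ ε > 0, ∀ N, ∃ c, pn c = 1 ∧ (∀ y ∈ s, |Ts f N c y| ≤ ε) ∧ Ts f N c γ = 0 := by
  intro ε hε N
  obtain ⟨c, hc, hcs⟩ := H ε hε N
  obtain ⟨d, hd, hds⟩ := H ε hε (N + c.length)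
  set v := Ts f N c with hv
  set w := Ts f (N + c.length) d with hw
  by_cases h0 : v γ = 0
  · exact ⟨c, hc, hcs, h0⟩
  set q := |v γ| + |w γ| with hq
  have hq0 : 0 < q := by have := abs_pos.2 h0; positivity
  have key : |w γ / q| + |-(v γ / q)| = 1 := by
    rw [abs_neg, abs_div, abs_div, abs_of_pos hq0]
    field_simp
    rw [hq]; ring
  have hT : Ts f N (c.map (w γ / q * ·) ++ d.map (-(v γ / q) * ·))
      = (w γ / q) • v + (-(v γ / q)) • w := by
    rw [Ts_append, Ts_smul, Ts_smul, List.length_map]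
  refine ⟨c.map (w γ / q * ·) ++ d.map (-(v γ / q) * ·), ?_, ?_, ?_⟩
  · rw [pn_append, pn_smul, pn_smul, hc, hd, mul_one, mul_one, key]
  · intro y hy
    rw [hT]
    simp only [ContinuousMap.add_apply, ContinuousMap.smul_apply, smul_eq_mul]
    calc _ ≤ |w γ / q| * |v y| + |-(v γ / q)| * |w y| := by
          rw [← abs_mul, ← abs_mul]; exact abs_add_le _ _
      _ ≤ |w γ / q| * ε + |-(v γ / q)| * ε := by
          gcongr
          · exact hcs y hy
          · exact hds y hy
      _ = ε := by rw [← add_mul, key, one_mul]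
  · rw [hT]
    simp only [ContinuousMap.add_apply, ContinuousMap.smul_apply, smul_eq_mul]
    ring

theorem noL1_main {α : Ordinal.{u}} (f : ℕ → C(Set.Iic α, ℝ)) (hf : ∀ n, ‖f n‖ ≤ 1)
    (γ : Set.Iic α) :
    ∀ ε > 0, ∀ N, ∃ c, pn c = 1 ∧ ∀ y ≤ γ, |Ts f N c y| ≤ ε := by
  induction γ using WellFoundedLT.induction with
  | ind γ ih =>
  by_cases hγ : ∃ θ, θ < γ
  · obtain ⟨θ0, hθ0⟩ := hγ
    have blocks : ∀ ε > 0, ∀ N, ∀ m : ℕ, ∃ c, ∃ θ < γ, pn c = m ∧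
        (∀ y ≤ θ, |Ts f N c y| ≤ m * ε + 1) ∧
        (∀ y ≤ γ, θ < y → |Ts f N c y| ≤ m * ε) := by
      intro ε hε N m
      induction m with
      | zero =>
        refine ⟨[], θ0, hθ0, by simp [pn], ?_, ?_⟩ <;> intros <;> simp [Ts]
      | succ m ihm =>
        obtain ⟨c, θ, hθ, hc, h1, h2⟩ := ihm
        obtain ⟨d, hd, hd1, hd2⟩ :=
          noL1_zero f (Set.Iic θ) γ (fun ε hε N => ih θ hθ ε hε N) ε hε (N + c.length)
        set u := Ts f (N + c.length) d with hu
        have hnb : {y | |u y| < ε} ∈ nhds γ := by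
          refine IsOpen.mem_nhds ?_ (by simpa [hd2] using hε)
          exact isOpen_lt (by fun_prop) continuous_const
        obtain ⟨θ', hθ', hs⟩ := exists_Ioc_subset_of_mem_nhds' hnb hθ
        have hub : ∀ y, |u y| ≤ 1 := fun y => by
          have := (u.norm_coe_le_norm y).trans (Ts_norm f hf d _)
          rwa [hd, Real.norm_eq_abs] at this
        refine ⟨c ++ d, θ', hθ'.2, by rw [pn_append, hc, hd]; push_cast; rfl, ?_, ?_⟩
        · intro y hy
          rw [Ts_append, ContinuousMap.add_apply]
          refine (abs_add_le _ _).trans ?_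
          push_cast
          by_cases hyθ : y ≤ θ
          · have := h1 y hyθ
            have := hd1 y hyθ
            linarith
          · have := h2 y (hy.trans hθ'.2.le) (not_le.1 hyθ)
            have := hub y
            linarith
        · intro y hy hy'
          rw [Ts_append, ContinuousMap.add_apply]
          refine (abs_add_le _ _).trans ?_
          push_cast
          have := h2 y hy (hθ'.1.trans_lt hy')
          have : |u y| < ε := hs ⟨hy', hy⟩
          linarith
    intro ε hε N
    obtain ⟨m, hm⟩ := exists_nat_gt (2 / ε)
    have hm0 : (0 : ℝ) < m := lt_trans (by positivity) hm
    obtain ⟨c, θ, hθ, hc, h1, h2⟩ := blocks (ε / 2) (by positivity) N m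
    refine ⟨c.map ((m : ℝ)⁻¹ * ·), ?_, ?_⟩
    · rw [pn_smul, hc, abs_of_pos (by positivity)]
      field_simp
    · intro y hy
      rw [Ts_smul, ContinuousMap.smul_apply, smul_eq_mul, abs_mul, abs_of_pos (by positivity),
        inv_mul_le_iff₀ hm0]
      rw [div_lt_iff₀ hε] at hm
      rcases le_or_gt y θ with h | h
      · have := h1 y h
        linarith
      · have := h2 y hy h
        linarith
  · intro ε hε N
    obtain ⟨c, hc, -, h0⟩ := noL1_zero f ∅ γ
      (fun ε hε N => ⟨[1], by simp [pn], by simp⟩) ε hε N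
    refine ⟨c, hc, fun y hy => ?_⟩
    have : y = γ := by
      by_contra hne
      exact hγ ⟨y, lt_of_le_of_ne hy hne⟩
    rw [this, h0]; simpa using hε.le

theorem noL1 {α : Ordinal.{u}} (f : ℕ → C(Set.Iic α, ℝ)) {δ : ℝ} (hδ : 0 < δ) :
    ¬ ∀ n, Good δ ((List.range n).map f) := by
  intro h
  have hf : ∀ n, ‖f n‖ ≤ 1 := fun n => (h (n + 1)).1 _
    (List.mem_map.2 ⟨n, by simp, rfl⟩)
  obtain ⟨c, hc, hcs⟩ := noL1_main f hf ⟨α, Set.mem_Iic.2 le_rfl⟩ (δ / 2) (by positivity) 0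
  have h1 := (h c.length).2 c (by simp)
  rw [List.range_eq_range', ← Ts_eq, hc] at h1
  have h2 : ‖Ts f 0 c‖ ≤ δ / 2 :=
    (ContinuousMap.norm_le _ (by positivity)).2 fun y => hcs y y.2
  linarith

theorem continuous_osub (c : Ordinal.{u}) : Continuous (fun y : Ordinal.{u} => y - c) := by
  rw [OrderTopology.continuous_iff]
  intro a
  constructor
  · have : (fun y : Ordinal.{u} => y - c) ⁻¹' Set.Ioi a = Set.Ioi (c + a) := by
      ext y; simp [Ordinal.lt_sub]
    rw [this]; exact isOpen_Ioi
  · rcases eq_or_ne a 0 with rfl | ha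
    · simp
    have : (fun y : Ordinal.{u} => y - c) ⁻¹' Set.Iio a = Set.Iio (c + a) := by
      ext y
      simp only [Set.mem_preimage, Set.mem_Iio]
      rcases le_or_gt c y with h | h
      · obtain ⟨z, rfl⟩ := exists_add_of_le h
        simp
      · rw [Ordinal.sub_eq_zero_iff_le.2 h.le]
        exact ⟨fun _ => h.trans_le le_self_add, fun _ => pos_iff_ne_zero.2 ha⟩
    rw [this]; exact isOpen_Iio

theorem frontier_Iic_ord (β γ : Ordinal.{u}) : frontier {y : Set.Iic γ | y.1 ≤ β} = ∅ := by
  apply IsClopen.frontier_eq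
  constructor
  · exact isClosed_le (by fun_prop) continuous_const
  · have : {y : Set.Iic γ | y.1 ≤ β} = {y : Set.Iic γ | y.1 < Order.succ β} := by
      ext; simp
    rw [this]
    exact isOpen_lt (by fun_prop) continuous_const

/-- the doubling step -/
theorem doubling {b β γ : Ordinal.{u}} (hb : b ≤ β) (hγ : β + 1 + β ≤ γ) {η : Ordinal.{u}}
    (h : Rk 1 η ([] : List C(Set.Iic b, ℝ))) :
    ∃ x : C(Set.Iic γ, ℝ), Rk 1 η [x] := by
  let x : C(Set.Iic γ, ℝ) :=
    ⟨fun y => if y.1 ≤ β then 1 else -1,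
      Continuous.if (by rw [frontier_Iic_ord]; simp) continuous_const continuous_const⟩
  let r0 : Set.Iic γ → Ordinal.{u} :=
    fun y => if y.1 ≤ β then min y.1 b else min (y.1 - (β + 1)) b
  have hr0 : Continuous r0 :=
    Continuous.if (by rw [frontier_Iic_ord]; simp) (by fun_prop)
      (((continuous_osub _).comp continuous_subtype_val).min continuous_const)
  have hr0b : ∀ y, r0 y ∈ Set.Iic b := fun y => by
    simp only [r0, Set.mem_Iic]; split_ifs <;> exact min_le_right _ _
  let r : C(Set.Iic γ, Set.Iic b) := ⟨fun y => ⟨r0 y, hr0b y⟩, hr0.subtype_mk _⟩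
  let φ : C(Set.Iic b, ℝ) →ₗ[ℝ] C(Set.Iic γ, ℝ) :=
    { toFun := fun g => g.comp r
      map_add' := fun _ _ => rfl
      map_smul' := fun _ _ => rfl }
  refine ⟨x, ?_⟩
  have := Rk.transfer (δ' := 1) [x] φ ?_ h
  · simpa using this
  intro l hl
  refine ⟨?_, ?_⟩
  · intro y hy
    simp only [List.cons_append, List.nil_append, List.mem_cons, List.mem_map] at hy
    rcases hy with rfl | ⟨z, hz, rfl⟩
    · refine (ContinuousMap.norm_le _ zero_le_one).2 fun y => ?_
      simp only [x, ContinuousMap.coe_mk]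
      split_ifs <;> simp
    · refine (ContinuousMap.norm_le _ zero_le_one).2 fun y => ?_
      exact (z.norm_coe_le_norm (r y)).trans (hl.1 z hz)
  · intro c hc
    rcases c with _ | ⟨c0, cs⟩
    · simp at hc
    simp only [List.cons_append, List.nil_append, comb, pn, comb_map]
    have h1 := hl.2 cs (by simpa using hc)
    set z := comb cs l with hz
    set M := ‖c0 • x + φ z‖ with hM
    have h2 : ‖z‖ ≤ M - |c0| := by
      have : Nonempty (Set.Iic b) := ⟨⟨b, Set.mem_Iic.2 le_rfl⟩⟩
      refine (ContinuousMap.norm_le_of_nonempty _).2 fun t => ?_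
      have ht : t.1 ≤ b := t.2
      have hlt : β < β + 1 := lt_add_one β
      let y1 : Set.Iic γ :=
        ⟨t.1, (ht.trans hb).trans ((hlt.le.trans le_self_add).trans hγ)⟩
      let y2 : Set.Iic γ :=
        ⟨β + 1 + t.1, by
          have := ht.trans hb
          simp only [Set.mem_Iic]
          refine le_trans ?_ hγ
          gcongr⟩
      have hx1 : x y1 = 1 := if_pos (ht.trans hb)
      have hn : ¬ y2.1 ≤ β := not_le.2 (hlt.trans_le le_self_add)
      have hx2 : x y2 = -1 := if_neg hn
      have hr1 : r y1 = t := Subtype.ext <| by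
        change r0 y1 = t.1
        simp only [r0]
        rw [if_pos (show y1.1 ≤ β from ht.trans hb)]
        exact min_eq_left ht
      have hr2 : r y2 = t := Subtype.ext <| by
        change r0 y2 = t.1
        simp only [r0]
        rw [if_neg hn, Ordinal.add_sub_cancel]
        exact min_eq_left ht
      have e1 := (c0 • x + φ z).norm_coe_le_norm y1
      have e2 := (c0 • x + φ z).norm_coe_le_norm y2
      have f1 : (c0 • x + φ z) y1 = c0 + z t := by
        change c0 * x y1 + z (r y1) = _
        rw [hx1, hr1, mul_one]
      have f2 : (c0 • x + φ z) y2 = -c0 + z t := by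
        change c0 * x y2 + z (r y2) = _
        rw [hx2, hr2]; ring
      rw [f1, Real.norm_eq_abs, ← hM] at e1
      rw [f2, Real.norm_eq_abs, ← hM] at e2
      rw [Real.norm_eq_abs]
      rw [abs_le] at e1 e2
      rcases abs_cases (z t) with h | h <;> rcases abs_cases c0 with h' | h' <;> linarith
    linarith

theorem bdd_lt {κ : Cardinal.{u}} (hκ : ℵ₀ ≤ κ) {D : Type (u + 1)}
    (hD : #D ≤ Cardinal.lift.{u + 1} κ) (F : D → Ordinal.{u})
    (hF : ∀ d, F d < (Order.succ κ).ord) :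
    ∃ β < (Order.succ κ).ord, ∀ d, F d ≤ β := by
  have hreg := Cardinal.isRegular_succ hκ
  rcases isEmpty_or_nonempty D with hE | hE
  · exact ⟨0, hreg.ord_pos, fun d => hE.elim d⟩
  have : Nonempty (D ↪ ULift.{u + 1} κ.out) := by
    have h : #D ≤ #(ULift.{u + 1} κ.out) := by simpa using hD
    exact h
  obtain ⟨j⟩ := this
  let s : κ.out → D := fun i => Function.invFun j (ULift.up i)
  have hs : Function.Surjective s := fun d =>
    ⟨(j d).down, Function.leftInverse_invFun j.injective d⟩
  refine ⟨⨆ i, F (s i), ?_, fun d => ?_⟩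
  · apply Ordinal.iSup_lt_of_lt_cof
    · rw [hreg.cof_ord]; simp
    · exact fun i => hF _
  · obtain ⟨i, rfl⟩ := hs d
    exact Ordinal.le_iSup (fun i => F (s i)) i

theorem pigeon {κ : Cardinal.{u}} (hκ : ℵ₀ ≤ κ) {D : Type (u + 1)}
    (hD : #D ≤ Cardinal.lift.{u + 1} κ) (P : Ordinal.{u} → D → Prop)
    (hanti : ∀ ξ ξ' d, ξ' ≤ ξ → P ξ d → P ξ' d)
    (h : ∀ ξ < (Order.succ κ).ord, ∃ d, P ξ d) :
    ∃ d, ∀ ξ < (Order.succ κ).ord, P ξ d := by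
  by_contra! hcon
  choose F hF hF' using hcon
  obtain ⟨β, hβ, hb⟩ := bdd_lt hκ hD F hF
  obtain ⟨d, hd⟩ := h β hβ
  exact hF' d (hanti _ _ _ (hb d) hd)

theorem exists_big {κ : Cardinal.{u}} (hκ : ℵ₀ ≤ κ) (ξ : Ordinal.{u})
    (hξ : ξ < (Order.succ κ).ord) :
    ∃ β < (Order.succ κ).ord, ∀ β' ≥ β,  Rk 1 ξ ([] : List C(Set.Iic β', ℝ)) := by
  induction ξ using WellFoundedLT.induction with
  | ind ξ ih =>
  choose B hB hR using ih
  have hlim : Ordinal.IsPrincipal (· + ·) (Order.succ κ).ord :=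
    Ordinal.isPrincipal_add_ord (hκ.trans (Order.le_succ κ))
  obtain ⟨β, hβ, hb⟩ := bdd_lt hκ (D := Set.Iio ξ) (by
      rw [Cardinal.mk_Iio_ordinal, Cardinal.lift_le]
      exact Order.lt_succ_iff.1 (Cardinal.lt_ord.1 hξ))
    (fun η => B η.1 η.2 (lt_trans η.2 hξ)) (fun η => hB _ _ _)
  have h1 : (1 : Ordinal.{u}) < (Order.succ κ).ord := by
    rw [Cardinal.lt_ord]
    simpa using Cardinal.one_lt_aleph0.trans_le (hκ.trans (Order.le_succ κ))
  refine ⟨β + 1 + β, hlim (hlim hβ h1) hβ, fun β' hβ' => ?_⟩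
  have hex : ∀ η, ∃ x : C(Set.Iic β', ℝ), η < ξ → Rk 1 η [x] := by
    intro η
    by_cases hη : η < ξ
    · obtain ⟨x, hx⟩ := doubling (hb ⟨η, hη⟩) hβ' (hR η hη (hη.trans hξ) _ le_rfl)
      exact ⟨x, fun _ => hx⟩
    · exact ⟨0, fun h => absurd h hη⟩
  choose F hF using hex
  refine ⟨_, _, ⟨by simp, ?_⟩, F, fun η hη => hF η hη⟩
  intro c hc
  have : c = [] := by simpa using hc
  simp [this, pn]

/-- step function evaluation -/
noncomputable def ev {α : Ordinal.{u}} : List (Set.Iic α × ℚ) → Set.Iic α → ℝ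
  | [], _ => 0
  | (g, q) :: L, y => if g ≤ y then (q : ℝ) else ev L y

theorem exists_ev {α : Ordinal.{u}} (f : C(Set.Iic α, ℝ)) {ε : ℝ} (hε : 0 < ε)
    (γ : Set.Iic α) : ∃ L, ∀ y ≤ γ, |f y - ev L y| ≤ ε := by
  induction γ using WellFoundedLT.induction with
  | ind γ ih =>
  obtain ⟨q, hq1, hq2⟩ := exists_rat_btwn (show f γ - ε < f γ + ε by linarith)
  by_cases hγ : ∃ θ, θ < γ
  · have hnb : {y | |f y - q| < ε} ∈ nhds γ := by
      refine IsOpen.mem_nhds (isOpen_lt (by fun_prop) continuous_const) ?_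
      rw [Set.mem_ofPred_eq, abs_lt]; constructor <;> linarith
    obtain ⟨θ, hθ, hs⟩ := exists_Ioc_subset_of_mem_nhds hnb hγ
    obtain ⟨L, hL⟩ := ih θ hθ
    have hlt : θ.1 < γ.1 := hθ
    refine ⟨(⟨Order.succ θ.1, (Order.succ_le_of_lt hlt).trans γ.2⟩, q) :: L, fun y hy => ?_⟩
    simp only [ev]
    split_ifs with h
    · have h' : θ.1 < y.1 := Order.succ_le_iff.1 h
      exact (hs ⟨h', hy⟩ : |f y - q| < ε).le
    · have h' : ¬ θ.1 < y.1 := fun h' => h (Order.succ_le_iff.2 h')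
      exact hL y (not_lt.1 h')
  · refine ⟨[(γ, q)], fun y hy => ?_⟩
    have : y = γ := by
      by_contra hne
      exact hγ ⟨y, lt_of_le_of_ne hy hne⟩
    subst this
    simp only [ev, le_refl, if_true]
    rw [abs_le]; constructor <;> linarith

theorem exists_code {κ : Cardinal.{u}} (hκ : ℵ₀ ≤ κ) {α : Ordinal.{u}}
    (hα : α < (Order.succ κ).ord) {ε : ℝ} (hε : 0 < ε) :
    ∃ (D : Type (u + 1)) (code : C(Set.Iic α, ℝ) → D), #D ≤ Cardinal.lift.{u + 1} κ ∧
      ∀ f g, code f = code g → ‖f - g‖ ≤ ε := by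
  choose code hcode using fun f : C(Set.Iic α, ℝ) =>
    exists_ev f (half_pos hε) ⟨α, Set.mem_Iic.2 le_rfl⟩
  refine ⟨List (Set.Iic α × ℚ), code, ?_, ?_⟩
  · have h0 : ℵ₀ ≤ Cardinal.lift.{u + 1} κ := by simpa using hκ
    have hlim : Order.IsSuccLimit (Order.succ κ).ord :=
      Cardinal.isSuccLimit_ord (hκ.trans (Order.le_succ κ))
    refine (Cardinal.mk_list_le_max _).trans (max_le h0 ?_)
    have h1 : #(Set.Iic α) ≤ Cardinal.lift.{u + 1} κ := by
      rw [← Order.Iio_succ, Cardinal.mk_Iio_ordinal, Cardinal.lift_le]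
      exact Order.lt_succ_iff.1 (Cardinal.lt_ord.1 (hlim.succ_lt hα))
    rw [Cardinal.mk_prod]
    refine Cardinal.mul_le_of_le h0 ?_ ?_
    · simpa using h1
    · simpa using hκ
  · intro f g h
    refine (ContinuousMap.norm_le _ hε.le).2 fun y => ?_
    have h1 := hcode f y y.2
    have h2 := hcode g y y.2
    rw [h] at h1
    rw [ContinuousMap.sub_apply, Real.norm_eq_abs]
    rw [abs_le] at *
    constructor <;> linarith

theorem not_Rk {κ : Cardinal.{u}} (hκ : ℵ₀ ≤ κ) {α : Ordinal.{u}}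
    (hα : α < (Order.succ κ).ord) {δ : ℝ} (hδ : 0 < δ) :
    ¬ ∀ ξ < (Order.succ κ).ord, Rk δ ξ ([] : List C(Set.Iic α, ℝ)) := by
  intro H
  obtain ⟨D, code, hD, hcode⟩ := exists_code hκ hα (half_pos hδ)
  have hlim : Order.IsSuccLimit (Order.succ κ).ord :=
    Cardinal.isSuccLimit_ord (hκ.trans (Order.le_succ κ))
  let U : List D → Prop := fun L =>
    ∀ ξ < (Order.succ κ).ord, ∃ l : List C(Set.Iic α, ℝ), l.map code = L ∧ Rk δ ξ l
  have hU0 : U [] := fun ξ hξ => ⟨[], rfl, H ξ hξ⟩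
  have hstep : ∀ L, U L → ∃ d, U (L ++ [d]) := by
    intro L hL
    refine pigeon hκ hD (fun ξ d => ∃ l : List C(Set.Iic α, ℝ), l.map code = L ++ [d] ∧ Rk δ ξ l)
      ?_ ?_
    · rintro ξ ξ' d hle ⟨l, hl, hR⟩
      exact ⟨l, hl, hR.mono hle⟩
    · intro ξ hξ
      obtain ⟨l, hl, hR⟩ := hL _ (hlim.succ_lt hξ)
      obtain ⟨x, hx⟩ := hR.ext
      exact ⟨code x, l ++ [x], by simp [hl], hx⟩
  have : Nonempty D := ⟨code 0⟩
  choose! nxt hnxt using hstep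
  let S : ℕ → List D := fun n => Nat.rec [] (fun _ L => L ++ [nxt L]) n
  have hSs : ∀ n, S (n + 1) = S n ++ [nxt (S n)] := fun n => rfl
  have hSU : ∀ n, U (S n) := by
    intro n
    induction n with
    | zero => exact hU0
    | succ n ih => rw [hSs]; exact hnxt _ ih
  have hS : ∀ n, S n = (List.range n).map (fun i => nxt (S i)) := by
    intro n
    induction n with
    | zero => rfl
    | succ n ih => rw [hSs, List.range_succ, List.map_append, ← ih]; rfl
  have hpos : (0 : Ordinal.{u}) < (Order.succ κ).ord := lt_of_le_of_lt (zero_le) hα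
  have hf : ∀ n, ∃ f : C(Set.Iic α, ℝ), code f = nxt (S n) ∧ ‖f‖ ≤ 1 := by
    intro n
    obtain ⟨l, hl, hR⟩ := hSU (n + 1) 0 hpos
    have : nxt (S n) ∈ l.map code := by rw [hl, hSs]; simp
    obtain ⟨x, hx, hx'⟩ := List.mem_map.1 this
    exact ⟨x, hx', hR.good.1 x hx⟩
  choose f hf hf1 using hf
  refine noL1 f (half_pos hδ) fun n => ⟨?_, ?_⟩
  · intro x hx
    obtain ⟨i, -, rfl⟩ := List.mem_map.1 hx
    exact hf1 i
  · intro c hc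
    obtain ⟨l, hl, hR⟩ := hSU n 0 hpos
    have hmap : l.map code = ((List.range n).map f).map code := by
      rw [hl, hS, List.map_map]; congr 1; funext i; exact (hf i).symm
    have hall : List.Forall₂ (fun x y => ‖x - y‖ ≤ δ / 2) l ((List.range n).map f) := by
      rw [← List.forall₂_eq_eq_eq, List.forall₂_map_left_iff, List.forall₂_map_right_iff] at hmap
      exact hmap.imp fun x y h => hcode _ _ h
    have hlen : c.length = l.length := by rw [hc, hall.length_eq]
    have h1 := hR.good.2 c hlen
    have h2 := comb_sub c _ _ hall hlen
    have h3 := norm_sub_norm_le (comb c l) (comb c ((List.range n).map f))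
    linarith

theorem finite_case : Function.Injective (fun n : ℕ =>
    (⟦⟨(n : Ordinal.{u}), by simp [Cardinal.ord_aleph0, Ordinal.natCast_lt_omega0]⟩⟧ : Quotient (banachIsoSetoid.{u} ℵ₀))) := by
  have hcard : ∀ n : ℕ, Nat.card (Set.Iic (n : Ordinal.{u})) = n + 1 := by
    intro n
    rw [← Order.Iio_succ, Nat.card, Cardinal.mk_Iio_ordinal]
    simp
  have hfr : ∀ n : ℕ, Module.finrank ℝ C(Set.Iic (n : Ordinal.{u}), ℝ) = n + 1 := by
    intro n
    have : Finite (Set.Iic (n : Ordinal.{u})) :=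
      Nat.finite_of_card_ne_zero (by rw [hcard]; simp)
    have := Fintype.ofFinite (Set.Iic (n : Ordinal.{u}))
    let e : C(Set.Iic (n : Ordinal.{u}), ℝ) ≃ₗ[ℝ] (Set.Iic (n : Ordinal.{u}) → ℝ) :=
      { toFun := fun g => g
        invFun := fun g => ⟨g, continuous_of_discreteTopology⟩
        left_inv := fun _ => rfl
        right_inv := fun _ => rfl
        map_add' := fun _ _ => rfl
        map_smul' := fun _ _ => rfl }
    rw [e.finrank_eq, Module.finrank_fintype_fun_eq_card, ← Nat.card_eq_fintype_card, hcard]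
  intro m n h
  obtain ⟨e⟩ := Quotient.exact h
  have := e.toLinearEquiv.finrank_eq
  rw [hfr, hfr] at this
  omega

theorem succ_case {κ lam : Cardinal.{u}} (hκ : ℵ₀ ≤ κ) (h : κ < lam) :
    Cardinal.lift.{u + 1} κ < #(Quotient (banachIsoSetoid lam)) := by
  by_contra! hcon
  have hle : (Order.succ κ).ord ≤ lam.ord := Cardinal.ord_le_ord.2 (Order.succ_le_of_lt h)
  obtain ⟨q, hq⟩ := pigeon hκ hcon
    (fun ξ q => ∃ a : {α : Ordinal.{u} // α < lam.ord}, ξ ≤ a.1 ∧ a.1 < (Order.succ κ).ord ∧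
      (⟦a⟧ : Quotient (banachIsoSetoid lam)) = q)
    (fun ξ ξ' q hle ⟨a, h1, h2, h3⟩ => ⟨a, hle.trans h1, h2, h3⟩)
    (fun ξ hξ => ⟨_, ⟨ξ, hξ.trans_le hle⟩, le_rfl, hξ, rfl⟩)
  have hpos : (0 : Ordinal.{u}) < (Order.succ κ).ord := (Cardinal.isRegular_succ hκ).ord_pos
  obtain ⟨a, -, ha, haq⟩ := hq 0 hpos
  have key : ∀ ξ < (Order.succ κ).ord, ∃ n : ULift.{u + 1} ℕ,
      Rk (1 / ((n.down : ℝ) + 1)) ξ ([] : List C(Set.Iic a.1, ℝ)) := by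
    intro ξ hξ
    obtain ⟨β, hβ, hR⟩ := exists_big hκ ξ hξ
    obtain ⟨b, hb, hb', hbq⟩ := hq β hβ
    obtain ⟨e⟩ := Quotient.exact (hbq.trans haq.symm)
    obtain ⟨n, hn⟩ := (hR b.1 hb).iso e
    exact ⟨⟨n⟩, hn⟩
  obtain ⟨n, hn⟩ := pigeon hκ (by simpa using hκ) _ (fun ξ ξ' d hle hR => hR.mono hle) key
  exact not_Rk hκ ha (by positivity) hn

end OrdIso

open OrdIso in
theorem statement8 (lam : Cardinal.{u}) (hlam : Cardinal.aleph0 ≤ lam) :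
    #(Quotient (banachIsoSetoid lam)) = Cardinal.lift.{u + 1} lam := by
  apply le_antisymm
  · refine Cardinal.mk_quotient_le.trans ?_
    have := Cardinal.mk_Iio_ordinal lam.ord
    rw [Cardinal.card_ord] at this
    exact this.le
  · rcases eq_or_lt_of_le hlam with rfl | hlt
    · have := Cardinal.mk_le_of_injective (α := ULift.{u + 1} ℕ)
        (finite_case.{u}.comp ULift.down_injective)
      simpa using this
    · by_contra! hcon
      obtain ⟨κ, hκ⟩ := Cardinal.mem_range_lift_of_le hcon.le
      rw [← hκ, Cardinal.lift_lt] at hcon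
      have h2 := succ_case (κ := max κ ℵ₀) (le_max_right _ _) (max_lt hcon hlt)
      rw [← hκ, Cardinal.lift_lt] at h2
      exact absurd h2 (not_lt.2 (le_max_left _ _))
end

section
/- Let λ be an infinite cardinal. For every ordinal α with λ ≤ α < λ⁺ (where λ⁺ is the successor cardinal of λ), the space K(C([0,α],ℝ)) of compact operators on C([0,α],ℝ) has a dense subset of cardinality λ; moreover, the set of ordinals α in the interval [λ, λ⁺), considered up to the equivalence identifying α and β whenever the rings K(C([0,α],ℝ)) and K(C([0,β],ℝ)) are isomorphic as rings, has exactly λ⁺ equivalence classes. -/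
open Cardinal

set_option synthInstance.maxHeartbeats 1000000

/-- The non-unital algebra `K(E)` of compact operators on `E`. -/
def compactOperators (𝕜 : Type*) [NontriviallyNormedField 𝕜]
    (E : Type*) [NormedAddCommGroup E] [NormedSpace 𝕜 E] :
    NonUnitalSubalgebra 𝕜 (E →L[𝕜] E) where
  carrier := {f : E →L[𝕜] E | IsCompactOperator f}
  add_mem' := fun hf hg => hf.add hg
  zero_mem' := isCompactOperator_zero
  smul_mem' := fun c _ hf => hf.smul c
  mul_mem' := fun {_ g} hf _ => hf.comp_clm g

/-- The equivalence relation on ordinals in `[λ, λ⁺)` identifying `α` and `β` whenever the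
rings `K(C([0,α], ℝ))` and `K(C([0,β], ℝ))` of compact operators are isomorphic as rings. -/
def ringIsoSetoid (lam : Cardinal.{u}) :
    Setoid {α : Ordinal.{u} // lam.ord ≤ α ∧ α < (Order.succ lam).ord} where
  r a b := Nonempty ((compactOperators ℝ C(Set.Iic a.1, ℝ)) ≃+*
    (compactOperators ℝ C(Set.Iic b.1, ℝ)))
  iseqv :=
    ⟨fun _ => ⟨RingEquiv.refl _⟩,
     fun ⟨e⟩ => ⟨e.symm⟩,
     fun ⟨e⟩ ⟨f⟩ => ⟨e.trans f⟩⟩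

namespace KOrd

open Filter Topology

/-! ### Ring isomorphisms of compact operators are spatial -/
section Eidelheit

variable {E F : Type*} [NormedAddCommGroup E] [NormedSpace ℝ E]
  [NormedAddCommGroup F] [NormedSpace ℝ F]

/-- the rank one operator `z ↦ g z • x` -/
def rk1 (x : E) (g : E →L[ℝ] ℝ) : compactOperators ℝ E :=
  ⟨g.smulRight x, by
    change IsCompactOperator _
    have h : IsCompactOperator (g : E → ℝ) :=
      ⟨Metric.closedBall 0 1, isCompact_closedBall 0 1, by
        have : Metric.closedBall (0:ℝ) 1 ∈ 𝓝 (g 0) := by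
          rw [map_zero]; exact Metric.closedBall_mem_nhds _ one_pos
        exact g.continuous.continuousAt this⟩
    exact h.clm_comp (ContinuousLinearMap.smulRight (1 : ℝ →L[ℝ] ℝ) x)⟩

@[simp] lemma rk1_apply (x : E) (g : E →L[ℝ] ℝ) (z : E) : (rk1 x g).1 z = g z • x := rfl

lemma kext {A B : compactOperators ℝ E} (h : ∀ z, A.1 z = B.1 z) : A = B :=
  Subtype.ext (ContinuousLinearMap.ext h)

@[simp] lemma kmul_apply (A B : compactOperators ℝ E) (z : E) : (A * B).1 z = A.1 (B.1 z) := rfl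
@[simp] lemma kadd_apply (A B : compactOperators ℝ E) (z : E) : (A + B).1 z = A.1 z + B.1 z := rfl
@[simp] lemma ksmul_apply (c : ℝ) (B : compactOperators ℝ E) (z : E) :
    (c • B).1 z = c • B.1 z := rfl
@[simp] lemma kzero_apply (z : E) : (0 : compactOperators ℝ E).1 z = 0 := rfl

/-- the image of a rank one idempotent is a rank one idempotent -/
lemma exists_image (φ : compactOperators ℝ E ≃+* compactOperators ℝ F)
    (e : E) (es : E →L[ℝ] ℝ) (hes : es e = 1) :
    ∃ (f : F) (fs : F →L[ℝ] ℝ), fs f = 1 ∧ φ (rk1 e es) = rk1 f fs := by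
  set p := rk1 e es with hp
  set q := φ p with hq
  have hpp : p * p = p := kext fun z => by simp [hp, hes]
  have hqq : q * q = q := by rw [hq, ← map_mul, hpp]
  have he0 : e ≠ 0 := by rintro rfl; simp at hes
  have hp0 : p ≠ 0 := by
    intro h
    have := congrArg (fun A : compactOperators ℝ E => A.1 e) h
    simp [hp, hes] at this
    exact he0 this
  have hq0 : q ≠ 0 := by rw [hq]; simpa using hp0
  obtain ⟨z, hz⟩ : ∃ z, q.1 z ≠ 0 := by
    by_contra! h
    exact hq0 (kext fun z => by rw [h z]; rfl)
  set f := q.1 z with hf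
  have hqf : q.1 f = f := by
    rw [hf, ← kmul_apply, hqq]
  obtain ⟨g, hg⟩ := SeparatingDual.exists_eq_one (R := ℝ) hz
  set fs : F →L[ℝ] ℝ := g.comp q.1 with hfs
  have hfsf : fs f = 1 := by
    change g (q.1 f) = 1
    rw [hqf, hg]
  refine ⟨f, fs, hfsf, ?_⟩
  set s := rk1 f fs with hs
  have hss : s * s = s := kext fun z => by simp [hs, hfsf]
  have hqsq : q * s * q = s := kext fun z => by
    have h1 : fs (q.1 z) = fs z := by
      change g (q.1 (q.1 z)) = g (q.1 z)
      rw [← kmul_apply, hqq]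
    simp [hs, hqf, h1]
  set r := φ.symm s with hr
  have hrr : r * r = r := by rw [hr, ← map_mul, hss]
  have hprp : p * r * p = r := by
    apply φ.injective
    rw [map_mul, map_mul, hr, φ.apply_symm_apply, hqsq]
  set c := es (r.1 e) with hc
  have hrc : r = c • p := by
    rw [← hprp]
    refine kext fun z => ?_
    simp [hp, hc, smul_smul, mul_comm]
  have hcc : c * c = c := by
    have := congrArg (fun A : compactOperators ℝ E => es (A.1 e)) hrr
    simpa [hrc, hp, hes] using this
  have hc1 : c = 1 := by
    rcases IsIdempotentElem.iff_eq_zero_or_one.mp hcc with h | h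
    · exfalso
      have hs0 : s = 0 := by
        rw [← φ.apply_symm_apply s, ← hr, hrc, h, zero_smul, map_zero]
      have := congrArg (fun A : compactOperators ℝ F => fs (A.1 f)) hs0
      simp [hs, hfsf] at this
    · exact h
  rw [hc1, one_smul] at hrc
  rw [← φ.apply_symm_apply s, ← hr, hrc]

set_option maxHeartbeats 1000000 in
theorem eidelheit [CompleteSpace E] [CompleteSpace F] [Nontrivial E]
    (φ : compactOperators ℝ E ≃+* compactOperators ℝ F) : Nonempty (E ≃L[ℝ] F) := by
  obtain ⟨e, he⟩ := exists_ne (0 : E)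
  obtain ⟨es, hes⟩ := SeparatingDual.exists_eq_one (R := ℝ) he
  obtain ⟨f, fs, hfs, hφ⟩ := exists_image φ e es hes
  -- the induced ring homomorphism on scalars
  have hθ : ∀ c : ℝ, (φ (c • rk1 e es)) = fs ((φ (c • rk1 e es)).1 f) • rk1 f fs := by
    intro c
    have h1 : rk1 e es * (c • rk1 e es) * rk1 e es = c • rk1 e es :=
      kext fun z => by simp [hes]
    have h2 : rk1 f fs * φ (c • rk1 e es) * rk1 f fs = φ (c • rk1 e es) := by
      rw [← hφ, ← map_mul, ← map_mul, h1]
    conv_lhs => rw [← h2]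
    refine kext fun z => ?_
    simp [smul_smul, mul_comm]
  have hff : (rk1 f fs).1 f = f := by simp [hfs]
  let θ : ℝ →+* ℝ :=
    { toFun := fun c => fs ((φ (c • rk1 e es)).1 f)
      map_one' := by simp [hφ, hfs]
      map_zero' := by simp
      map_add' := fun a b => by simp [add_smul]
      map_mul' := fun a b => by
        have h1 : (a * b) • rk1 e es = (a • rk1 e es) * (b • rk1 e es) :=
          kext fun z => by simp [hes, smul_smul]; ring_nf
        rw [h1, map_mul, hθ a, hθ b]
        simp [hfs, mul_comm] }
  have hθ1 : ∀ c, fs ((φ (c • rk1 e es)).1 f) = c := by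
    intro c
    have : θ = RingHom.id ℝ := Subsingleton.elim _ _
    exact congrArg (fun t : ℝ →+* ℝ => t c) this
  have hθ2 : ∀ c : ℝ, φ (c • rk1 e es) = c • rk1 f fs := fun c => by
    rw [hθ c, hθ1 c]
  have hadd : ∀ (x y : E), rk1 (x + y) es = rk1 x es + rk1 y es := fun x y =>
    kext fun z => by simp
  have hadd' : ∀ (x y : F), rk1 (x + y) fs = rk1 x fs + rk1 y fs := fun x y =>
    kext fun z => by simp
  let S : F → E := fun y => (φ.symm (rk1 y fs)).1 e
  let T : E →ₗ[ℝ] F :=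
    { toFun := fun x => (φ (rk1 x es)).1 f
      map_add' := fun x y => by simp [hadd]
      map_smul' := fun c x => by
        have h1 : rk1 (c • x) es = rk1 x es * (c • rk1 e es) :=
          kext fun z => by simp [hes, smul_smul, mul_comm]
        rw [h1, map_mul, hθ2]
        simp [hfs] }
  have hT : ∀ x, T x = (φ (rk1 x es)).1 f := fun _ => rfl
  have hS : ∀ y, S y = (φ.symm (rk1 y fs)).1 e := fun _ => rfl
  have hTS : ∀ y, T (S y) = y := by
    intro y
    have h1 : rk1 (S y) es = φ.symm (rk1 y fs) * rk1 e es := kext fun z => by simp [hS]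
    rw [hT, h1, map_mul, φ.apply_symm_apply, hφ]
    simp [hfs]
  have hφ' : φ.symm (rk1 f fs) = rk1 e es := by rw [← hφ, φ.symm_apply_apply]
  have hST : ∀ x, S (T x) = x := by
    intro x
    have h1 : rk1 (T x) fs = φ (rk1 x es) * rk1 f fs := kext fun z => by simp [hT]
    rw [hS, h1, map_mul, φ.symm_apply_apply, hφ']
    simp [hes]
  let L : E ≃ₗ[ℝ] F := { T with invFun := S, left_inv := hST, right_inv := hTS }
  have hL : ∀ x, L x = T x := fun _ => rfl
  have key : ∀ (g : E →L[ℝ] ℝ) (z : E), fs ((φ (rk1 e g)).1 (T z)) = g z := by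
    intro g z
    have h1 : rk1 e g * rk1 z es = g z • rk1 e es := kext fun w => by
      simp [smul_smul, mul_comm]
    rw [hT, ← kmul_apply, ← map_mul, h1, hθ2]
    simp [hfs]
  have hcont : Continuous L.symm := by
    refine LinearMap.continuous_of_seq_closed_graph (g := (L.symm : F →ₗ[ℝ] E)) ?_
    intro u x y hu hy
    refine (SeparatingDual.eq_iff_forall_dual_eq (R := ℝ)).2 fun g => ?_
    have h2 : ∀ w : F, g (L.symm w) = fs ((φ (rk1 e g)).1 w) := by
      intro w
      rw [← key, ← hL, L.apply_symm_apply]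
    have h3 : Tendsto (fun n => g (L.symm (u n))) atTop (𝓝 (g y)) :=
      (g.continuous.tendsto y).comp hy
    have h4 : Tendsto (fun n => g (L.symm (u n))) atTop (𝓝 (g (L.symm x))) := by
      simp only [h2]
      exact ((fs.comp (φ (rk1 e g)).1).continuous.tendsto x).comp hu
    exact tendsto_nhds_unique h3 h4
  exact ⟨(L.symm.toContinuousLinearEquivOfContinuous hcont).symm⟩

end Eidelheit
/-! ### Basic facts on `C([0,α])` -/
section Basics

universe u

lemma isClopen_le (α γ : Ordinal.{u}) : IsClopen {t : Set.Iic α | t.1 ≤ γ} := by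
  constructor
  · exact isClosed_le continuous_subtype_val continuous_const
  · have : {t : Set.Iic α | t.1 ≤ γ} = {t : Set.Iic α | t.1 < Order.succ γ} := by
      ext t; simp
    rw [this]
    exact isOpen_lt continuous_subtype_val continuous_const

/-- indicator function of `[0,γ]` -/
noncomputable def ind (α γ : Ordinal.{u}) : C(Set.Iic α, ℝ) :=
  ⟨{t : Set.Iic α | t.1 ≤ γ}.indicator (fun _ => (1:ℝ)),
    (isClopen_le α γ).continuous_indicator continuous_const⟩

lemma ind_of_le {α γ : Ordinal.{u}} {t : Set.Iic α} (h : t.1 ≤ γ) : ind α γ t = 1 :=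
  Set.indicator_of_mem (s := {t : Set.Iic α | t.1 ≤ γ}) h (fun _ => (1:ℝ))

lemma ind_of_lt {α γ : Ordinal.{u}} {t : Set.Iic α} (h : γ < t.1) : ind α γ t = 0 :=
  Set.indicator_of_notMem (s := {t : Set.Iic α | t.1 ≤ γ}) (not_le.2 h) (fun _ => (1:ℝ))

lemma exists_nbhd {α : Ordinal.{u}} (f : C(Set.Iic α, ℝ)) (β : Set.Iic α) (h0 : β.1 ≠ 0)
    {ε : ℝ} (hε : 0 < ε) (γ₀ : Ordinal.{u}) (hγ₀ : γ₀ < β.1) :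
    ∃ γ < β.1, γ₀ ≤ γ ∧ ∀ t : Set.Iic α, γ < t.1 → t.1 ≤ β.1 → |f t - f β| ≤ ε := by
  have h1 : f ⁻¹' (Metric.ball (f β) ε) ∈ 𝓝 β :=
    f.continuous.continuousAt (Metric.ball_mem_nhds _ hε)
  rw [nhds_subtype_eq_comap, Filter.mem_comap] at h1
  obtain ⟨U, hU, hUs⟩ := h1
  obtain ⟨l, hl, hlU⟩ := exists_Ioc_subset_of_mem_nhds hU ⟨0, bot_lt_iff_ne_bot.2 h0⟩
  refine ⟨max l γ₀, max_lt hl hγ₀, le_max_right _ _, fun t ht1 ht2 => ?_⟩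
  have : t ∈ f ⁻¹' (Metric.ball (f β) ε) := hUs (hlU ⟨(le_max_left _ _).trans_lt ht1, ht2⟩)
  exact (Metric.mem_ball.1 this).le

lemma span_ind_dense (α : Ordinal.{u}) :
    Dense (Submodule.span ℝ (Set.range fun γ : Set.Iic α => ind α γ.1) :
      Set (C(Set.Iic α, ℝ))) := by
  set V := Submodule.span ℝ (Set.range fun γ : Set.Iic α => ind α γ.1) with hV
  set W := V.topologicalClosure with hW
  have hmem : ∀ γ : Set.Iic α, ind α γ.1 ∈ W := fun γ =>
    V.le_topologicalClosure (Submodule.subset_span ⟨γ, rfl⟩)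
  have hcl : IsClosed (W : Set (C(Set.Iic α, ℝ))) := V.isClosed_topologicalClosure
  have key : ∀ (β : Ordinal.{u}) (hβ : β ≤ α) (f : C(Set.Iic α, ℝ)), f * ind α β ∈ W := by
    intro β
    induction β using WellFoundedLT.induction with
    | ind β ih =>
      intro hβ f
      set b : Set.Iic α := ⟨β, hβ⟩
      by_cases h0 : β = 0
      · have : f * ind α β = f b • ind α β := by
          ext t
          rcases le_or_gt t.1 β with ht | ht
          · have : t = b := Subtype.ext (by
              have h : t.1 ≤ 0 := h0 ▸ ht
              rw [nonpos_iff_eq_zero.1 h]; exact h0.symm)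
            simp [this]
          · simp [ind_of_lt ht]
        rw [this]
        exact W.smul_mem _ (hmem b)
      · change f * ind α β ∈ (W : Set _)
        rw [← hcl.closure_eq, Metric.mem_closure_iff]
        intro ε hε
        obtain ⟨γ, hγ, -, hγ2⟩ := exists_nbhd f b h0 (half_pos hε) 0 (pos_iff_ne_zero.2 h0)
        refine ⟨f * ind α γ + f b • (ind α β - ind α γ), ?_, ?_⟩
        · exact W.add_mem (ih γ hγ (hγ.le.trans hβ) f) (W.smul_mem _ (W.sub_mem (hmem b)
            (hmem ⟨γ, hγ.le.trans hβ⟩)))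
        · refine lt_of_le_of_lt ?_ (half_lt_self hε)
          rw [ContinuousMap.dist_le (half_pos hε).le]
          intro t
          rw [Real.dist_eq]
          have hγ' : γ < β := hγ
          have hε2 := (half_pos hε).le
          rcases le_or_gt t.1 γ with ht | ht
          · simpa [ind_of_le ht, ind_of_le (ht.trans hγ'.le)] using hε2
          · rcases le_or_gt t.1 β with ht' | ht'
            · simpa [ind_of_le ht', ind_of_lt ht] using hγ2 t ht ht'
            · simpa [ind_of_lt ht, ind_of_lt ht'] using hε2
  intro f
  have h1 := key α le_rfl f
  have h2 : f * ind α α = f := by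
    ext t; simp [ind_of_le (show t.1 ≤ α from t.2)]
  rw [h2] at h1
  exact h1

/-- A normed space spanned (topologically) by at most `lam` vectors has a dense subset of size at
most `lam`. -/
lemma exists_dense_of_span {E : Type*} [AddCommGroup E] [Module ℝ E] [TopologicalSpace E]
    [ContinuousAdd E] [ContinuousSMul ℝ E]
    {ι : Type u} (lam : Cardinal.{u}) (hlam : ℵ₀ ≤ lam) (hι : #ι ≤ lam) (v : ι → E)
    (hv : Dense (Submodule.span ℝ (Set.range v) : Set E)) :
    ∃ (κ : Type u) (e : κ → E), #κ ≤ lam ∧ DenseRange e := by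
  let e : List (ℚ × ι) → E := fun l => (l.map fun p => (p.1 : ℝ) • v p.2).sum
  refine ⟨List (ℚ × ι), e, ?_, ?_⟩
  · refine (mk_list_le_max _).trans (max_le hlam ?_)
    rw [mk_prod]
    refine (Cardinal.mul_le_max_of_aleph0_le_left (by simp)).trans ?_
    simp [hlam, hι]
  · have hadd : ∀ x ∈ Set.range e, ∀ y ∈ Set.range e, x + y ∈ Set.range e := by
      rintro _ ⟨l, rfl⟩ _ ⟨m, rfl⟩
      exact ⟨l ++ m, by simp [e]⟩
    have hsm : ∀ r ∈ Set.range ((↑) : ℚ → ℝ), ∀ y ∈ Set.range e, r • y ∈ Set.range e := by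
      rintro _ ⟨q, rfl⟩ _ ⟨m, rfl⟩
      refine ⟨m.map fun p => (q * p.1, p.2), ?_⟩
      simp only [e]
      induction m with
      | nil => simp
      | cons a m ih => simp only [List.map_cons, List.sum_cons, ih, smul_add]; simp [smul_smul]
    intro x
    suffices h : (Submodule.span ℝ (Set.range v) : Set E) ⊆ closure (Set.range e) by
      have := closure_mono h
      rw [closure_closure] at this
      exact this (hv x)
    intro y hy
    induction hy using Submodule.span_induction with
    | mem x hx =>
      obtain ⟨i, rfl⟩ := hx
      exact subset_closure ⟨[(1, i)], by simp [e]⟩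
    | zero => exact subset_closure ⟨[], by simp [e]⟩
    | add x y _ _ hx hy => exact map_mem_closure₂ continuous_add hx hy hadd
    | smul a x _ hx =>
      exact map_mem_closure₂ continuous_smul (Rat.isDenseEmbedding_coe_real.dense a) hx hsm

end Basics
/-! ### Compact operators on `C([0,α])` -/
section Compact

universe u

lemma norm_sum_le_one {α : Ordinal.{u}} {ι : Type*} [DecidableEq ι] (h : ι → C(Set.Iic α, ℝ))
    (h1 : ∀ k, ‖h k‖ ≤ 1) (hd : ∀ k l t, h k t ≠ 0 → k ≠ l → h l t = 0) (s : Finset ι) :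
    ‖∑ k ∈ s, h k‖ ≤ 1 := by
  rw [ContinuousMap.norm_le _ zero_le_one]
  intro t
  rw [ContinuousMap.coe_sum, Finset.sum_apply]
  by_cases hk : ∃ k ∈ s, h k t ≠ 0
  · obtain ⟨k, hks, hk⟩ := hk
    rw [Finset.sum_eq_single k (fun l _ hl => hd k l t hk (Ne.symm hl)) (fun h => absurd hks h)]
    exact ((h k).norm_coe_le_norm t).trans (h1 k)
  · push Not at hk
    rw [Finset.sum_eq_zero hk]
    simp

lemma small_tail {α : Ordinal.{u}} (A : C(Set.Iic α, ℝ) →L[ℝ] C(Set.Iic α, ℝ))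
    (hA : IsCompactOperator A) (β : Set.Iic α) (h0 : β.1 ≠ 0) {ε : ℝ} (hε : 0 < ε) :
    ∃ γ < β.1, ∀ f : C(Set.Iic α, ℝ), ‖f‖ ≤ 1 → (∀ t : Set.Iic α, t.1 ≤ γ → f t = 0) →
      (∀ t : Set.Iic α, β.1 ≤ t.1 → f t = 0) → ‖A f‖ ≤ ε := by
  by_contra! hcon
  have step : ∀ γ : Set.Iio β.1, ∃ (γ' : Set.Iio β.1) (f : C(Set.Iic α, ℝ)), γ ≤ γ' ∧ ‖f‖ ≤ 1 ∧
      (∀ t : Set.Iic α, t.1 ≤ γ.1 → f t = 0) ∧ (∀ t : Set.Iic α, γ'.1 < t.1 → f t = 0) ∧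
      ε / 2 ≤ ‖A f‖ := by
    rintro ⟨γ, hγ⟩
    obtain ⟨f, hf1, hf2, hf3, hf4⟩ := hcon γ hγ
    have hη : 0 < ε / 2 / (‖A‖ + 1) := by positivity
    obtain ⟨γ', hγ', hγγ', hn⟩ := exists_nbhd f β h0 hη γ hγ
    refine ⟨⟨γ', hγ'⟩, f * ind α γ', hγγ', ?_, ?_, ?_, ?_⟩
    · rw [ContinuousMap.norm_le _ zero_le_one]
      intro t
      rcases le_or_gt t.1 γ' with ht | ht
      · simpa [ind_of_le ht] using (f.norm_coe_le_norm t).trans hf1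
      · simp [ind_of_lt ht]
    · intro t ht
      simp [hf2 t ht]
    · intro t ht
      simp [ind_of_lt ht]
    · have h5 : ‖f - f * ind α γ'‖ ≤ ε / 2 / (‖A‖ + 1) := by
        rw [ContinuousMap.norm_le _ hη.le]
        intro t
        rcases le_or_gt t.1 γ' with ht | ht
        · simpa [ind_of_le ht] using hη.le
        · rcases le_or_gt t.1 β.1 with ht' | ht'
          · have := hn t ht ht'
            rw [hf3 β le_rfl] at this
            simpa [ind_of_lt ht] using this
          · simpa [hf3 t ht'.le] using hη.le
      have h6 : ‖A (f - f * ind α γ')‖ ≤ ε / 2 := by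
        refine (A.le_opNorm _).trans ?_
        calc ‖A‖ * ‖f - f * ind α γ'‖ ≤ (‖A‖ + 1) * (ε / 2 / (‖A‖ + 1)) := by
              gcongr; linarith
          _ = ε / 2 := by field_simp
      rw [map_sub] at h6
      have := norm_sub_norm_le (A f) (A (f * ind α γ'))
      linarith
  choose G F hG hF1 hF2 hF3 hF4 using step
  let g : ℕ → Set.Iio β.1 := fun k => G^[k] ⟨0, pos_iff_ne_zero.2 h0⟩
  have hgs : ∀ k, g (k + 1) = G (g k) := fun k => Function.iterate_succ_apply' _ _ _
  have hgm : Monotone g := monotone_nat_of_le_succ fun k => by rw [hgs]; exact hG _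
  have hlt : ∀ k l t, k < l → F (g k) t ≠ 0 → F (g l) t = 0 := by
    intro k l t hkl hk
    apply hF2
    have h1 : t.1 ≤ (g (k + 1)).1 := by
      rw [hgs]
      by_contra! h
      exact hk (hF3 _ _ h)
    exact h1.trans (hgm hkl)
  have hd : ∀ k l t, F (g k) t ≠ 0 → k ≠ l → F (g l) t = 0 := by
    intro k l t hk hkl
    rcases lt_or_gt_of_ne hkl with h | h
    · exact hlt k l t h hk
    · by_contra hl
      exact hk (hlt l k t h hl)
  have hcomp := IsCompactOperator.isCompact_closure_image_closedBall
    (f := (A : C(Set.Iic α, ℝ) →ₗ[ℝ] C(Set.Iic α, ℝ))) hA 1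
  obtain ⟨y, -, φ, hφ, hy⟩ := hcomp.tendsto_subseq (x := fun k => A (F (g k)))
    (fun k => subset_closure ⟨F (g k), by simpa using hF1 _, rfl⟩)
  have hy1 : ε / 2 ≤ ‖y‖ := ge_of_tendsto hy.norm (Filter.Eventually.of_forall fun k => hF4 _)
  obtain ⟨K, hK⟩ := Metric.tendsto_atTop.1 hy (ε / 4) (by positivity)
  obtain ⟨N, hN⟩ := exists_nat_gt (‖A‖ / (ε / 4))
  rw [div_lt_iff₀ (by positivity)] at hN
  have h1 : ‖∑ k ∈ Finset.range N, F (g (φ (K + k)))‖ ≤ 1 :=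
    norm_sum_le_one (fun k => F (g (φ (K + k)))) (fun k => hF1 _)
      (fun k l t hk hkl => hd _ _ t hk (fun h => hkl (by have := hφ.injective h; omega))) _
  have h2 : ‖A (∑ k ∈ Finset.range N, F (g (φ (K + k))))‖ ≤ ‖A‖ :=
    (A.le_opNorm _).trans (mul_le_of_le_one_right (norm_nonneg _) h1)
  have h3 : ‖∑ k ∈ Finset.range N, (A (F (g (φ (K + k)))) - y)‖ ≤ N * (ε / 4) := by
    refine (norm_sum_le _ _).trans ?_
    calc _ ≤ ∑ k ∈ Finset.range N, ε / 4 := by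
          refine Finset.sum_le_sum fun k _ => ?_
          rw [← dist_eq_norm]
          exact (hK _ (by omega)).le
      _ = N * (ε / 4) := by simp
  rw [Finset.sum_sub_distrib, ← map_sum, Finset.sum_const, Finset.card_range] at h3
  have h4 : ‖N • y‖ = N * ‖y‖ := by rw [← Nat.cast_smul_eq_nsmul ℝ, norm_smul]; simp
  have h5 := norm_sub_norm_le (N • y) (A (∑ k ∈ Finset.range N, F (g (φ (K + k)))))
  rw [norm_sub_rev, h4] at h5
  have h6 : (N : ℝ) * (ε / 2) ≤ N * ‖y‖ := by gcongr
  nlinarith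

/-- evaluation functional -/
noncomputable def dl (α : Ordinal.{u}) (c : Set.Iic α) : C(Set.Iic α, ℝ) →L[ℝ] ℝ :=
  ContinuousMap.evalCLM ℝ c

@[simp] lemma dl_apply (α : Ordinal.{u}) (c : Set.Iic α) (f : C(Set.Iic α, ℝ)) :
    dl α c f = f c := rfl

/-- multiplication by an indicator function -/
noncomputable def cut (α β : Ordinal.{u}) : C(Set.Iic α, ℝ) →L[ℝ] C(Set.Iic α, ℝ) :=
  (ContinuousLinearMap.mul ℝ (C(Set.Iic α, ℝ))).flip (ind α β)

@[simp] lemma cut_apply (α β : Ordinal.{u}) (f : C(Set.Iic α, ℝ)) :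
    cut α β f = f * ind α β := rfl

lemma span_rk1_dense (α : Ordinal.{u}) :
    Dense (Submodule.span ℝ (Set.range fun p : Set.Iic α × Set.Iic α =>
      rk1 (ind α p.1.1) (dl α p.2)) : Set (compactOperators ℝ C(Set.Iic α, ℝ))) := by
  set V := Submodule.span ℝ (Set.range fun p : Set.Iic α × Set.Iic α =>
      rk1 (ind α p.1.1) (dl α p.2)) with hV
  set W := V.topologicalClosure with hW
  have hcl : IsClosed (W : Set (compactOperators ℝ C(Set.Iic α, ℝ))) :=
    V.isClosed_topologicalClosure
  have hmem : ∀ (y : C(Set.Iic α, ℝ)) (c : Set.Iic α), rk1 y (dl α c) ∈ W := by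
    intro y c
    let Φ : C(Set.Iic α, ℝ) →ₗ[ℝ] compactOperators ℝ C(Set.Iic α, ℝ) :=
      { toFun := fun y => rk1 y (dl α c)
        map_add' := fun x y => kext fun z => by simp
        map_smul' := fun r x => kext fun z => by simp [smul_smul, mul_comm] }
    have hΦ : Continuous Φ :=
      Continuous.subtype_mk (((ContinuousLinearMap.smulRightL ℝ _ _) (dl α c)).continuous) _
    have h1 : IsClosed (W.comap Φ : Set (C(Set.Iic α, ℝ))) := hcl.preimage hΦ
    have h2 : Submodule.span ℝ (Set.range fun γ : Set.Iic α => ind α γ.1) ≤ W.comap Φ := by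
      rw [Submodule.span_le]
      rintro _ ⟨γ, rfl⟩
      exact V.le_topologicalClosure (Submodule.subset_span ⟨(γ, c), rfl⟩)
    have h3 := closure_minimal h2 h1
    exact h3 (span_ind_dense α y)
  have key : ∀ (β : Ordinal.{u}) (hβ : β ≤ α) (A : compactOperators ℝ C(Set.Iic α, ℝ)),
      (⟨A.1.comp (cut α β), A.2.comp_clm (cut α β)⟩ : compactOperators ℝ C(Set.Iic α, ℝ)) ∈ W := by
    intro β
    induction β using WellFoundedLT.induction with
    | ind β ih =>
      intro hβ A
      set b : Set.Iic α := ⟨β, hβ⟩ with hb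
      by_cases h0 : β = 0
      · convert hmem (A.1 (ind α β)) b using 1
        refine kext fun f => ?_
        have : f * ind α β = f b • ind α β := by
          ext t
          rcases le_or_gt t.1 β with ht | ht
          · have : t = b := Subtype.ext (by
              have h : t.1 ≤ 0 := h0 ▸ ht
              rw [nonpos_iff_eq_zero.1 h]; exact h0.symm)
            simp [this]
          · simp [ind_of_lt ht]
        simp [this]
      · rw [← SetLike.mem_coe]
        rw [← hcl.closure_eq, Metric.mem_closure_iff]
        intro ε hε
        obtain ⟨γ, hγ, hγ2⟩ := small_tail A.1 A.2 b h0 (ε := ε / 4) (by positivity)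
        have hγ' : γ < β := hγ
        refine ⟨⟨A.1.comp (cut α γ), A.2.comp_clm (cut α γ)⟩ +
          rk1 (A.1 (ind α β - ind α γ)) (dl α b),
          W.add_mem (ih γ hγ (hγ'.le.trans hβ) A) (hmem _ _), ?_⟩
        refine lt_of_le_of_lt ?_ (half_lt_self hε)
        rw [dist_eq_norm]
        change ‖A.1.comp (cut α β) - (A.1.comp (cut α γ) +
          (dl α b).smulRight (A.1 (ind α β - ind α γ)))‖ ≤ _
        refine ContinuousLinearMap.opNorm_le_of_unit_norm (by positivity) ?_
        intro f hf
        set g : C(Set.Iic α, ℝ) := (f - f b • 1) * (ind α β - ind α γ) with hg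
        have e1 : (A.1.comp (cut α β) - (A.1.comp (cut α γ) +
          (dl α b).smulRight (A.1 (ind α β - ind α γ)))) f = A.1 g := by
          have : g = f * ind α β - (f * ind α γ + f b • (ind α β - ind α γ)) := by
            ext t
            simp [hg]
            ring
          rw [this]
          simp
        rw [e1]
        have hg1 : ‖g‖ ≤ 2 := by
          rw [ContinuousMap.norm_le _ (by norm_num)]
          intro t
          have a1 := f.norm_coe_le_norm t
          have a2 := f.norm_coe_le_norm b
          rw [hf, Real.norm_eq_abs] at a1 a2
          have a3 : |f t - f b| ≤ 2 := (abs_sub _ _).trans (by linarith)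
          rcases le_or_gt t.1 γ with ht | ht
          · simp [hg, ind_of_le ht, ind_of_le (ht.trans hγ'.le)]
          · rcases le_or_gt t.1 β with ht' | ht'
            · simpa [hg, ind_of_lt ht, ind_of_le ht'] using a3
            · simp [hg, ind_of_lt ht, ind_of_lt ht']
        have h7 := hγ2 ((1 / 2 : ℝ) • g) (by rw [norm_smul]; norm_num; linarith)
          (fun t ht => by simp [hg, ind_of_le ht, ind_of_le (ht.trans hγ'.le)])
          (fun t ht => by
            rcases eq_or_lt_of_le ht with h | h
            · have : t = b := Subtype.ext h.symm
              simp [hg, this]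
            · have h' : β < t.1 := h
              simp [hg, ind_of_lt (hγ'.trans h'), ind_of_lt h'])
        rw [map_smul, norm_smul] at h7
        norm_num at h7
        linarith
  intro A
  have h1 := key α le_rfl A
  have h2 : (⟨A.1.comp (cut α α), A.2.comp_clm (cut α α)⟩ :
      compactOperators ℝ C(Set.Iic α, ℝ)) = A := by
    refine kext fun f => ?_
    have : f * ind α α = f := by
      ext t; simp [ind_of_le (show t.1 ≤ α from t.2)]
    simp [this]
  rw [h2] at h1
  exact h1

end Compact
/-! ### `ℓ¹` does not embed in `C([0,α])` -/
section NoL1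

universe u

/-- the `ℓ¹` norm of a finitely supported sequence -/
noncomputable def n1 (a : ℕ →₀ ℝ) : ℝ := a.sum fun _ x => |x|

lemma n1_smul (c : ℝ) (a : ℕ →₀ ℝ) : n1 (c • a) = |c| * n1 a := by
  unfold n1
  rw [Finsupp.sum_smul_index' (by simp), Finsupp.mul_sum]
  simp [abs_mul]

lemma n1_add {a b : ℕ →₀ ℝ} (h : Disjoint a.support b.support) : n1 (a + b) = n1 a + n1 b :=
  Finsupp.sum_add_index_of_disjoint h _

lemma exists_after (a : ℕ →₀ ℝ) (m : ℕ) : ∃ m', m ≤ m' ∧ ∀ b : ℕ →₀ ℝ,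
    (∀ i ∈ b.support, m' ≤ i) → Disjoint a.support b.support := by
  refine ⟨max m (a.support.sup id + 1), le_max_left _ _, fun b hb => ?_⟩
  rw [Finset.disjoint_left]
  intro i hi hi'
  have h1 := hb i hi'
  have h2 : i ≤ a.support.sup id := Finset.le_sup (f := id) hi
  have := le_max_right m (a.support.sup id + 1)
  omega

variable {α : Ordinal.{u}} (L : (ℕ →₀ ℝ) →ₗ[ℝ] C(Set.Iic α, ℝ))

/-- normalised far away combinations can be made small on `s` -/
def Rp (s : Set (Set.Iic α)) : Prop :=
  ∀ (m : ℕ) (ε : ℝ), 0 < ε → ∃ a : ℕ →₀ ℝ, (∀ i ∈ a.support, m ≤ i) ∧ n1 a = 1 ∧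
    ∀ t ∈ s, |L a t| ≤ ε

lemma Rp.kill {s : Set (Set.Iic α)} (h : Rp L s) (b : Set.Iic α) (m : ℕ) (ε : ℝ) (hε : 0 < ε) :
    ∃ a : ℕ →₀ ℝ, (∀ i ∈ a.support, m ≤ i) ∧ n1 a = 1 ∧ (∀ t ∈ s, |L a t| ≤ ε) ∧ L a b = 0 := by
  obtain ⟨a₁, h1, h2, h3⟩ := h m ε hε
  by_cases hu : L a₁ b = 0
  · exact ⟨a₁, h1, h2, h3, hu⟩
  obtain ⟨m', hm', hd⟩ := exists_after a₁ m
  obtain ⟨a₂, h4, h5, h6⟩ := h m' ε hε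
  set u := L a₁ b with hu'
  set v := L a₂ b with hv'
  have hpos : 0 < |u| + |v| := by positivity
  set d := |u| + |v| with hd'
  have hdis := hd a₂ h4
  refine ⟨(v / d) • a₁ + (-(u / d)) • a₂, ?_, ?_, ?_, ?_⟩
  · intro i hi
    rcases Finset.mem_union.1 (Finsupp.support_add hi) with h | h
    · exact h1 i (Finsupp.support_smul h)
    · exact hm'.trans (h4 i (Finsupp.support_smul h))
  · rw [n1_add (hdis.mono Finsupp.support_smul Finsupp.support_smul), n1_smul, n1_smul, h2, h5,
      abs_neg, abs_div, abs_div, abs_of_pos hpos, mul_one, mul_one, ← add_div, add_comm,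
      div_self hpos.ne']
  · intro t ht
    rw [map_add, map_smul, map_smul, ContinuousMap.add_apply, ContinuousMap.smul_apply,
      ContinuousMap.smul_apply, smul_eq_mul, smul_eq_mul]
    refine (abs_add_le _ _).trans ?_
    rw [abs_mul, abs_mul, abs_neg, abs_div, abs_div, abs_of_pos hpos]
    calc |v| / d * |L a₁ t| + |u| / d * |L a₂ t| ≤ |v| / d * ε + |u| / d * ε := by
          gcongr
          · exact h3 t ht
          · exact h6 t ht
      _ = ε := by field_simp; rw [hd', add_comm]
  · rw [map_add, map_smul, map_smul, ContinuousMap.add_apply, ContinuousMap.smul_apply,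
      ContinuousMap.smul_apply, smul_eq_mul, smul_eq_mul, ← hu', ← hv']
    ring

lemma Rp_Iic (M : ℝ) (hM : 0 ≤ M) (hL : ∀ a t, |L a t| ≤ M * n1 a) :
    ∀ (β : Ordinal.{u}), β ≤ α → Rp L {t | t.1 ≤ β} := by
  intro β
  induction β using WellFoundedLT.induction with
  | ind β ih =>
    intro hβ
    set b : Set.Iic α := ⟨β, hβ⟩ with hb
    by_cases h0 : β = 0
    · have hemp : Rp L ∅ := fun m ε _ => ⟨Finsupp.single m 1, by
        intro i hi
        have := Finsupp.support_single_subset hi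
        simp at this
        omega, by simp [n1], by simp⟩
      intro m ε hε
      obtain ⟨a, h1, h2, -, h3⟩ := hemp.kill L b m ε hε
      refine ⟨a, h1, h2, fun t ht => ?_⟩
      have : t = b := Subtype.ext (by
        have h : t.1 ≤ 0 := h0 ▸ ht
        rw [nonpos_iff_eq_zero.1 h]; exact h0.symm)
      rw [this, h3]
      simpa using hε.le
    · have claim : ∀ (ε : ℝ), 0 < ε → ∀ (N : ℕ) (m : ℕ) (γ : Ordinal.{u}), γ < β →
          ∃ a : ℕ →₀ ℝ, (∀ i ∈ a.support, m ≤ i) ∧ n1 a = N ∧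
            (∀ t : Set.Iic α, t.1 ≤ γ → |L a t| ≤ N * ε) ∧
            (∀ t : Set.Iic α, t.1 ≤ β → |L a t| ≤ N * ε + M) := by
        intro ε hε N
        induction N with
        | zero =>
          intro m γ _
          exact ⟨0, by simp, by simp [n1], by simp, fun t _ => by simpa using hM⟩
        | succ N ihN =>
          intro m γ hγ
          obtain ⟨a, a1, a2, a3, a4⟩ := (ih γ hγ (hγ.le.trans hβ)).kill L b m ε hε
          obtain ⟨γ', hγ', hγγ', hn⟩ := exists_nbhd (L a) b h0 hε γ hγ
          obtain ⟨m', hm', hd⟩ := exists_after a m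
          obtain ⟨c, c1, c2, c3, c4⟩ := ihN m' γ' hγ'
          have hM1 := hL a
          rw [a2, mul_one] at hM1
          refine ⟨a + c, ?_, ?_, ?_, ?_⟩
          · intro i hi
            rcases Finset.mem_union.1 (Finsupp.support_add hi) with h | h
            · exact a1 i h
            · exact hm'.trans (c1 i h)
          · rw [n1_add (hd c c1), a2, c2]; push_cast; ring
          · intro t ht
            rw [map_add, ContinuousMap.add_apply]
            have := abs_add_le (L a t) (L c t)
            have h1 := a3 t ht
            have h2 := c3 t (ht.trans hγγ')
            push_cast
            linarith
          · intro t ht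
            rw [map_add, ContinuousMap.add_apply]
            have := abs_add_le (L a t) (L c t)
            push_cast
            rcases le_or_gt t.1 γ' with h | h
            · have h1 := hM1 t
              have h2 := c3 t h
              linarith
            · have h1 := hn t h ht
              rw [a4, sub_zero] at h1
              have h2 := c4 t ht
              linarith
      intro m ε hε
      obtain ⟨N, hN⟩ := exists_nat_gt (M / (ε / 2))
      rw [div_lt_iff₀ (by positivity)] at hN
      have hN0 : (0:ℝ) < N := by
        by_contra! h
        nlinarith
      obtain ⟨a, a1, a2, -, a4⟩ := claim (ε / 2) (by positivity) N m 0 (pos_iff_ne_zero.2 h0)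
      refine ⟨(N : ℝ)⁻¹ • a, fun i hi => a1 i (Finsupp.support_smul hi), ?_, ?_⟩
      · rw [n1_smul, a2, abs_of_pos (by positivity), inv_mul_cancel₀ hN0.ne']
      · intro t ht
        rw [map_smul, ContinuousMap.smul_apply, smul_eq_mul, abs_mul,
          abs_of_pos (inv_pos.2 hN0), inv_mul_le_iff₀ hN0]
        have := a4 t ht
        linarith

lemma no_l1 (f : ℕ → C(Set.Iic α, ℝ)) (M : ℝ) (hM : 0 ≤ M) (hf : ∀ n, ‖f n‖ ≤ M)
    (ε : ℝ) (hε : 0 < ε) :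
    ∃ a : ℕ →₀ ℝ, n1 a = 1 ∧ ‖Finsupp.linearCombination ℝ f a‖ ≤ ε := by
  have hL : ∀ (a : ℕ →₀ ℝ) (t : Set.Iic α), |Finsupp.linearCombination ℝ f a t| ≤ M * n1 a := by
    intro a t
    refine ((Finsupp.linearCombination ℝ f a).norm_coe_le_norm t).trans ?_
    rw [Finsupp.linearCombination_apply, n1, Finsupp.mul_sum]
    refine (norm_sum_le _ _).trans (Finset.sum_le_sum fun i _ => ?_)
    rw [norm_smul, mul_comm, Real.norm_eq_abs]
    exact mul_le_mul_of_nonneg_right (hf i) (abs_nonneg _)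
  obtain ⟨a, -, h1, h2⟩ := Rp_Iic (Finsupp.linearCombination ℝ f) M hM hL α le_rfl 0 ε hε
  refine ⟨a, h1, ?_⟩
  rw [ContinuousMap.norm_le _ hε.le]
  exact fun t => h2 t t.2

end NoL1
/-! ### Trees of `ℓ¹` sequences -/
section Tree

universe u v

/-- rank of a node in the tree of good sequences -/
def Rk {ι : Type v} (Good : ℕ → (ℕ → ι) → Prop) (ρ : Ordinal.{u}) (n : ℕ) (x : ℕ → ι) : Prop :=
  Good n x ∧ ∀ σ, σ < ρ → ∃ y, Rk Good σ (n + 1) (Function.update x n y)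
termination_by ρ

lemma Rk_iff {ι : Type v} (Good : ℕ → (ℕ → ι) → Prop) (ρ : Ordinal.{u}) (n : ℕ) (x : ℕ → ι) :
    Rk Good ρ n x ↔ Good n x ∧ ∀ σ, σ < ρ → ∃ y, Rk Good σ (n + 1) (Function.update x n y) := by
  rw [Rk]

lemma Rk.anti {ι : Type v} {Good : ℕ → (ℕ → ι) → Prop} {ρ σ : Ordinal.{u}} {n : ℕ} {x : ℕ → ι}
    (h : Rk Good ρ n x) (hσ : σ ≤ ρ) : Rk Good σ n x := by
  rw [Rk_iff] at h ⊢
  exact ⟨h.1, fun τ hτ => h.2 τ (hτ.trans_le hσ)⟩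

lemma Rk.map {ι κ : Type*} {Good : ℕ → (ℕ → ι) → Prop} {Good' : ℕ → (ℕ → κ) → Prop}
    (h : ι → κ) (hg : ∀ n x, Good n x → Good' n (h ∘ x)) (ρ : Ordinal.{u}) :
    ∀ (n : ℕ) (x : ℕ → ι), Rk Good ρ n x → Rk Good' ρ n (h ∘ x) := by
  induction ρ using WellFoundedLT.induction with
  | ind ρ ih =>
    intro n x hx
    rw [Rk_iff] at hx ⊢
    refine ⟨hg n x hx.1, fun σ hσ => ?_⟩
    obtain ⟨y, hy⟩ := hx.2 σ hσ
    refine ⟨h y, ?_⟩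
    rw [← Function.comp_update]
    exact ih σ hσ _ _ hy

lemma Rk.congr {ι : Type v} {Good : ℕ → (ℕ → ι) → Prop}
    (hg : ∀ n x x', (∀ i < n, x i = x' i) → Good n x → Good n x') (ρ : Ordinal.{u}) :
    ∀ (n : ℕ) (x x' : ℕ → ι), (∀ i < n, x i = x' i) → Rk Good ρ n x → Rk Good ρ n x' := by
  induction ρ using WellFoundedLT.induction with
  | ind ρ ih =>
    intro n x x' hxx hx
    rw [Rk_iff] at hx ⊢
    refine ⟨hg n x x' hxx hx.1, fun σ hσ => ?_⟩
    obtain ⟨y, hy⟩ := hx.2 σ hσ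
    refine ⟨y, ih σ hσ _ _ _ (fun i hi => ?_) hy⟩
    by_cases h : i = n
    · subst h; simp
    · rw [Function.update_of_ne h, Function.update_of_ne h]
      exact hxx i (by omega)

lemma exists_sup {lam : Cardinal.{u}} (hlam : ℵ₀ ≤ lam) {ι : Type v}
    (hι : Cardinal.lift.{u} #ι ≤ Cardinal.lift.{v} lam) (f : ι → Ordinal.{u})
    (hf : ∀ i, f i < (Order.succ lam).ord) : ∃ s < (Order.succ lam).ord, ∀ i, f i ≤ s := by
  refine ⟨⨆ i, f i, Ordinal.lift_iSup_lt_of_lt_cof ?_ hf, fun i => ?_⟩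
  · rw [← Ordinal.lift_cof, (isRegular_succ hlam).cof_ord]
    refine hι.trans_lt ?_
    rw [Cardinal.lift_lt]
    exact Order.lt_succ lam
  · exact le_ciSup ⟨(Order.succ lam).ord, by rintro _ ⟨j, rfl⟩; exact (hf j).le⟩ i

lemma exists_branch {lam : Cardinal.{u}} (hlam : ℵ₀ ≤ lam) {ι : Type u} (hι : #ι ≤ lam)
    {Good : ℕ → (ℕ → ι) → Prop} (x₀ : ℕ → ι)
    (h0 : ∀ ρ < (Order.succ lam).ord, Rk Good ρ 0 x₀) :
    ∃ z : ℕ → ι, ∀ n, ∃ x, Good n x ∧ ∀ i < n, x i = z i := by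
  let P : ℕ → (ℕ → ι) → Prop := fun n x => ∀ ρ < (Order.succ lam).ord, Rk Good ρ n x
  have hlim := isSuccLimit_ord (hlam.trans (Order.le_succ lam))
  have step : ∀ n x, P n x → ∃ y, P (n + 1) (Function.update x n y) := by
    intro n x hx
    by_contra! hcon
    simp only [P] at hcon
    push Not at hcon
    choose σ hσ1 hσ2 using hcon
    obtain ⟨s, hs, hle⟩ := exists_sup hlam (by simpa using hι) σ hσ1
    obtain ⟨y, hy⟩ := ((Rk_iff _ _ _ _).1 (hx (Order.succ s) (hlim.succ_lt hs))).2 s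
      (Order.lt_succ s)
    exact hσ2 y (hy.anti (hle y))
  choose Y hY using step
  let st : ∀ n : ℕ, {x : ℕ → ι // P n x} := fun n =>
    Nat.rec ⟨x₀, h0⟩ (fun n x => ⟨Function.update x.1 n (Y n x.1 x.2), hY n x.1 x.2⟩) n
  have hst : ∀ n, (st (n + 1)).1 = Function.update (st n).1 n (Y n (st n).1 (st n).2) :=
    fun n => rfl
  have hpos : 0 < (Order.succ lam).ord := (isRegular_succ hlam).ord_pos
  refine ⟨fun n => (st (n + 1)).1 n, fun n => ⟨(st n).1,
    ((Rk_iff _ _ _ _).1 ((st n).2 0 hpos)).1, ?_⟩⟩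
  induction n with
  | zero => intro i hi; omega
  | succ n ih =>
    intro i hi
    by_cases h : i = n
    · subst h; rfl
    · rw [hst, Function.update_of_ne h]
      exact ih i (by omega)

/-- good sequences: `1`-bounded with a lower `ℓ¹` estimate -/
def GoodX {E : Type*} [NormedAddCommGroup E] [NormedSpace ℝ E] (n : ℕ) (x : ℕ → E) : Prop :=
  (∀ i < n, ‖x i‖ ≤ 1) ∧ ∀ a : ℕ → ℝ,
    ∑ i ∈ Finset.range n, |a i| ≤ ‖∑ i ∈ Finset.range n, a i • x i‖

/-- good sequences with constant `N` -/
def GoodD {E : Type*} [NormedAddCommGroup E] [NormedSpace ℝ E] {κ : Type*} (e : κ → E) (N : ℕ)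
    (n : ℕ) (x : ℕ → κ) : Prop :=
  (∀ i < n, ‖e (x i)‖ ≤ N) ∧ ∀ a : ℕ → ℝ,
    ∑ i ∈ Finset.range n, |a i| ≤ N * ‖∑ i ∈ Finset.range n, a i • e (x i)‖

lemma GoodD.congr {E : Type*} [NormedAddCommGroup E] [NormedSpace ℝ E] {κ : Type*} (e : κ → E)
    (N : ℕ) (n : ℕ) (x x' : ℕ → κ) (h : ∀ i < n, x i = x' i) (hx : GoodD e N n x) :
    GoodD e N n x' := by
  refine ⟨fun i hi => h i hi ▸ hx.1 i hi, fun a => ?_⟩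
  have : ∑ i ∈ Finset.range n, a i • e (x' i) = ∑ i ∈ Finset.range n, a i • e (x i) :=
    Finset.sum_congr rfl fun i hi => by rw [h i (Finset.mem_range.1 hi)]
  rw [this]
  exact hx.2 a

lemma exists_transfer {E F : Type*} [NormedAddCommGroup E] [NormedSpace ℝ E]
    [NormedAddCommGroup F] [NormedSpace ℝ F] (T : E ≃L[ℝ] F) {κ : Type*} (e : κ → F)
    (he : DenseRange e) : ∃ (N : ℕ) (h : E → κ), ∀ n x, GoodX n x → GoodD e N n (h ∘ x) := by
  set T' : E →L[ℝ] F := T.toContinuousLinearMap with hT'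
  set S : F →L[ℝ] E := T.symm.toContinuousLinearMap with hS
  set c := ‖S‖ + 1 with hc
  have hc0 : 0 < c := by positivity
  have hδ : 0 < 1 / (2 * c) := by positivity
  have hd : ∀ x : E, ∃ k, ‖T' x - e k‖ < 1 / (2 * c) := fun x => by
    obtain ⟨k, hk⟩ := he.exists_dist_lt (T' x) hδ
    exact ⟨k, by rwa [dist_eq_norm] at hk⟩
  choose h hh using hd
  obtain ⟨N, hN⟩ := exists_nat_ge (max (2 * c) (‖T'‖ + 1 / (2 * c)))
  have hN1 := (le_max_left _ _).trans hN
  have hN2 := (le_max_right _ _).trans hN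
  refine ⟨N, h, fun n x hx => ⟨fun i hi => ?_, fun a => ?_⟩⟩
  · refine le_trans ?_ hN2
    have h1 : ‖T' (x i)‖ ≤ ‖T'‖ :=
      (T'.le_opNorm _).trans (mul_le_of_le_one_right (norm_nonneg _) (hx.1 i hi))
    have h2 := norm_sub_norm_le (e (h (x i))) (T' (x i))
    rw [norm_sub_rev] at h2
    have h3 := hh (x i)
    simp only [Function.comp]
    linarith
  · set s := ∑ i ∈ Finset.range n, |a i| with hs
    have hs0 : 0 ≤ s := Finset.sum_nonneg fun i _ => abs_nonneg _
    set w := ∑ i ∈ Finset.range n, a i • e ((h ∘ x) i) with hw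
    set z := ∑ i ∈ Finset.range n, a i • T' (x i) with hz
    have h1 : s ≤ c * ‖z‖ := by
      refine (hx.2 a).trans ?_
      have : ∑ i ∈ Finset.range n, a i • x i = S z := by
        rw [hz, map_sum]
        refine Finset.sum_congr rfl fun i _ => ?_
        rw [map_smul]
        simp [hS, hT']
      rw [this]
      refine (S.le_opNorm z).trans ?_
      gcongr
      linarith
    have h2 : ‖z - w‖ ≤ 1 / (2 * c) * s := by
      rw [hz, hw, ← Finset.sum_sub_distrib, hs, Finset.mul_sum]
      refine (norm_sum_le _ _).trans (Finset.sum_le_sum fun i _ => ?_)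
      rw [← smul_sub, norm_smul, Real.norm_eq_abs, mul_comm]
      exact mul_le_mul_of_nonneg_right (hh _).le (abs_nonneg _)
    have h3 : ‖z‖ ≤ ‖w‖ + 1 / (2 * c) * s := by
      have := norm_sub_norm_le z w
      linarith
    have h4 : s ≤ c * ‖w‖ + s / 2 := by
      calc s ≤ c * ‖z‖ := h1
        _ ≤ c * (‖w‖ + 1 / (2 * c) * s) := by gcongr
        _ = c * ‖w‖ + s / 2 := by field_simp
    have h5 : 2 * c * ‖w‖ ≤ N * ‖w‖ := by gcongr
    linarith

/-- sign of a boolean -/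
def sg (b : Bool) : ℝ := if b then 1 else -1

lemma sg_inj {a b : Bool} (h : sg a = sg b) : a = b := by
  cases a <;> cases b <;> simp [sg] at h ⊢ <;> norm_num at h

open Ordinal in
lemma tree (α : Ordinal.{u}) (ρ : Ordinal.{u}) : ∀ (n : ℕ) (x : ℕ → C(Set.Iic α, ℝ)),
    (∀ i < n, ‖x i‖ ≤ 1) →
    (∀ s : ℕ → Bool, ∃ a, a + ω ^ ρ ≤ α ∧ ∀ t : Set.Iic α, a < t.1 → t.1 ≤ a + ω ^ ρ →
      ∀ i < n, x i t = sg (s i)) →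
    Rk GoodX ρ n x := by
  induction ρ using WellFoundedLT.induction with
  | ind ρ ih =>
    intro n x hx hs
    have hpos : ∀ τ : Ordinal.{u}, 0 < ω ^ τ := fun τ => opow_pos τ omega0_pos
    rw [Rk_iff]
    refine ⟨⟨hx, fun a => ?_⟩, fun σ hσ => ?_⟩
    · obtain ⟨c, hc1, hc2⟩ := hs (fun i => decide (0 ≤ a i))
      let t : Set.Iic α := ⟨c + ω ^ ρ, hc1⟩
      have ht := hc2 t (lt_add_of_pos_right _ (hpos ρ)) le_rfl
      refine le_trans ?_ (ContinuousMap.norm_coe_le_norm _ t)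
      rw [ContinuousMap.coe_sum, Finset.sum_apply]
      refine le_trans (le_of_eq ?_) (le_abs_self _)
      refine Finset.sum_congr rfl fun i hi => ?_
      rw [ContinuousMap.smul_apply, ht i (Finset.mem_range.1 hi), _root_.smul_eq_mul]
      rcases le_or_gt 0 (a i) with h | h
      · simp [sg, h, abs_of_nonneg h]
      · simp [sg, not_le.2 h, abs_of_neg h]
    · choose A hA1 hA2 using hs
      have h2 : ω ^ σ + ω ^ σ ≤ ω ^ ρ := by
        have hlt : ω ^ σ < ω ^ ρ := (opow_lt_opow_iff_right one_lt_omega0).2 hσ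
        exact (isPrincipal_add_omega0_opow ρ hlt hlt).le
      have h1 : ω ^ σ ≤ ω ^ ρ := le_self_add.trans h2
      let ex : (Fin n → Bool) → ℕ → Bool := fun p i => if h : i < n then p ⟨i, h⟩ else true
      let U : Set (Set.Iic α) := ⋃ p : Fin n → Bool,
        {t | t.1 ≤ A (ex p) + ω ^ σ} \ {t | t.1 ≤ A (ex p)}
      have hU : IsClopen U := isClopen_iUnion_of_finite fun p =>
        (isClopen_le α _).diff (isClopen_le α _)
      let y : C(Set.Iic α, ℝ) := ⟨fun t => 2 * U.indicator (fun _ => (1:ℝ)) t - 1,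
        (continuous_const.mul (hU.continuous_indicator continuous_const)).sub continuous_const⟩
      have hy1 : ∀ t ∈ U, y t = 1 := fun t ht => by
        change 2 * U.indicator (fun _ => (1:ℝ)) t - 1 = 1
        rw [Set.indicator_of_mem ht]; norm_num
      have hy2 : ∀ t, t ∉ U → y t = -1 := fun t ht => by
        change 2 * U.indicator (fun _ => (1:ℝ)) t - 1 = -1
        rw [Set.indicator_of_notMem ht]; norm_num
      refine ⟨y, ih σ hσ _ _ ?_ ?_⟩
      · intro i hi
        by_cases h : i = n
        · subst h
          rw [Function.update_self, ContinuousMap.norm_le _ zero_le_one]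
          intro t
          by_cases ht : t ∈ U
          · simp [hy1 t ht]
          · simp [hy2 t ht]
        · rw [Function.update_of_ne h]
          exact hx i (by omega)
      · intro s
        set p : Fin n → Bool := fun i => s i with hp
        have hex : ∀ i < n, ex p i = s i := fun i hi => by simp [ex, hi, hp]
        -- reduction to the last coordinate
        have red : ∀ c, A (ex p) ≤ c → c + ω ^ σ ≤ A (ex p) + ω ^ ρ →
            (∀ t : Set.Iic α, c < t.1 → t.1 ≤ c + ω ^ σ → y t = sg (s n)) →
            ∃ a, a + ω ^ σ ≤ α ∧ ∀ t : Set.Iic α, a < t.1 → t.1 ≤ a + ω ^ σ →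
              ∀ i < n + 1, Function.update x n y i t = sg (s i) := by
          intro c hc1 hc2 hc3
          refine ⟨c, hc2.trans (hA1 _), fun t ht1 ht2 i hi => ?_⟩
          by_cases h : i = n
          · subst h
            rw [Function.update_self]
            exact hc3 t ht1 ht2
          · have hi' : i < n := by omega
            rw [Function.update_of_ne h, ← hex i hi']
            exact hA2 (ex p) t (hc1.trans_lt ht1) (ht2.trans hc2) i hi'
        cases hsn : s n
        · refine red (A (ex p) + ω ^ σ) le_self_add ?_ ?_
          · rw [add_assoc]
            gcongr
          · intro t ht1 ht2
            rw [hy2 t, hsn]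
            · simp [sg]
            · intro htU
              obtain ⟨p', hp1, hp2⟩ := Set.mem_iUnion.1 htU
              have hp1' : t.1 ≤ A (ex p') + ω ^ σ := hp1
              have hp2' : A (ex p') < t.1 := not_le.1 hp2
              have e1 := hA2 (ex p') t hp2' (hp1'.trans (by gcongr))
              have e2 := hA2 (ex p) t (le_self_add.trans_lt ht1) (ht2.trans (by
                rw [add_assoc]; gcongr))
              have : p' = p := by
                funext i
                have := sg_inj ((e1 i i.2).symm.trans (e2 i i.2))
                simpa [ex] using this
              rw [this] at hp1'
              exact absurd hp1' (not_le.2 ht1)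
        · refine red (A (ex p)) le_rfl (by gcongr) ?_
          intro t ht1 ht2
          rw [hy1 t, hsn]
          · simp [sg]
          · exact Set.mem_iUnion.2 ⟨p, ht2, not_le.2 ht1⟩

end Tree
/-! ### Counting -/
section Counting

universe u

lemma card_le_of_lt_succ {lam : Cardinal.{u}} {α : Ordinal.{u}} (h : α < (Order.succ lam).ord) :
    α.card ≤ lam := by
  rw [Cardinal.lt_ord, Order.lt_succ_iff] at h
  exact h

lemma lt_succ_of_card_le {lam : Cardinal.{u}} {α : Ordinal.{u}} (h : α.card ≤ lam) :
    α < (Order.succ lam).ord := by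
  rw [Cardinal.lt_ord, Order.lt_succ_iff]
  exact h

/-- `[0,α]` is indexed by a type in the right universe -/
lemma exists_index {lam : Cardinal.{u}} (hlam : ℵ₀ ≤ lam) {α : Ordinal.{u}}
    (h : α < (Order.succ lam).ord) :
    ∃ (ι : Type u) (_ : ι ≃ Set.Iic α), #ι ≤ lam := by
  have hlim := isSuccLimit_ord (hlam.trans (Order.le_succ lam))
  have h1 : #(Set.Iic α) = Cardinal.lift.{u + 1} (Order.succ α).card := by
    rw [← Cardinal.mk_Iio_ordinal]
    have : Set.Iic α = Set.Iio (Order.succ α) := by ext t; simp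
    rw [this]
  have h2 : Cardinal.lift.{u + 1} #((Order.succ α).card.out) = Cardinal.lift.{u} #(Set.Iic α) := by
    rw [h1, Cardinal.mk_out]
    simp
  obtain ⟨e⟩ := Cardinal.lift_mk_eq'.1 h2
  refine ⟨_, e, ?_⟩
  rw [Cardinal.mk_out]
  exact card_le_of_lt_succ (hlim.succ_lt h)

lemma exists_dense_index {lam : Cardinal.{u}} (hlam : ℵ₀ ≤ lam) {α : Ordinal.{u}}
    (h : α < (Order.succ lam).ord) :
    ∃ (κ : Type u) (e : κ → C(Set.Iic α, ℝ)), #κ ≤ lam ∧ DenseRange e := by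
  obtain ⟨ι, e, hι⟩ := exists_index hlam h
  refine exists_dense_of_span lam hlam hι (fun i => ind α (e i).1) ?_
  have hr : Set.range (fun i => ind α (e i).1) = Set.range (fun γ : Set.Iic α => ind α γ.1) :=
    e.surjective.range_comp (fun γ : Set.Iic α => ind α γ.1)
  rw [hr]
  exact span_ind_dense α

lemma exists_dense_index_K {lam : Cardinal.{u}} (hlam : ℵ₀ ≤ lam) {α : Ordinal.{u}}
    (h : α < (Order.succ lam).ord) :
    ∃ (κ : Type u) (e : κ → compactOperators ℝ C(Set.Iic α, ℝ)), #κ ≤ lam ∧ DenseRange e := by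
  obtain ⟨ι, e, hι⟩ := exists_index hlam h
  have hι2 : #(ι × ι) ≤ lam := by
    rw [Cardinal.mk_prod, Cardinal.lift_id]
    exact (mul_le_mul' hι hι).trans (Cardinal.mul_eq_self hlam).le
  refine exists_dense_of_span lam hlam hι2
    (fun i : ι × ι => rk1 (ind α (e i.1).1) (dl α (e i.2))) ?_
  have hr : Set.range (fun i : ι × ι => rk1 (ind α (e i.1).1) (dl α (e i.2))) =
      Set.range (fun p : Set.Iic α × Set.Iic α => rk1 (ind α p.1.1) (dl α p.2)) :=
    (e.prodCongr e).surjective.range_comp (fun p : Set.Iic α × Set.Iic α =>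
      rk1 (ind α p.1.1) (dl α p.2))
  rw [hr]
  exact span_rk1_dense α

lemma part_one (lam : Cardinal.{u}) (hlam : ℵ₀ ≤ lam) (α : Ordinal.{u}) (h1 : lam.ord ≤ α)
    (h2 : α < (Order.succ lam).ord) :
    ∃ D : Set (compactOperators ℝ C(Set.Iic α, ℝ)),
      Dense D ∧ #D = Cardinal.lift.{u + 1} lam := by
  obtain ⟨κ, e, hκ, he⟩ := exists_dense_index_K hlam h2
  -- `lam` many distinct operators
  let F : Set.Iio lam.ord → compactOperators ℝ C(Set.Iic α, ℝ) := fun c =>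
    rk1 1 (dl α ⟨c.1, (show c.1 < lam.ord from c.2).le.trans h1⟩)
  have hF : Function.Injective F := by
    have : ∀ c d : Set.Iio lam.ord, F c = F d → c.1 ≤ d.1 := by
      intro c d hcd
      by_contra! hlt
      have h3 := congrArg (fun A : compactOperators ℝ C(Set.Iic α, ℝ) => A.1 (ind α d.1)
        ⟨0, show (0 : Ordinal.{u}) ≤ α from zero_le⟩) hcd
      simp only [F, rk1_apply, dl_apply, ContinuousMap.smul_apply, ContinuousMap.one_apply,
        smul_eq_mul, mul_one] at h3
      rw [ind_of_lt hlt] at h3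
      have e1 : ind α d.1 ⟨d.1, (show d.1 < lam.ord from d.2).le.trans h1⟩ = 1 :=
        ind_of_le (le_refl d.1)
      exact zero_ne_one (h3.trans e1)
    intro c d hcd
    exact Subtype.ext (le_antisymm (this c d hcd) (this d c hcd.symm))
  refine ⟨Set.range e ∪ Set.range F, he.mono Set.subset_union_left, le_antisymm ?_ ?_⟩
  · refine (Cardinal.mk_union_le _ _).trans ?_
    have hl : ℵ₀ ≤ Cardinal.lift.{u + 1} lam := by simpa using hlam
    have hx : #(Set.range e) ≤ Cardinal.lift.{u + 1} lam := by
      have := Cardinal.mk_range_le_lift (f := e)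
      rw [Cardinal.lift_id'.{u, u + 1}] at this
      exact this.trans (Cardinal.lift_le.2 hκ)
    have hy : #(Set.range F) ≤ Cardinal.lift.{u + 1} lam := by
      refine Cardinal.mk_range_le.trans ?_
      rw [Cardinal.mk_Iio_ordinal, Cardinal.card_ord]
    exact (add_le_add hx hy).trans (Cardinal.add_eq_self hl).le
  · calc Cardinal.lift.{u + 1} lam = #(Set.Iio lam.ord) := by
          rw [Cardinal.mk_Iio_ordinal, Cardinal.card_ord]
      _ = #(Set.range F) := (Cardinal.mk_range_eq F hF).symm
      _ ≤ _ := Cardinal.mk_le_mk_of_subset Set.subset_union_right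

open Ordinal in
lemma class_bdd (lam : Cardinal.{u}) (hlam : ℵ₀ ≤ lam) (α : Ordinal.{u})
    (hα : α < (Order.succ lam).ord) :
    ∃ γ < (Order.succ lam).ord, ∀ β, β < (Order.succ lam).ord →
      Nonempty (C(Set.Iic β, ℝ) ≃L[ℝ] C(Set.Iic α, ℝ)) → β < γ := by
  by_contra! hcon
  obtain ⟨κ, e, hκ, he⟩ := exists_dense_index hlam hα
  obtain ⟨k₀, -⟩ := he.exists_dist_lt 0 one_pos
  have h1 : ∀ ρ < (Order.succ lam).ord, ∃ N : ℕ, Rk (GoodD e N) ρ 0 (fun _ => k₀) := by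
    intro ρ hρ
    have hω : ω ^ ρ < (Order.succ lam).ord := by
      apply lt_succ_of_card_le
      refine (card_opow_le _ _).trans ?_
      simp [hlam, card_le_of_lt_succ hρ]
    obtain ⟨β, hβ, ⟨T⟩, hle⟩ := hcon _ hω
    obtain ⟨N, h, hh⟩ := exists_transfer T e he
    refine ⟨N, ?_⟩
    have h2 : Rk GoodX ρ 0 (fun _ => (0 : C(Set.Iic β, ℝ))) :=
      tree β ρ 0 _ (fun i hi => by omega) (fun s => ⟨0, by simpa using hle, fun t _ _ i hi => by
        omega⟩)
    exact Rk.congr (GoodD.congr e N) ρ 0 _ _ (fun i hi => by omega) (Rk.map h hh ρ 0 _ h2)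
  obtain ⟨N, hN⟩ : ∃ N : ℕ, ∀ ρ < (Order.succ lam).ord, Rk (GoodD e N) ρ 0 (fun _ => k₀) := by
    by_contra! hno
    choose σ hσ1 hσ2 using hno
    obtain ⟨s, hs, hle⟩ := exists_sup hlam (by simpa using hlam) σ hσ1
    obtain ⟨N, hN⟩ := h1 s hs
    exact hσ2 N (hN.anti (hle N))
  obtain ⟨z, hz⟩ := exists_branch hlam hκ _ hN
  have hz' : ∀ n, GoodD e N n z := fun n => by
    obtain ⟨x, hx, hxz⟩ := hz n
    exact GoodD.congr e N n x z hxz hx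
  obtain ⟨a, ha1, ha2⟩ := no_l1 (fun i => e (z i)) N (Nat.cast_nonneg _)
    (fun i => (hz' (i + 1)).1 i (Nat.lt_succ_self i)) (1 / (2 * (N + 1))) (by positivity)
  have hsub : a.support ⊆ Finset.range (a.support.sup id + 1) := fun i hi => by
    have : i ≤ a.support.sup id := Finset.le_sup (f := id) hi
    simp only [Finset.mem_range]
    omega
  have h3 := (hz' (a.support.sup id + 1)).2 a
  rw [n1, Finsupp.sum_of_support_subset a hsub _ (by simp)] at ha1
  rw [Finsupp.linearCombination_apply, Finsupp.sum_of_support_subset a hsub _ (by simp)] at ha2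
  rw [ha1] at h3
  have h4 : (N : ℝ) * ‖∑ i ∈ Finset.range (a.support.sup id + 1), a i • e (z i)‖ ≤
      N * (1 / (2 * (N + 1))) := by gcongr
  have h5 : (N : ℝ) * (1 / (2 * (N + 1))) < 1 := by
    rw [mul_one_div, div_lt_one (by positivity)]
    have : (0:ℝ) ≤ N := Nat.cast_nonneg _
    linarith
  linarith

lemma part_two (lam : Cardinal.{u}) (hlam : ℵ₀ ≤ lam) :
    #(Quotient (ringIsoSetoid lam)) = Cardinal.lift.{u + 1} (Order.succ lam) := by
  have hlim := isSuccLimit_ord (hlam.trans (Order.le_succ lam))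
  apply le_antisymm
  · refine Cardinal.mk_quotient_le.trans ?_
    calc _ ≤ #(Set.Iio (Order.succ lam).ord) :=
          Cardinal.mk_le_of_injective (f := fun a => ⟨a.1, a.2.2⟩) (fun a b h => by
            simpa [Subtype.ext_iff] using h)
      _ = _ := by rw [Cardinal.mk_Iio_ordinal, Cardinal.card_ord]
  · by_contra! hlt
    have hle : #(Quotient (ringIsoSetoid lam)) ≤ Cardinal.lift.{u + 1} lam := by
      rwa [Cardinal.lift_succ, Order.lt_succ_iff] at hlt
    have hb : ∀ q : Quotient (ringIsoSetoid lam), ∃ γ < (Order.succ lam).ord,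
        ∀ a, Quotient.mk (ringIsoSetoid lam) a = q → a.1 < γ := by
      intro q
      obtain ⟨b, rfl⟩ := Quotient.exists_rep q
      obtain ⟨γ, hγ, h⟩ := class_bdd lam hlam b.1 b.2.2
      refine ⟨γ, hγ, fun a hab => h a.1 a.2.2 ?_⟩
      obtain ⟨φ⟩ : Nonempty ((compactOperators ℝ C(Set.Iic a.1, ℝ)) ≃+*
        (compactOperators ℝ C(Set.Iic b.1, ℝ))) := Quotient.exact hab
      haveI : Nonempty (Set.Iic a.1) := ⟨⟨a.1, Set.mem_Iic.2 le_rfl⟩⟩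
      exact eidelheit φ
    choose γ hγ1 hγ2 using hb
    obtain ⟨s, hs, hsle⟩ := exists_sup hlam ((Cardinal.lift_id'.{u, u + 1} _).le.trans hle) γ hγ1
    have hlam' : lam.ord < (Order.succ lam).ord := Cardinal.ord_lt_ord.2 (Order.lt_succ lam)
    let a : {α : Ordinal.{u} // lam.ord ≤ α ∧ α < (Order.succ lam).ord} :=
      ⟨max lam.ord s, le_max_left _ _, max_lt hlam' hs⟩
    have h1 := hγ2 (Quotient.mk _ a) a rfl
    have h2 : s ≤ a.1 := le_max_right _ _
    exact absurd (h2.trans_lt h1) (not_lt.2 (hsle _))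

end Counting

end KOrd

/-- Let `λ` be an infinite cardinal. For every ordinal `α` with `λ ≤ α < λ⁺`, the space
`K(C([0,α], ℝ))` of compact operators on `C([0,α], ℝ)` has a dense subset of cardinality `λ`;
moreover, the set of ordinals in `[λ, λ⁺)`, considered up to the equivalence identifying `α`
and `β` whenever the rings `K(C([0,α], ℝ))` and `K(C([0,β], ℝ))` are isomorphic as rings, has
exactly `λ⁺` equivalence classes. -/
theorem statement10 (lam : Cardinal.{u}) (hlam : Cardinal.aleph0 ≤ lam) :
    (∀ α : Ordinal.{u}, lam.ord ≤ α → α < (Order.succ lam).ord →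
      ∃ D : Set (compactOperators ℝ C(Set.Iic α, ℝ)),
        Dense D ∧ #D = Cardinal.lift.{u + 1} lam) ∧
    #(Quotient (ringIsoSetoid lam)) = Cardinal.lift.{u + 1} (Order.succ lam) := by
  exact ⟨fun α h1 h2 => KOrd.part_one lam hlam α h1 h2, KOrd.part_two lam hlam⟩
end

section
/- For every infinite cardinal κ there exists a family (X_i)_{i ∈ I} of compact Hausdorff topological spaces with |I| = 2^κ such that each Banach algebra C(X_i,ℝ) has a dense subset of cardinality κ, and for distinct i, j ∈ I the rings C(X_i,ℝ) and C(X_j,ℝ) are not isomorphic as rings. -/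
open Cardinal

namespace S12

open Topology Filter

/-- Every ring homomorphism `C(X,ℝ) → ℝ` is evaluation at a point. -/
theorem ringHom_eval {X : Type*} [TopologicalSpace X] [CompactSpace X] [T2Space X]
    (χ : C(X, ℝ) →+* ℝ) : ∃ x : X, ∀ g, χ g = g x := by
  have h1 : ∀ r : ℝ, χ (algebraMap ℝ C(X, ℝ) r) = r := by
    intro r
    have : (χ.comp (algebraMap ℝ C(X, ℝ))) = RingHom.id ℝ := Subsingleton.elim _ _
    exact congrArg (fun f : ℝ →+* ℝ => f r) this
  let ψ : C(X, ℝ) →ₐ[ℝ] ℝ := { χ with commutes' := h1 }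
  obtain ⟨x, hx⟩ := (WeakDual.CharacterSpace.continuousMapEval_bijective X ℝ).2
    (WeakDual.CharacterSpace.equivAlgHom.symm ψ)
  refine ⟨x, fun g => ?_⟩
  have := congrArg (fun c => c g) hx
  exact this.symm

theorem ringHom_comp {X Y : Type*} [TopologicalSpace X] [CompactSpace X] [T2Space X]
    [TopologicalSpace Y] (φ : C(X, ℝ) →+* C(Y, ℝ)) :
    ∃ f : Y → X, Continuous f ∧ ∀ g y, φ g y = g (f y) := by
  have h : ∀ y : Y, ∃ x : X, ∀ g, φ g y = g x := fun y =>
    ringHom_eval ((ContinuousMap.evalAlgHom ℝ ℝ y : C(Y, ℝ) →ₐ[ℝ] ℝ).toRingHom.comp φ)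
  choose f hf using h
  refine ⟨f, ?_, fun g y => hf y g⟩
  rw [continuous_iff_continuousAt]
  intro y U hU
  obtain ⟨V, hVU, hV, hyV⟩ := mem_nhds_iff.1 hU
  obtain ⟨g, hg0, hg1, -⟩ := exists_continuous_zero_one_of_isClosed hV.isClosed_compl
    (isClosed_singleton (x := f y)) (by simpa using hyV)
  have ho : IsOpen {z | φ g z ≠ 0} := isOpen_ne.preimage (φ g).continuous
  rw [Filter.mem_map]
  refine mem_of_superset (ho.mem_nhds ?_) ?_
  · have := hg1 (Set.mem_singleton _)
    simp [hf, this]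
  · intro z hz
    apply hVU
    by_contra hc
    exact hz (by rw [hf]; exact hg0 hc)

theorem homeo_of_ringEquiv {X Y : Type*} [TopologicalSpace X] [CompactSpace X] [T2Space X]
    [TopologicalSpace Y] [CompactSpace Y] [T2Space Y] (φ : C(X, ℝ) ≃+* C(Y, ℝ)) :
    Nonempty (X ≃ₜ Y) := by
  obtain ⟨f, hfc, hf⟩ := ringHom_comp φ.toRingHom
  obtain ⟨k, hkc, hk⟩ := ringHom_comp φ.symm.toRingHom
  have sep : ∀ {Z : Type _} [TopologicalSpace Z] [CompactSpace Z] [T2Space Z] (a b : Z),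
      (∀ g : C(Z, ℝ), g a = g b) → a = b := by
    intro Z _ _ _ a b h
    apply (WeakDual.CharacterSpace.continuousMapEval_bijective Z ℝ).1
    ext g
    exact h g
  have sep' : ∀ {Z : Type _} [TopologicalSpace Z] [CompactSpace Z] [T2Space Z] (a b : Z),
      (∀ g : C(Z, ℝ), g a = g b) → a = b := by
    intro Z _ _ _ a b h
    apply (WeakDual.CharacterSpace.continuousMapEval_bijective Z ℝ).1
    ext g
    exact h g
  refine ⟨⟨⟨k, f, fun x => sep _ _ fun g => ?_, fun y => sep' _ _ fun g => ?_⟩, hkc, hfc⟩⟩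
  · rw [← hf, ← hk]; simp
  · rw [← hk, ← hf]; simp

/-- Stone-Weierstrass with cardinality. -/
theorem dense_card {X : Type u} [TopologicalSpace X] [CompactSpace X] [T2Space X]
    (G : Set C(X, ℝ)) (κ : Cardinal.{u}) (hκ : ℵ₀ ≤ κ) (hG : #G = κ)
    (hsep : ∀ x y : X, x ≠ y → ∃ g ∈ G, g x ≠ g y) :
    ∃ D : Set C(X, ℝ), Dense D ∧ #D = κ := by
  refine ⟨(Algebra.adjoin ℚ G : Subalgebra ℚ C(X, ℝ)), ?_, ?_⟩
  · set S := (Algebra.adjoin ℚ G : Subalgebra ℚ C(X, ℝ)) with hS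
    have hc : ∀ r : ℝ, algebraMap ℝ C(X, ℝ) r ∈ S.toSubring.topologicalClosure := by
      intro r
      have h1 : r ∈ closure (Set.range ((↑) : ℚ → ℝ)) := Rat.denseRange_cast r
      have h2 := image_closure_subset_closure_image
        (f := (algebraMap ℝ C(X, ℝ))) (s := Set.range ((↑) : ℚ → ℝ))
        (by exact continuous_algebraMap ℝ C(X, ℝ)) (Set.mem_image_of_mem _ h1)
      refine closure_mono ?_ h2
      rintro _ ⟨_, ⟨q, rfl⟩, rfl⟩
      have : algebraMap ℝ C(X, ℝ) (q : ℝ) = algebraMap ℚ C(X, ℝ) q := by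
        ext x; simp
      rw [this]
      exact S.algebraMap_mem q
    let B : Subalgebra ℝ C(X, ℝ) :=
      { S.toSubring.topologicalClosure with algebraMap_mem' := hc }
    have hB : B.topologicalClosure = ⊤ := by
      apply ContinuousMap.subalgebra_topologicalClosure_eq_top_of_separatesPoints
      intro x y hxy
      obtain ⟨g, hg, hne⟩ := hsep x y hxy
      exact ⟨g, ⟨g, subset_closure (Algebra.subset_adjoin hg), rfl⟩, hne⟩
    intro f
    have hf : f ∈ B.topologicalClosure := by rw [hB]; trivial
    have hf' : f ∈ closure (closure (S : Set C(X, ℝ))) := hf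
    rwa [closure_closure] at hf'
  · apply le_antisymm
    · have := Algebra.lift_cardinalMk_adjoin_le ℚ G
      simp only [lift_id, lift_uzero, hG] at this
      refine this.trans ?_
      simp [hκ]
    · rw [← hG]
      exact Cardinal.mk_le_mk_of_subset Algebra.subset_adjoin

/-! ### The tree -/

variable {K : Type u} [LinearOrder K]

/-- Nodes: lists with strictly increasing first coordinates (the newest entry is the head). -/
def T (K : Type u) [LinearOrder K] : Type u :=
  {l : List (K × ℕ) // l.Pairwise (fun a b => a.1 < b.1)}

/-- `s` lies below `t`. -/
def below (s t : T K) : Prop := t.1 <:+ s.1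

theorem below_refl (s : T K) : below s s := List.suffix_refl _

theorem below_trans {s t r : T K} (h : below s t) (hprime : below t r) : below s r :=
  List.IsSuffix.trans hprime h

theorem below_antisymm {s t : T K} (h : below s t) (hprime : below t s) : s = t :=
  Subtype.ext (List.IsSuffix.eq_of_length_le hprime (List.IsSuffix.length_le h))

theorem below_total {s t r : T K} (h : below s t) (hprime : below s r) : below t r ∨ below r t :=
  (List.suffix_or_suffix_of_suffix h hprime).symm

/-- the root -/
def root : T K := ⟨[], List.Pairwise.nil⟩

theorem below_root (s : T K) : below s root := List.nil_suffix

def lrank : List (K × ℕ) → WithTop K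
  | [] => ⊤
  | a :: _ => (a.1 : WithTop K)

def rank (t : T K) : WithTop K := lrank t.1

theorem rank_lt {s t : T K} (h : below s t) (hne : s ≠ t) : rank s < rank t := by
  obtain ⟨s, hs⟩ := s
  obtain ⟨t, ht⟩ := t
  obtain ⟨u, hu⟩ := h
  simp only at hu
  subst hu
  cases u with
  | nil => exact absurd rfl hne
  | cons a u =>
    cases t with
    | nil => exact WithTop.coe_lt_top _
    | cons b t =>
      simp only [List.cons_append, List.pairwise_cons] at hs
      exact WithTop.coe_lt_coe.2 (hs.1 b (by simp))

open Classical in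
/-- embedding into the Cantor cube -/
noncomputable def emb (s : T K) : T K → Bool := fun t => decide (below s t)

theorem emb_true {s t : T K} : emb s t = true ↔ below s t := by simp [emb]

noncomputable instance : TopologicalSpace (T K) := TopologicalSpace.induced emb inferInstance

theorem emb_inj : Function.Injective (emb : T K → _) := by
  intro s t h
  apply below_antisymm
  · rw [← emb_true, h, emb_true]; exact below_refl _
  · rw [← emb_true, ← h, emb_true]; exact below_refl _

theorem emb_isEmbedding : IsEmbedding (emb : T K → _) := ⟨⟨rfl⟩, emb_inj⟩

instance : T2Space (T K) := emb_isEmbedding.t2Space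

instance : TotallyDisconnectedSpace (T K) :=
  ⟨fun s _ hs => by
    have := (hs.image emb emb_isEmbedding.continuous.continuousOn).subsingleton
    exact fun a ha b hb => emb_inj (this ⟨a, ha, rfl⟩ ⟨b, hb, rfl⟩)⟩

theorem emb_range [WellFoundedLT K] : IsClosed (Set.range (emb : T K → _)) := by
  have key : Set.range (emb : T K → _) =
      {f | f root = true} ∩ (⋂ (s : T K) (t : T K), {f | f s = true → f t = true → below s t ∨ below t s})
      ∩ (⋂ (s : T K) (t : T K), {f | below s t → f s = true → f t = true}) := by
    apply Set.Subset.antisymm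
    · rintro _ ⟨r, rfl⟩
      simp only [Set.mem_inter_iff, Set.mem_iInter, Set.mem_ofPred_eq, emb_true]
      exact ⟨⟨below_root _, fun s t h hprime => below_total h hprime⟩, fun s t h hprime => below_trans hprime h⟩
    · intro f hf
      simp only [Set.mem_inter_iff, Set.mem_iInter, Set.mem_ofPred_eq] at hf
      obtain ⟨⟨h0, h1⟩, h2⟩ := hf
      have wf : WellFounded (fun s t : T K => rank s < rank t) :=
        InvImage.wf rank (wellFounded_lt (α := WithTop K))
      obtain ⟨m, hm, hmin⟩ := wf.has_min {t | f t = true} ⟨root, h0⟩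
      refine ⟨m, funext fun t => Bool.eq_iff_iff.2 ?_⟩
      rw [emb_true]
      refine ⟨fun h => h2 _ _ h hm, fun h => ?_⟩
      rcases h1 _ _ hm h with hprime | hprime
      · exact hprime
      · by_cases e : t = m
        · subst e; exact below_refl _
        · exact absurd (rank_lt hprime e) (hmin t h)
  rw [key]
  refine IsClosed.inter (IsClosed.inter ?_ ?_) ?_
  · exact (isClosed_discrete {true}).preimage
      (continuous_apply root : Continuous fun f : T K → Bool => f root)
  · refine isClosed_iInter fun s => isClosed_iInter fun t => ?_
    exact (isClosed_discrete {p : Bool × Bool | p.1 = true → p.2 = true → below s t ∨ below t s}).preimage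
      ((continuous_apply s).prodMk (continuous_apply t) :
        Continuous fun f : T K → Bool => (f s, f t))
  · refine isClosed_iInter fun s => isClosed_iInter fun t => ?_
    exact (isClosed_discrete {p : Bool × Bool | below s t → p.1 = true → p.2 = true}).preimage
      ((continuous_apply s).prodMk (continuous_apply t) :
        Continuous fun f : T K → Bool => (f s, f t))

instance [WellFoundedLT K] : CompactSpace (T K) :=
  (IsClosedEmbedding.mk emb_isEmbedding emb_range).compactSpace

theorem isClopen_cone (t : T K) : IsClopen {s : T K | below s t} := by
  have : {s : T K | below s t} = (fun s => emb s t) ⁻¹' {true} := by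
    ext s; simp [emb_true]
  rw [this]
  exact (isClopen_discrete _).preimage ((continuous_apply t).comp emb_isEmbedding.continuous)

/-- child -/
def child (t : T K) (β : K) (h : (β : WithTop K) < rank t) (n : ℕ) : T K :=
  ⟨(β, n) :: t.1, by
    obtain ⟨t, ht⟩ := t
    cases t with
    | nil => simp
    | cons b t =>
      have hb : β < b.1 := WithTop.coe_lt_coe.1 h
      refine List.pairwise_cons.2 ⟨?_, ht⟩
      intro c hc
      rcases List.mem_cons.1 hc with rfl | hc
      · exact hb
      · exact hb.trans ((List.pairwise_cons.1 ht).1 c hc)⟩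

theorem child_tendsto (t : T K) (β : K) (h : (β : WithTop K) < rank t) :
    Tendsto (fun n => child t β h (n + 1)) atTop (𝓝 t) := by
  rw [emb_isEmbedding.tendsto_nhds_iff, tendsto_pi_nhds]
  intro c
  rw [nhds_discrete, tendsto_pure]
  by_cases hc : below t c
  · refine Eventually.of_forall fun n => ?_
    have : below (child t β h (n + 1)) c := List.IsSuffix.trans hc (List.suffix_cons _ _)
    exact (emb_true.2 this).trans (emb_true.2 hc).symm
  · have h2 : ∀ n, below (child t β h (n + 1)) c → c.1 = (β, n + 1) :: t.1 := by
      intro n hn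
      rcases List.suffix_cons_iff.1 hn with hprime | hprime
      · exact hprime
      · exact absurd hprime hc
    have h3 : ∃ N, ∀ n ≥ N, ¬ below (child t β h (n + 1)) c := by
      by_cases hN : ∃ N, below (child t β h (N + 1)) c
      · obtain ⟨N, hN⟩ := hN
        refine ⟨N + 1, fun n hn hb => ?_⟩
        have e := (h2 N hN).symm.trans (h2 n hb)
        simp only [List.cons.injEq, Prod.mk.injEq, and_true, true_and] at e
        omega
      · push Not at hN
        exact ⟨0, fun n _ => hN n⟩
    obtain ⟨N, hN⟩ := h3
    filter_upwards [eventually_ge_atTop N] with n hn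
    rw [Bool.eq_iff_iff, Function.comp_apply, emb_true, emb_true]
    exact iff_of_false (hN n hn) hc

/-- marked nodes -/
def node (α : K) : T K := ⟨[(α, 0)], by simp⟩

def M (A : Set K) : Set (T K) := {t | t = root ∨ ∃ α ∈ A, t = node α}

theorem isClosed_M (A : Set K) : IsClosed (M A) := by
  rw [← isOpen_compl_iff, isOpen_iff_mem_nhds]
  intro t ht
  refine mem_of_superset ((isClopen_cone t).isOpen.mem_nhds (below_refl t)) ?_
  rintro s hs (rfl | ⟨α, hα, rfl⟩)
  · exact ht (Or.inl (below_antisymm (below_root _) hs))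
  · rcases List.suffix_cons_iff.1 hs with hprime | hprime
    · exact ht (Or.inr ⟨α, hα, Subtype.ext hprime⟩)
    · exact ht (Or.inl (Subtype.ext (List.suffix_nil.1 hprime)))

/-- The space. -/
def Y (A : Set K) : Set (T K × unitInterval) := {p | p.2 = 0 ∨ p.1 ∈ M A}

theorem isClosed_Y (A : Set K) : IsClosed (Y A) :=
  ((isClosed_singleton (x := (0 : unitInterval))).preimage continuous_snd).union
    ((isClosed_M A).preimage continuous_fst)

instance [WellFoundedLT K] (A : Set K) : CompactSpace (Y A) :=
  isCompact_iff_compactSpace.1 (isClosed_Y A).isCompact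

/-- trivial component -/
def Good {Z : Type*} [TopologicalSpace Z] (z : Z) : Prop :=
  ∀ S : Set Z, IsPreconnected S → z ∈ S → S.Subsingleton

theorem Good.map {Z W : Type*} [TopologicalSpace Z] [TopologicalSpace W] (f : Z ≃ₜ W) {z : Z}
    (h : Good z) : Good (f z) := by
  intro S hS hz a ha b hb
  have := h (f.symm '' S) (hS.image _ f.symm.continuous.continuousOn) ⟨_, hz, by simp⟩
    ⟨a, ha, rfl⟩ ⟨b, hb, rfl⟩
  exact f.symm.injective this

theorem good_iff {Z W : Type*} [TopologicalSpace Z] [TopologicalSpace W] (f : Z ≃ₜ W) {z : Z} :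
    Good (f z) ↔ Good z :=
  ⟨fun h => by simpa using h.map f.symm, fun h => h.map f⟩

theorem good_Y {A : Set K} (y : Y A) : Good y ↔ y.1.1 ∉ M A := by
  constructor
  · intro h hM
    let g : unitInterval → Y A := fun r => ⟨(y.1.1, r), Or.inr hM⟩
    have hg : Continuous g := by fun_prop
    have := h (Set.range g) (isPreconnected_range hg) ⟨y.1.2, rfl⟩ ⟨0, rfl⟩ ⟨1, rfl⟩
    have h2 : (0 : unitInterval) = 1 := congrArg (fun z : Y A => z.1.2) this
    exact zero_ne_one h2
  · intro hM S hS hy a ha b hb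
    have hp := (hS.image (fun z : Y A => z.1.1) (by fun_prop)).subsingleton
    have aux : ∀ a ∈ S, a = y := by
      intro a ha
      have e : a.1.1 = y.1.1 := hp ⟨a, ha, rfl⟩ ⟨y, hy, rfl⟩
      have ha0 : a.1.2 = 0 := a.2.resolve_right (by rw [e]; exact hM)
      have hy0 : y.1.2 = 0 := y.2.resolve_right hM
      exact Subtype.ext (Prod.ext e (ha0.trans hy0.symm))
    rw [aux a ha, aux b hb]

variable [OrderBot K]

open Classical in
noncomputable def yrank {A : Set K} (y : Y A) : WithTop K :=
  if y.1.2 = 0 then rank y.1.1 else ((⊥ : K) : WithTop K)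

theorem yrank_iff {A : Set K} (x : Y A) (γ : K) :
    (γ : WithTop K) ≤ yrank x ↔
      ∀ β < γ, AccPt x (𝓟 {y : Y A | Good y ∧ (β : WithTop K) ≤ yrank y}) := by
  constructor
  · intro h β hβ
    have hlt : (β : WithTop K) < yrank x := (WithTop.coe_lt_coe.2 hβ).trans_le h
    by_cases h0 : x.1.2 = 0
    · rw [yrank, if_pos h0] at hlt
      have hlim := child_tendsto x.1.1 β hlt
      let s : ℕ → Y A := fun n => ⟨(child x.1.1 β hlt (n + 1), 0), Or.inl rfl⟩
      have hs : Tendsto s atTop (𝓝 x) := by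
        rw [tendsto_subtype_rng]
        have := hlim.prodMk_nhds (tendsto_const_nhds (x := (0 : unitInterval)))
        have e : x.1 = (x.1.1, 0) := Prod.ext rfl h0
        rw [e]
        exact this
      rw [accPt_iff_frequently]
      refine hs.frequently (Frequently.of_forall fun n => ⟨?_, ?_, ?_⟩)
      · intro e
        have e1 : (β, n + 1) :: x.1.1.1 = x.1.1.1 := congrArg (fun z : Y A => z.1.1.1) e
        simpa using congrArg List.length e1
      · rw [good_Y]
        rintro (e | ⟨α, -, e⟩)
        · have e1 : (β, n + 1) :: x.1.1.1 = [] := congrArg Subtype.val e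
          simp at e1
        · have e1 : (β, n + 1) :: x.1.1.1 = [(α, 0)] := congrArg Subtype.val e
          simp at e1
      · rw [yrank, if_pos rfl]
        exact le_rfl
    · rw [yrank, if_neg h0] at hlt
      exact absurd (WithTop.coe_lt_coe.1 hlt) not_lt_bot
  · intro h
    by_contra hc
    rw [not_le] at hc
    obtain ⟨β, hβ⟩ := WithTop.ne_top_iff_exists.1 (ne_top_of_lt hc)
    have hβγ : β < γ := by rw [← hβ] at hc; exact WithTop.coe_lt_coe.1 hc
    have hacc := h β hβγ
    rw [accPt_iff_frequently] at hacc
    by_cases h0 : x.1.2 = 0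
    · have hU : {y : Y A | below y.1.1 x.1.1} ∈ 𝓝 x :=
        ((isClopen_cone x.1.1).isOpen.preimage
          (continuous_fst.comp continuous_subtype_val)).mem_nhds (below_refl _)
      obtain ⟨y, ⟨hne, hg, hr⟩, hy⟩ := (hacc.and_eventually hU).exists
      rw [good_Y] at hg
      have hy0 : y.1.2 = 0 := y.2.resolve_right hg
      rw [hβ, yrank, yrank, if_pos h0, if_pos hy0] at hr
      have hne' : y.1.1 ≠ x.1.1 := fun e => hne (Subtype.ext (Prod.ext e (hy0.trans h0.symm)))
      exact absurd (rank_lt hy hne') hr.not_gt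
    · have hU : {y : Y A | y.1.2 ≠ 0} ∈ 𝓝 x :=
        (isOpen_ne.preimage
          (continuous_snd.comp continuous_subtype_val)).mem_nhds h0
      obtain ⟨y, ⟨hne, hg, hr⟩, hy⟩ := (hacc.and_eventually hU).exists
      rw [good_Y] at hg
      exact hy (y.2.resolve_right hg)

theorem accPt_map {Z W : Type*} [TopologicalSpace Z] [TopologicalSpace W] (f : Z ≃ₜ W) {z : Z}
    {S : Set Z} {R : Set W} (h : ∀ y ∈ S, f y ∈ R) (hz : AccPt z (𝓟 S)) : AccPt (f z) (𝓟 R) := by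
  rw [accPt_iff_frequently] at hz ⊢
  refine (f.continuous.tendsto z).frequently (hz.mono ?_)
  rintro y ⟨h1, h2⟩
  exact ⟨fun e => h1 (f.injective e), h y h2⟩

theorem yrank_map [WellFoundedLT K] {A B : Set K} (f : Y A ≃ₜ Y B) (γ : K) :
    ∀ x, (γ : WithTop K) ≤ yrank x ↔ (γ : WithTop K) ≤ yrank (f x) := by
  induction γ using WellFoundedLT.induction with
  | ind γ ih =>
    intro x
    rw [yrank_iff, yrank_iff]
    refine forall₂_congr fun β hβ => ⟨fun h => ?_, fun h => ?_⟩
    · refine accPt_map f ?_ h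
      rintro y ⟨h1, h2⟩
      exact ⟨h1.map f, (ih β hβ y).1 h2⟩
    · have := accPt_map f.symm (S := {y : Y B | Good y ∧ (β : WithTop K) ≤ yrank y})
        (R := {y : Y A | Good y ∧ (β : WithTop K) ≤ yrank y}) ?_ h
      · simpa using this
      rintro y ⟨h1, h2⟩
      exact ⟨h1.map f.symm, (ih β hβ _).2 (by simpa using h2)⟩

theorem subset_of_homeo [WellFoundedLT K] [NoMaxOrder K] {A B : Set K} (hA : ⊥ ∉ A) (f : Y A ≃ₜ Y B) :
    A ⊆ B := by
  intro α hα
  let x : Y A := ⟨(node α, 0), Or.inl rfl⟩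
  have hx : ¬ Good x := by
    rw [good_Y]; exact fun h => h (Or.inr ⟨α, hα, rfl⟩)
  have hrx : yrank x = α := by rw [yrank, if_pos rfl]; rfl
  have hfx : ¬ Good (f x) := by rwa [good_iff]
  have hrf : yrank (f x) = α := by
    rw [← hrx]
    apply WithTop.eq_of_forall_coe_le_iff
    intro a
    exact (yrank_map f a x).symm
  rw [good_Y, not_not] at hfx
  by_cases h0 : (f x).1.2 = 0
  · rw [yrank, if_pos h0] at hrf
    rcases hfx with e | ⟨αprime, hprime, e⟩
    · rw [e] at hrf
      exact absurd hrf.symm (WithTop.coe_ne_top)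
    · rw [e] at hrf
      have : αprime = α := WithTop.coe_injective hrf
      rwa [← this]
  · rw [yrank, if_neg h0] at hrf
    have : ⊥ = α := WithTop.coe_injective hrf
    exact absurd (this ▸ hα) hA

theorem mk_T [Infinite K] : #(T K) = #K := by
  apply le_antisymm
  · calc #(T K) ≤ #(List (K × ℕ)) := Cardinal.mk_subtype_le _
      _ = #(K × ℕ) := Cardinal.mk_list_eq_mk _
      _ = #K := by simp [Cardinal.mul_eq_left, Cardinal.aleph0_le_mk]
  · refine Cardinal.mk_le_of_injective (f := node) fun a b h => ?_
    have : [(a, 0)] = [(b, 0)] := congrArg Subtype.val h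
    simpa using this

open Classical in
noncomputable def coneFun (A : Set K) (t : T K) : C(Y A, ℝ) where
  toFun y := if emb y.1.1 t = true then 1 else 0
  continuous_toFun := by
    have h1 : Continuous (fun y : Y A => emb y.1.1 t) :=
      (continuous_apply t).comp (emb_isEmbedding.continuous.comp
        (continuous_fst.comp continuous_subtype_val))
    exact (continuous_of_discreteTopology (f := fun b : Bool => if b = true then (1 : ℝ) else 0)).comp h1

def coordFun (A : Set K) : C(Y A, ℝ) where
  toFun y := y.1.2
  continuous_toFun := by fun_prop

theorem coneFun_iff {A : Set K} (s t : T K) (y z : Y A) :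
    coneFun A s y = coneFun A t z ↔ (below y.1.1 s ↔ below z.1.1 t) := by
  rw [← emb_true, ← emb_true]
  simp only [coneFun, ContinuousMap.coe_mk]
  split_ifs <;> simp [*]

theorem dense_Y [WellFoundedLT K] [Infinite K] (A : Set K) :
    ∃ D : Set C(Y A, ℝ), Dense D ∧ #D = #K := by
  have inj : Function.Injective (coneFun A) := by
    intro s t h
    have key : ∀ r : T K, below r s ↔ below r t := fun r =>
      (coneFun_iff s t ⟨(r, 0), Or.inl rfl⟩ ⟨(r, 0), Or.inl rfl⟩).1 (by rw [h])
    exact below_antisymm ((key s).1 (below_refl _)) ((key t).2 (below_refl _))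
  have hinf : ℵ₀ ≤ #K := Cardinal.aleph0_le_mk K
  have hr : #(Set.range (coneFun A)) = #K := by rw [Cardinal.mk_range_eq _ inj, mk_T]
  apply dense_card (insert (coordFun A) (Set.range (coneFun A))) _ hinf
  · apply le_antisymm
    · refine Cardinal.mk_insert_le.trans ?_
      rw [hr, Cardinal.add_one_eq hinf]
    · rw [← hr]
      exact Cardinal.mk_le_mk_of_subset (Set.subset_insert _ _)
  · intro x y hxy
    by_contra hc
    push Not at hc
    apply hxy
    have h1 := hc _ (Set.mem_insert _ _)
    have h2 : ∀ t, below x.1.1 t ↔ below y.1.1 t := fun t =>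
      (coneFun_iff t t x y).1 (hc _ (Set.mem_insert_of_mem _ ⟨t, rfl⟩))
    refine Subtype.ext (Prod.ext ?_ (Subtype.ext h1))
    exact below_antisymm ((h2 _).2 (below_refl _)) ((h2 _).1 (below_refl _))

end S12

/-- For every infinite cardinal `κ` there exists a family `(X i)_{i ∈ I}` of compact Hausdorff
spaces with `|I| = 2 ^ κ` such that each Banach algebra `C(X i, ℝ)` has a dense subset of
cardinality `κ`, and for distinct `i, j ∈ I` the rings `C(X i, ℝ)` and `C(X j, ℝ)` are not
isomorphic as rings. -/
theorem statement12 (κ : Cardinal.{u}) (hκ : Cardinal.aleph0 ≤ κ) :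
    ∃ (I : Type u) (X : I → CompHaus.{u}),
      #I = 2 ^ κ ∧
      (∀ i, ∃ D : Set C(X i, ℝ), Dense D ∧ #D = κ) ∧
      ∀ i j, i ≠ j → IsEmpty (C(X i, ℝ) ≃+* C(X j, ℝ)) := by
  have hinf : ℵ₀ ≤ #(κ.ord.ToType) := by rw [Cardinal.mk_ord_toType]; exact hκ
  have : NoMaxOrder κ.ord.ToType := Cardinal.noMaxOrder hκ
  have : Infinite κ.ord.ToType := Cardinal.infinite_iff.2 hinf
  have : Infinite (WithBot κ.ord.ToType) := Infinite.of_injective _ WithBot.coe_injective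
  have hK : #(WithBot κ.ord.ToType) = κ := by
    have h : #(Option κ.ord.ToType) = κ := by
      rw [Cardinal.mk_option, Cardinal.mk_ord_toType, Cardinal.add_one_eq hκ]
    exact h
  have hbot : ∀ A : Set κ.ord.ToType,
      (⊥ : WithBot κ.ord.ToType) ∉ ((↑) : κ.ord.ToType → WithBot κ.ord.ToType) '' A := by
    rintro A ⟨a, -, ha⟩
    exact WithBot.coe_ne_bot ha
  refine ⟨Set κ.ord.ToType, fun A => CompHaus.of
    (S12.Y (((↑) : κ.ord.ToType → WithBot κ.ord.ToType) '' A)), ?_, ?_, ?_⟩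
  · rw [Cardinal.mk_set, Cardinal.mk_ord_toType]
  · intro A
    obtain ⟨D, hD, hc⟩ := S12.dense_Y (((↑) : κ.ord.ToType → WithBot κ.ord.ToType) '' A)
    exact ⟨D, hD, hc.trans hK⟩
  · intro A B hne
    refine ⟨fun φ => hne ?_⟩
    obtain ⟨f⟩ := S12.homeo_of_ringEquiv φ
    apply Set.image_injective.2 WithBot.coe_injective
    exact Set.Subset.antisymm (S12.subset_of_homeo (hbot A) f)
      (S12.subset_of_homeo (hbot B) f.symm)
end

section
/- Let X be an infinite compact Hausdorff topological space that is separable and extremally disconnected. Then the Banach space C(X,ℝ) is isomorphic, via a continuous linear bijection with continuous inverse, to the Banach space ℓ∞ of bounded real sequences with the supremum norm. -/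
open Cardinal TopologicalSpace

open BoundedContinuousFunction in
/-- Build an operator into bounded sequences from a uniformly bounded family of operators. -/
noncomputable def mkB {E β : Type*} [NormedAddCommGroup E] [NormedSpace ℝ E]
    [NormedAddCommGroup β] [NormedSpace ℝ β]
    (T : ℕ → (E →L[ℝ] β)) (hT : ∀ n x, ‖T n x‖ ≤ ‖x‖) : E →L[ℝ] (ℕ →ᵇ β) :=
  LinearMap.mkContinuous
    { toFun := fun x => ofNormedAddCommGroupDiscrete (fun n => T n x) ‖x‖ (fun n => hT n x)
      map_add' := fun x y => by ext n; simp
      map_smul' := fun c x => by ext n; simp } 1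
    (fun x => by
      rw [one_mul]
      exact (BoundedContinuousFunction.norm_le (norm_nonneg _)).2 fun n => hT n x)

open BoundedContinuousFunction

theorem mkB_apply {E β : Type*} [NormedAddCommGroup E] [NormedSpace ℝ E]
    [NormedAddCommGroup β] [NormedSpace ℝ β]
    (T : ℕ → (E →L[ℝ] β)) (hT : ∀ n x, ‖T n x‖ ≤ ‖x‖) (x : E) (n : ℕ) :
    mkB T hT x n = T n x := rfl

section Pel

variable {A B : Type*} [NormedAddCommGroup A] [NormedSpace ℝ A]
  [NormedAddCommGroup B] [NormedSpace ℝ B]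

/-- functoriality of bounded sequences -/
noncomputable def linftyCongr (e : A ≃L[ℝ] B) : (ℕ →ᵇ A) ≃L[ℝ] (ℕ →ᵇ B) :=
  ContinuousLinearEquiv.equivOfInverse
    ((e : A →L[ℝ] B).compLeftContinuousBounded ℕ)
    ((e.symm : B →L[ℝ] A).compLeftContinuousBounded ℕ)
    (fun f => by ext n; simp) (fun f => by ext n; simp)

variable (A B) in
/-- bounded sequences in a product -/
noncomputable def linftyProd : (ℕ →ᵇ (A × B)) ≃L[ℝ] (ℕ →ᵇ A) × (ℕ →ᵇ B) :=
  ContinuousLinearEquiv.equivOfInverse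
    (((ContinuousLinearMap.fst ℝ A B).compLeftContinuousBounded ℕ).prod
      ((ContinuousLinearMap.snd ℝ A B).compLeftContinuousBounded ℕ))
    (((ContinuousLinearMap.inl ℝ A B).compLeftContinuousBounded ℕ).coprod
      ((ContinuousLinearMap.inr ℝ A B).compLeftContinuousBounded ℕ))
    (fun f => by ext n <;> simp) (fun f => by ext n <;> simp)

variable (A) in
/-- splitting off the first term -/
noncomputable def linftyCons : (ℕ →ᵇ A) ≃L[ℝ] A × (ℕ →ᵇ A) :=
  ContinuousLinearEquiv.equivOfInverse
    ((evalCLM ℝ 0).prod (mkB (fun n => evalCLM ℝ (n + 1)) (fun n f => f.norm_coe_le_norm _)))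
    (mkB (fun n => Nat.casesOn n (ContinuousLinearMap.fst ℝ A (ℕ →ᵇ A))
        (fun m => (evalCLM ℝ m).comp (ContinuousLinearMap.snd ℝ A (ℕ →ᵇ A))))
      (fun n f => by
        cases n with
        | zero => exact norm_fst_le f
        | succ m => exact (f.2.norm_coe_le_norm m).trans (norm_snd_le f)))
    (fun f => by
      ext n
      cases n <;> rfl)
    (fun f => by
      ext n <;> rfl)

/-- bounded double sequences -/
noncomputable def linftyCurry : (ℕ →ᵇ (ℕ →ᵇ ℝ)) ≃L[ℝ] (ℕ →ᵇ ℝ) :=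
  ContinuousLinearEquiv.equivOfInverse
    (mkB (E := ℕ →ᵇ (ℕ →ᵇ ℝ)) (fun k => (evalCLM ℝ k.unpair.2 : (ℕ →ᵇ ℝ) →L[ℝ] ℝ).comp (evalCLM ℝ k.unpair.1))
      (fun k f => ((f k.unpair.1).norm_coe_le_norm _).trans (f.norm_coe_le_norm _)))
    (mkB (fun n => mkB (fun m => evalCLM ℝ (Nat.pair n m)) (fun m f => f.norm_coe_le_norm _))
      (fun n f => (BoundedContinuousFunction.norm_le (norm_nonneg _)).2
        fun m => f.norm_coe_le_norm _))
    (fun f => by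
      ext n m
      change f (Nat.pair n m).unpair.1 (Nat.pair n m).unpair.2 = f n m
      rw [Nat.unpair_pair])
    (fun f => by
      ext k
      change f (Nat.pair k.unpair.1 k.unpair.2) = f k
      rw [Nat.pair_unpair])

/-- Pelczynski decomposition -/
theorem pelczynski {E F : Type*} [NormedAddCommGroup E] [NormedSpace ℝ E]
    [NormedAddCommGroup F] [NormedSpace ℝ F] (eF : (ℕ →ᵇ F) ≃L[ℝ] F)
    (P : F →L[ℝ] E) (i : E →L[ℝ] F) (hP : ∀ x, P (i x) = x)
    (Q : E →L[ℝ] F) (j : F →L[ℝ] E) (hQ : ∀ x, Q (j x) = x) :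
    Nonempty (E ≃L[ℝ] F) := by
  have e1 : F ≃L[ℝ] E × P.ker := ContinuousLinearEquiv.equivOfRightInverse P i hP
  have e2 : E ≃L[ℝ] F × Q.ker := ContinuousLinearEquiv.equivOfRightInverse Q j hQ
  have e3 : (ℕ →ᵇ F) ≃L[ℝ] (ℕ →ᵇ E) × (ℕ →ᵇ P.ker) :=
    (linftyCongr e1).trans (linftyProd _ _)
  have e4 : F ≃L[ℝ] E × F :=
    eF.symm.trans <| e3.trans <|
      ((linftyCons E).prodCongr (.refl ℝ _)).trans <|
      (ContinuousLinearEquiv.prodAssoc ℝ _ _ _).trans <|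
      (ContinuousLinearEquiv.refl ℝ E).prodCongr (e3.symm.trans eF)
  have e5 : F ≃L[ℝ] F × F :=
    eF.symm.trans <| (linftyCons _).trans <|
      (ContinuousLinearEquiv.refl ℝ _).prodCongr eF
  have e6 : E ≃L[ℝ] F × E :=
    e2.trans <| (e5.prodCongr (.refl ℝ _)).trans <|
      (ContinuousLinearEquiv.prodAssoc ℝ _ _ _).trans <|
      (ContinuousLinearEquiv.refl ℝ _).prodCongr e2.symm
  exact ⟨e6.trans <| (ContinuousLinearEquiv.prodComm ℝ _ _).trans e4.symm⟩

end Pel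

section Top

/-- the Stone-Cech compactification of the naturals, in any universe -/
abbrev BN : Type u := StoneCech (ULift.{u} ℕ)

/-- the unit -/
def bn (n : ℕ) : BN.{u} := stoneCechUnit (ULift.up n)

theorem dense_bn : DenseRange bn.{u} := by
  have := (denseRange_stoneCechUnit (α := ULift.{u} ℕ))
  refine this.mono ?_
  rintro _ ⟨⟨n⟩, rfl⟩
  exact ⟨n, rfl⟩

theorem extend_bn.{v, w} {Y : Type w} [TopologicalSpace Y] [CompactSpace Y] [T2Space Y] (f : ℕ → Y) :
    ∃ g : C(BN.{v}, Y), ∀ n, g (bn n) = f n := by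
  have h : Continuous (fun n : ULift.{v} ℕ => f n.down) := continuous_of_discreteTopology
  exact ⟨⟨stoneCechExtend h, continuous_stoneCechExtend h⟩,
    fun n => stoneCechExtend_stoneCechUnit h _⟩

/-- C of the Stone-Cech compactification is the space of bounded sequences -/
theorem exists_bn_equiv : Nonempty (C(BN.{u}, ℝ) ≃L[ℝ] (ℕ →ᵇ ℝ)) := by
  let T : C(BN.{u}, ℝ) →L[ℝ] (ℕ →ᵇ ℝ) :=
    mkB (fun n => ContinuousMap.evalCLM ℝ (bn n)) (fun n f => f.norm_coe_le_norm _)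
  have hT : ∀ f n, T f n = f (bn n) := fun _ _ => rfl
  refine ⟨ContinuousLinearEquiv.ofBijective T ?_ ?_⟩
  · rw [LinearMap.ker_eq_bot]
    intro f g hfg
    have : (f : BN.{u} → ℝ) = g := dense_bn.equalizer f.continuous g.continuous (by
      ext n
      have := DFunLike.congr_fun hfg n
      exact this)
    exact DFunLike.coe_injective this
  · rw [LinearMap.range_eq_top]
    intro a
    obtain ⟨g, hg⟩ := extend_bn.{u, _} (Y := Set.Icc (-‖a‖) ‖a‖)
      (fun n => ⟨a n, abs_le.1 (a.norm_coe_le_norm n)⟩)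
    refine ⟨⟨fun x => (g x : ℝ), by fun_prop⟩, ?_⟩
    ext n
    change (g (bn n) : ℝ) = a n
    rw [hg]

variable (X : Type u) [TopologicalSpace X] [CompactSpace X] [T2Space X]
    [ExtremallyDisconnected X]

theorem section_one [Nonempty X] [SeparableSpace X] :
    ∃ (q : C(BN.{u}, X)) (s : C(X, BN.{u})), ∀ x, q (s x) = x := by
  obtain ⟨q, hq⟩ := extend_bn.{u, _} (denseSeq X)
  have hs : Function.Surjective q := by
    rw [← Set.range_eq_univ]
    have hd : Dense (Set.range q) := (denseRange_denseSeq X).mono (by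
      rintro _ ⟨n, rfl⟩
      exact ⟨_, hq n⟩)
    rw [← (isCompact_range q.continuous).isClosed.closure_eq]
    exact hd.closure_eq
  obtain ⟨s, hsc, h⟩ := CompactT2.ExtremallyDisconnected.projective (A := X)
    continuous_id q.continuous hs
  exact ⟨q, ⟨s, hsc⟩, fun x => congrFun h x⟩

theorem section_two [Infinite X] :
    ∃ (q : C(X, BN.{u})) (s : C(BN.{u}, X)), ∀ x, q (s x) = x := by
  obtain ⟨U, hUi, hUo, hd⟩ := exists_seq_infinite_isOpen_pairwise_disjoint X
  choose x hx using fun n => (hUi n).nonempty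
  obtain ⟨s, hs⟩ := extend_bn.{u, _} x
  let Z : Set (X × BN.{u}) := {p | ∀ n, p.1 ∈ U n → p.2 = bn n}
  have hZ : IsClosed Z := by
    have : Z = ⋂ n, ((U n) ×ˢ ({bn n}ᶜ : Set BN.{u}))ᶜ := by
      ext p
      simp [Z]
    rw [this]
    exact isClosed_iInter fun n => ((hUo n).prod isOpen_compl_singleton).isClosed_compl
  have : CompactSpace Z := isCompact_iff_compactSpace.1 hZ.isCompact
  have hsur : Function.Surjective (fun p : Z => p.1.1) := by
    intro y
    by_cases hy : ∃ n, y ∈ U n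
    · obtain ⟨n, hn⟩ := hy
      refine ⟨⟨(y, bn n), fun m hm => ?_⟩, rfl⟩
      rw [hd.eq (Set.not_disjoint_iff.2 ⟨y, hn, hm⟩)]
    · exact ⟨⟨(y, bn 0), fun m hm => (hy ⟨m, hm⟩).elim⟩, rfl⟩
  obtain ⟨r, hrc, h⟩ := CompactT2.ExtremallyDisconnected.projective (A := X)
    continuous_id (by fun_prop : Continuous (fun p : Z => p.1.1)) hsur
  have hq : ∀ n, (r (x n)).1.2 = bn n := fun n =>
    (r (x n)).2 n (by
      have : (r (x n)).1.1 = x n := congrFun h (x n)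
      rw [this]
      exact hx n)
  refine ⟨⟨fun y => (r y).1.2, by fun_prop⟩, s, fun y => ?_⟩
  refine congrFun (dense_bn.equalizer (g := fun y => (r (s y)).1.2) (by fun_prop)
    continuous_id ?_) y
  ext n
  simp [hs, hq]

end Top

/-- Let `X` be an infinite compact Hausdorff topological space that is separable and extremally
disconnected. Then the Banach space `C(X, ℝ)` is isomorphic, via a continuous linear bijection
with continuous inverse, to the Banach space `ℓ∞` of bounded real sequences with the supremum
norm. -/
theorem statement16 (X : Type u) [TopologicalSpace X] [CompactSpace X] [T2Space X]
    [Infinite X] [SeparableSpace X] [ExtremallyDisconnected X] :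
    Nonempty (C(X, ℝ) ≃L[ℝ] lp (fun _ : ℕ => ℝ) ⊤) := by
  obtain ⟨e⟩ := exists_bn_equiv.{u}
  obtain ⟨q, s, h⟩ := section_one X
  obtain ⟨q', s', h'⟩ := section_two X
  let c1 : C(X, ℝ) →L[ℝ] C(BN.{u}, ℝ) := ContinuousLinearMap.mk
    { toFun := fun f => f.comp q, map_add' := fun _ _ => rfl, map_smul' := fun _ _ => rfl }
    (ContinuousMap.continuous_precomp q)
  let c2 : C(BN.{u}, ℝ) →L[ℝ] C(X, ℝ) := ContinuousLinearMap.mk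
    { toFun := fun f => f.comp s, map_add' := fun _ _ => rfl, map_smul' := fun _ _ => rfl }
    (ContinuousMap.continuous_precomp s)
  let c3 : C(BN.{u}, ℝ) →L[ℝ] C(X, ℝ) := ContinuousLinearMap.mk
    { toFun := fun f => f.comp q', map_add' := fun _ _ => rfl, map_smul' := fun _ _ => rfl }
    (ContinuousMap.continuous_precomp q')
  let c4 : C(X, ℝ) →L[ℝ] C(BN.{u}, ℝ) := ContinuousLinearMap.mk
    { toFun := fun f => f.comp s', map_add' := fun _ _ => rfl, map_smul' := fun _ _ => rfl }
    (ContinuousMap.continuous_precomp s')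
  have h1 : ∀ f, c2 (c1 f) = f := fun f => by
    ext x
    exact congrArg f (h x)
  have h2 : ∀ f, c4 (c3 f) = f := fun f => by
    ext x
    exact congrArg f (h' x)
  obtain ⟨E⟩ := pelczynski linftyCurry (c2.comp (e.symm : (ℕ →ᵇ ℝ) →L[ℝ] C(BN.{u}, ℝ)))
    ((e : C(BN.{u}, ℝ) →L[ℝ] (ℕ →ᵇ ℝ)).comp c1) (fun f => by simp [h1])
    ((e : C(BN.{u}, ℝ) →L[ℝ] (ℕ →ᵇ ℝ)).comp c4)
    (c3.comp (e.symm : (ℕ →ᵇ ℝ) →L[ℝ] C(BN.{u}, ℝ))) (fun f => by simp [h2])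
  exact ⟨E.trans (lpBCFₗᵢ (α := ℕ) ℝ ℝ).symm.toContinuousLinearEquiv⟩
end
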